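/- Fix ε > 0, let α₁, α₂, … be a sequence of elements of 𝒦, and let γ₁, γ₂, … be a sequence of real numbers. Then there exists a set 𝒢 ⊆ Bad of Hausdorff dimension dim_H(𝒢) = 1 such that for every β ∈ 𝒢, every i ∈ ℕ and every δ ∈ ℝ, the inequality n·‖nα_i − γ_i‖·‖nβ − δ‖ < (log log log n)^{ε + 1/2} / (log n)^{1/2} has infinitely many solutions n ∈ ℕ. -/

import Mathlib

open Filter MeasureTheory Real

/-- Distance from `x` to the nearest integer, `‖x‖ = min {|x - k| : k ∈ ℤ}`. -/
noncomputable def dni (x : ℝ) : ℝ := |x - round x|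

/-- The set of badly approximable numbers. -/
noncomputable def Bad : Set ℝ :=
  {α : ℝ | 0 < Filter.atTop.liminf (fun n : ℕ => (n : ℝ) * dni (n * α))}

/-- The `t`-th continued fraction convergent denominator `q_t(α)` of `α`. -/
noncomputable def qden (α : ℝ) (t : ℕ) : ℝ := (GenContFract.of α).dens t

/-- The set `𝒦` of irrationals whose convergent denominators grow at most exponentially. -/
noncomputable def KSet : Set ℝ :=
  {α : ℝ | Irrational α ∧ ∃ C : ℝ, ∀ t : ℕ, 1 ≤ t → Real.log (qden α t) / t ≤ C}

theorem dni_nonneg (x : ℝ) : 0 ≤ dni x := abs_nonneg _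
theorem dni_le (x : ℝ) (k : ℤ) : dni x ≤ |x - k| := round_le x k
theorem dni_add_le (x y : ℝ) : dni (x + y) ≤ dni x + |y| := by
  calc dni (x + y) ≤ |x + y - round x| := dni_le _ _
    _ = |(x - round x) + y| := by ring_nf
    _ ≤ _ := abs_add_le _ _
theorem dni_neg_le (x : ℝ) : dni (-x) ≤ dni x := by
  calc dni (-x) ≤ |-x - ((-round x : ℤ) : ℝ)| := dni_le _ _
    _ = |-(x - round x)| := by push_cast; ring_nf
    _ = _ := abs_neg _
theorem dni_neg (x : ℝ) : dni (-x) = dni x :=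
  le_antisymm (dni_neg_le x) (by simpa using dni_neg_le (-x))
theorem dni_add_int (x : ℝ) (k : ℤ) : dni (x + k) = dni x := by
  simp [dni]
theorem dni_le_half (x : ℝ) : dni x ≤ 1 / 2 := abs_sub_round x

/-- `x` is badly approximable with constant `c`. -/
def BadC (c x : ℝ) : Prop := ∀ q p : ℤ, 1 ≤ q → c ≤ (q : ℝ) * |(q : ℝ) * x - p|

theorem BadC.irrational {c x : ℝ} (hc : 0 < c) (h : BadC c x) : Irrational x := by
  rintro ⟨r, rfl⟩
  have := h r.den r.num (by exact_mod_cast r.pos)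
  have h2 : ((r.den : ℤ) : ℝ) * ((r : ℚ) : ℝ) - (r.num : ℝ) = 0 := by
    have h3 : (r.den : ℚ) * r = r.num := by rw [mul_comm]; exact Rat.mul_den_eq_num r
    have : ((r.den : ℝ)) * ((r : ℚ) : ℝ) = (r.num : ℝ) := by exact_mod_cast h3
    push_cast; linarith
  rw [h2] at this
  simp at this
  linarith

theorem BadC.mem_Bad {c x : ℝ} (hc : 0 < c) (h : BadC c x) : x ∈ Bad := by
  have hirr := h.irrational hc
  have hco : IsCoboundedUnder (· ≥ ·) atTop (fun n : ℕ => (n : ℝ) * dni (n * x)) := by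
    apply IsCoboundedUnder.of_frequently_le (a := 1)
    rw [Nat.frequently_atTop_iff_infinite]
    have hinf := Real.infinite_rat_abs_sub_lt_one_div_den_sq_of_irrational hirr
    by_contra hfin
    rw [Set.not_infinite] at hfin
    -- for each denominator finitely many rationals
    have hsub : {q : ℚ | |x - q| < 1 / (q.den : ℝ) ^ 2} ⊆
        ⋃ n ∈ {n : ℕ | (n : ℝ) * dni (n * x) ≤ 1}, {q : ℚ | q.den = n ∧ |x - q| < 1} := by
      intro q hq
      simp only [Set.mem_setOf_eq] at hq
      have hd : (0:ℝ) < q.den := by exact_mod_cast q.pos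
      have hd1 : (1:ℝ) ≤ q.den := by exact_mod_cast q.pos
      have hq2 : (q.den : ℝ) * (q:ℝ) = q.num := by
        have h3 : (q.den : ℚ) * q = q.num := by rw [mul_comm]; exact Rat.mul_den_eq_num q
        exact_mod_cast h3
      simp only [Set.mem_iUnion, Set.mem_setOf_eq]
      refine ⟨q.den, ?_, rfl, ?_⟩
      · have h1 := dni_le ((q.den:ℝ) * x) q.num
        have h2 : (q.den:ℝ) * x - q.num = q.den * (x - q) := by rw [← hq2]; ring
        rw [h2, abs_mul, abs_of_pos hd] at h1
        calc (q.den:ℝ) * dni (q.den * x) ≤ q.den * (q.den * |x - q|) := by gcongr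
          _ = (q.den:ℝ)^2 * |x - q| := by ring
          _ ≤ (q.den:ℝ)^2 * (1 / (q.den:ℝ)^2) := by gcongr
          _ = 1 := by field_simp
      · refine lt_of_lt_of_le hq ?_
        rw [div_le_one (by positivity)]
        nlinarith
    apply hinf
    refine Set.Finite.subset (Set.Finite.biUnion hfin ?_) hsub
    intro n _
    -- finitely many numerators
    have : {q : ℚ | q.den = n ∧ |x - q| < 1} ⊆
        (fun k : ℤ => (k : ℚ) / n) '' (Set.Icc ⌊(n:ℝ) * x - n⌋ ⌈(n:ℝ) * x + n⌉) := by
      rintro q ⟨rfl, hq⟩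
      have hd : (0:ℝ) < q.den := by exact_mod_cast q.pos
      have hq2 : (q.den : ℝ) * (q:ℝ) = q.num := by
        have h3 : (q.den : ℚ) * q = q.num := by rw [mul_comm]; exact Rat.mul_den_eq_num q
        exact_mod_cast h3
      rw [abs_lt] at hq
      refine ⟨q.num, ⟨?_, ?_⟩, ?_⟩
      · have : (⌊(q.den:ℝ) * x - q.den⌋ : ℝ) ≤ q.num := by
          refine (Int.floor_le _).trans ?_
          rw [← hq2]; nlinarith
        exact_mod_cast this
      · have : (q.num : ℝ) ≤ (⌈(q.den:ℝ) * x + q.den⌉ : ℝ) := by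
          refine le_trans ?_ (Int.le_ceil _)
          rw [← hq2]; nlinarith
        exact_mod_cast this
      · exact Rat.num_div_den q
    exact ((Set.finite_Icc _ _).image _).subset this
  show 0 < Filter.atTop.liminf (fun n : ℕ => (n : ℝ) * dni (n * x))
  refine lt_of_lt_of_le hc ?_
  apply le_liminf_of_le hco
  filter_upwards [eventually_ge_atTop 1] with n hn
  have := h n (round ((n:ℝ) * x)) (by exact_mod_cast hn)
  simpa [dni] using this


/-- `b`-adic interval. -/
def IV (b m : ℕ) (i : ℤ) : Set ℝ := Set.Icc ((i:ℝ) / (b:ℝ)^m) (((i:ℝ)+1) / (b:ℝ)^m)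

/-- good interval -/
def Gd (b : ℕ) (κ c K0 : ℝ) (m : ℕ) (i : ℤ) : Prop :=
  ∀ y ∈ IV b m i, ∀ q p : ℤ, 1 ≤ q → K0 ≤ (q:ℝ)^2 → (q:ℝ)^2 < κ * (b:ℝ)^m →
    c ≤ (q:ℝ) * |(q:ℝ) * y - p|

theorem IV_dist {b m : ℕ} {i : ℤ} {x y : ℝ} (hx : x ∈ IV b m i) (hy : y ∈ IV b m i) :
    |x - y| ≤ 1 / (b:ℝ)^m := by
  obtain ⟨h1, h2⟩ := hx
  obtain ⟨h3, h4⟩ := hy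
  have : ((i:ℝ)+1) / (b:ℝ)^m = (i:ℝ) / (b:ℝ)^m + 1 / (b:ℝ)^m := by ring
  rw [abs_le]; constructor <;> linarith

theorem tworat {κ c b β : ℝ} (hb : 0 < b) (hβ : 0 < β) (hκ : 0 < κ) (hκb : κ ≤ 1 / (2 * b))
    (hc : 0 < c) (hcκ : c ≤ κ / (8 * b)) {y y0 : ℝ} {q p q0 p0 : ℤ} (hq : 1 ≤ q) (hq0 : 1 ≤ q0)
    (h1 : κ * β ≤ (q:ℝ)^2) (h2 : (q:ℝ)^2 < κ * (β * b))
    (h1' : κ * β ≤ (q0:ℝ)^2) (h2' : (q0:ℝ)^2 < κ * (β * b))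
    (hbad : (q:ℝ) * |(q:ℝ) * y - p| < c) (hbad0 : (q0:ℝ) * |(q0:ℝ) * y0 - p0| < c)
    (hb1 : 1 ≤ b)
    (hd1 : |y - y0| ≤ 1 / β) (hd2 : 1 / (β * b) ≤ |y - y0|) : False := by
  have hqr : (1:ℝ) ≤ q := by exact_mod_cast hq
  have hq0r : (1:ℝ) ≤ q0 := by exact_mod_cast hq0
  have hcκ' : c * (8 * b) ≤ κ := by rwa [le_div_iff₀ (by positivity)] at hcκ
  have hκb' : κ * (2 * b) ≤ 1 := by rwa [le_div_iff₀ (by positivity)] at hκb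
  -- |y - p/q| ≤ 1/(8 b β)
  have key : ∀ (q : ℝ) (A : ℝ), 1 ≤ q → κ * β ≤ q^2 → q * |A| < c → |A| / q ≤ 1 / (8 * b * β) := by
    intro q A hq h1 h
    rw [div_le_div_iff₀ (by positivity) (by positivity)]
    have : |A| * (8 * b * β) * q ≤ q * q := by
      calc |A| * (8 * b * β) * q = (q * |A|) * (8 * b * β) := by ring
        _ ≤ c * (8 * b * β) := by gcongr
        _ = (c * (8 * b)) * β := by ring
        _ ≤ κ * β := by gcongr
        _ ≤ q * q := by nlinarith
    have := le_of_mul_le_mul_right this (by linarith)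
    linarith
  have k1 := key q _ hqr h1 hbad
  have k2 := key q0 _ hq0r h1' hbad0
  have hident : ((p * q0 - p0 * q : ℤ) : ℝ) / (q * q0) =
      (y - y0) - (q * y - p) / q + (q0 * y0 - p0) / q0 := by
    push_cast; field_simp; ring
  have a1 : |((q:ℝ) * y - p) / q| ≤ 1 / (8 * b * β) := by
    rw [abs_div, abs_of_pos (by linarith : (0:ℝ) < q)]; exact k1
  have a2 : |((q0:ℝ) * y0 - p0) / q0| ≤ 1 / (8 * b * β) := by
    rw [abs_div, abs_of_pos (by linarith : (0:ℝ) < q0)]; exact k2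
  have e1 : 1 / (8 * b * β) = (1 / (β * b)) / 8 := by field_simp
  have e2 : 0 < 1 / (β * b) := by positivity
  have e3 : 1 / (β * b) ≤ 1 / β := by
    apply one_div_le_one_div_of_le hβ; nlinarith
  rw [e1] at a1 a2
  by_cases h0 : p * q0 - p0 * q = 0
  · rw [h0] at hident
    simp only [Int.cast_zero, zero_div] at hident
    have : y - y0 = (q * y - p) / q - (q0 * y0 - p0) / q0 := by linarith
    rw [this] at hd2
    have := abs_sub ((q * y - p) / q) ((q0 * y0 - p0) / q0)
    linarith
  · have h1 : (1:ℝ) ≤ |((p * q0 - p0 * q : ℤ) : ℝ)| := by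
      exact_mod_cast Int.one_le_abs h0
    have hqq : (q:ℝ) * q0 < β / 2 := by
      nlinarith [sq_nonneg ((q:ℝ) - q0)]
    have hpos : (0:ℝ) < q * q0 := by positivity
    have : 2 / β < |((p * q0 - p0 * q : ℤ) : ℝ) / (q * q0)| := by
      rw [abs_div, abs_of_pos hpos, div_lt_div_iff₀ hβ hpos]
      nlinarith
    rw [hident] at this
    have t1 := abs_add_le ((y - y0) - (q * y - p) / q) ((q0 * y0 - p0) / q0)
    have t2 := abs_sub (y - y0) ((q * y - p) / q)
    have : 2 / β = 1 / β + 1 / β := by ring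
    linarith

theorem child_exists (B b : ℕ) (hb : b = 2 * B + 3) {κ c K0 : ℝ} (hκ : 0 < κ)
    (hκb : κ ≤ 1 / (2 * b)) (hc : 0 < c) (hcκ : c ≤ κ / (8 * b)) (m : ℕ) (i : ℤ)
    (hG : Gd b κ c K0 m i) :
    ∃ ch : ℕ → ℤ, (∀ d < B, Gd b κ c K0 (m+1) (ch d) ∧
      (∀ x ∈ IV b (m+1) (ch d), (i:ℝ) / (b:ℝ)^m + 1 / (b:ℝ)^(m+1) ≤ x ∧
        x ≤ ((i:ℝ)+1) / (b:ℝ)^m - 1 / (b:ℝ)^(m+1))) ∧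
      (∀ d < B, ∀ d' < B, d ≠ d' → ∀ x ∈ IV b (m+1) (ch d), ∀ y ∈ IV b (m+1) (ch d'),
        1 / (b:ℝ)^(m+1) ≤ |x - y|) := by
  have hbr : (b:ℝ) = 2 * B + 3 := by rw [hb]; push_cast; ring
  have hBn : (0:ℝ) ≤ B := by positivity
  have hb0 : (0:ℝ) < b := by rw [hbr]; positivity
  have hβ : (0:ℝ) < (b:ℝ)^m := by positivity
  have hβ1 : (0:ℝ) < (b:ℝ)^(m+1) := by positivity
  have hps : (b:ℝ)^(m+1) = (b:ℝ)^m * b := pow_succ _ _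
  -- offsets
  let cc : ℕ → ℤ := fun t => b * i + 2 * t + 1
  have hsep : ∀ t t' : ℕ, t ≠ t' → ∀ x ∈ IV b (m+1) (cc t), ∀ y ∈ IV b (m+1) (cc t'),
      1 / (b:ℝ)^(m+1) ≤ |x - y| := by
    have aux : ∀ t t' : ℕ, t < t' → ∀ x ∈ IV b (m+1) (cc t), ∀ y ∈ IV b (m+1) (cc t'),
      1 / (b:ℝ)^(m+1) ≤ |x - y| := by
      rintro t t' htt x ⟨_, hx⟩ y ⟨hy, _⟩
      have : (t:ℝ) + 1 ≤ t' := by exact_mod_cast htt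
      rw [abs_sub_comm]
      refine le_trans ?_ (le_abs_self _)
      rw [le_div_iff₀ hβ1] at hx
      rw [div_le_iff₀ hβ1] at hy
      rw [div_le_iff₀ hβ1]
      simp only [cc] at hx hy
      push_cast at hx hy
      linarith
    intro t t' h x hx y hy
    rcases lt_or_gt_of_ne h with h | h
    · exact aux t t' h x hx y hy
    · rw [abs_sub_comm]; exact aux t' t h y hy x hx
  have hin : ∀ t : ℕ, t ≤ B → ∀ x ∈ IV b (m+1) (cc t), (i:ℝ) / (b:ℝ)^m + 1 / (b:ℝ)^(m+1) ≤ x ∧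
        x ≤ ((i:ℝ)+1) / (b:ℝ)^m - 1 / (b:ℝ)^(m+1) := by
    rintro t ht x ⟨h1, h2⟩
    have htr : (t:ℝ) ≤ B := by exact_mod_cast ht
    have htn : (0:ℝ) ≤ t := by positivity
    simp only [cc] at h1 h2
    push_cast at h1 h2
    have e1 : (i:ℝ) / (b:ℝ)^m = (b * i) / (b:ℝ)^(m+1) := by rw [hps]; field_simp
    have e2 : ((i:ℝ)+1) / (b:ℝ)^m = (b * i + b) / (b:ℝ)^(m+1) := by rw [hps]; field_simp
    rw [e1, e2, ← add_div, ← sub_div]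
    constructor
    · refine le_trans ?_ h1
      gcongr; linarith
    · refine h2.trans ?_
      gcongr; linarith
  have hsub : ∀ t : ℕ, t ≤ B → ∀ x ∈ IV b (m+1) (cc t), x ∈ IV b m i := by
    intro t ht x hx
    have h := hin t ht x hx
    have : 0 < 1 / (b:ℝ)^(m+1) := by positivity
    exact ⟨by linarith, by linarith⟩
  have hstep : ∃ e : ℕ, ∀ t ≤ B, t ≠ e → ∀ y ∈ IV b (m+1) (cc t), ∀ q p : ℤ, 1 ≤ q →
      κ * (b:ℝ)^m ≤ (q:ℝ)^2 → (q:ℝ)^2 < κ * (b:ℝ)^(m+1) → c ≤ (q:ℝ) * |(q:ℝ) * y - p| := by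
    by_contra hcon
    push Not at hcon
    obtain ⟨t0, ht0, -, y0, hy0, q0, p0, hq0, h10, h20, hb0'⟩ := hcon 0
    obtain ⟨t, ht, hne, y, hy, q, p, hq, h1, h2, hb'⟩ := hcon t0
    rw [hps] at h2 h20
    refine tworat hb0 hβ hκ hκb hc hcκ hq hq0 h1 h2 h10 h20 hb' hb0' (by linarith)
      (IV_dist (hsub t ht y hy) (hsub t0 ht0 y0 hy0)) ?_
    rw [← hps]
    exact hsep t t0 hne y hy y0 hy0
  obtain ⟨e, he⟩ := hstep
  refine ⟨fun d => cc (if d < e then d else d + 1), ?_, ?_⟩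
  · intro d hd
    have ht : (if d < e then d else d + 1) ≤ B := by split_ifs <;> omega
    have hne : (if d < e then d else d + 1) ≠ e := by split_ifs <;> omega
    refine ⟨?_, hin _ ht⟩
    intro y hy q p hq hK hlt
    by_cases h : (q:ℝ)^2 < κ * (b:ℝ)^m
    · exact hG y (hsub _ ht y hy) q p hq hK h
    · exact he _ ht hne y hy q p hq (not_lt.mp h) hlt
  · intro d hd d' hd' hne
    apply hsep
    split_ifs <;> omega

theorem tree (B b : ℕ) (hb : 2 ≤ b) (G : ℕ → ℤ → Prop) (m0 : ℕ) (i0 : ℤ) (hG0 : G m0 i0)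
    (h : ℕ → ℕ) (Φ : ℕ → ℝ → Prop)
    (hchild : ∀ m i, G m i → ∃ ch : ℕ → ℤ, (∀ d < B, G (m+1) (ch d) ∧
      (∀ x ∈ IV b (m+1) (ch d), (i:ℝ) / (b:ℝ)^m + 1 / (b:ℝ)^(m+1) ≤ x ∧
        x ≤ ((i:ℝ)+1) / (b:ℝ)^m - 1 / (b:ℝ)^(m+1))) ∧
      (∀ d < B, ∀ d' < B, d ≠ d' → ∀ x ∈ IV b (m+1) (ch d), ∀ y ∈ IV b (m+1) (ch d'),
        1 / (b:ℝ)^(m+1) ≤ |x - y|))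
    (hjump : ∀ m i, G m i → ∃ i', G (m + h m) i' ∧ IV b (m + h m) i' ⊆ IV b m i ∧
      ∀ x ∈ IV b (m + h m) i', Φ m x)
    (L : ℕ → ℕ) (hL0 : L 0 = m0) (hL : ∀ r, L (r+1) = L r + 1 + h (L r + 1)) :
    ∃ x : (ℕ → Fin B) → ℝ, (∀ d, (∀ r, ∃ i, G (L r) i ∧ x d ∈ IV b (L r) i) ∧
      ((i0:ℝ) / (b:ℝ)^m0 + 1 / (b:ℝ)^(m0+1) ≤ x d ∧
        x d ≤ ((i0:ℝ)+1) / (b:ℝ)^m0 - 1 / (b:ℝ)^(m0+1)) ∧ ∀ r, Φ (L r + 1) (x d)) ∧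
      ∀ d d' r, (∀ k < r, d k = d' k) → |x d - x d'| ≤ 1 / (b:ℝ)^(L r) ∧
        (d r ≠ d' r → 1 / (b:ℝ)^(L r + 1) ≤ |x d - x d'|) := by
  have hb0 : (0:ℝ) < b := by positivity
  have hchild' : ∀ m i, ∃ ch : ℕ → ℤ, G m i → (∀ d < B, G (m+1) (ch d) ∧
      (∀ x ∈ IV b (m+1) (ch d), (i:ℝ) / (b:ℝ)^m + 1 / (b:ℝ)^(m+1) ≤ x ∧
        x ≤ ((i:ℝ)+1) / (b:ℝ)^m - 1 / (b:ℝ)^(m+1))) ∧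
      (∀ d < B, ∀ d' < B, d ≠ d' → ∀ x ∈ IV b (m+1) (ch d), ∀ y ∈ IV b (m+1) (ch d'),
        1 / (b:ℝ)^(m+1) ≤ |x - y|) := by
    intro m i
    by_cases hg : G m i
    · obtain ⟨ch, hch⟩ := hchild m i hg
      exact ⟨ch, fun _ => hch⟩
    · exact ⟨fun _ => 0, fun hg' => absurd hg' hg⟩
  have hjump' : ∀ m i, ∃ i', G m i → G (m + h m) i' ∧ IV b (m + h m) i' ⊆ IV b m i ∧
      ∀ x ∈ IV b (m + h m) i', Φ m x := by
    intro m i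
    by_cases hg : G m i
    · obtain ⟨ch, hch⟩ := hjump m i hg
      exact ⟨ch, fun _ => hch⟩
    · exact ⟨0, fun hg' => absurd hg' hg⟩
  choose ch hch using hchild'
  choose j hj using hjump'
  obtain ⟨st, st0, sts⟩ : ∃ st : (ℕ → Fin B) → ℕ → ℤ, (∀ d, st d 0 = i0) ∧
      ∀ d r, st d (r+1) = j (L r + 1) (ch (L r) (st d r) (d r)) :=
    ⟨fun d r => Nat.rec i0 (fun r i => j (L r + 1) (ch (L r) i (d r))) r,
      fun d => rfl, fun d r => rfl⟩
  have hgood : ∀ d r, G (L r) (st d r) := by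
    intro d r
    induction r with
    | zero => rw [st0, hL0]; exact hG0
    | succ r ih =>
      have h1 := ((hch _ _ ih).1 (d r) (d r).2).1
      have h2 := (hj _ _ h1).1
      rw [hL, sts]; exact h2
  have hmid : ∀ d r, IV b (L (r+1)) (st d (r+1)) ⊆ IV b (L r + 1) (ch (L r) (st d r) (d r)) ∧
      ∀ x ∈ IV b (L (r+1)) (st d (r+1)), Φ (L r + 1) x := by
    intro d r
    have h1 := ((hch _ _ (hgood d r)).1 (d r) (d r).2).1
    have h2 := (hj _ _ h1).2
    rw [hL, sts]; exact h2
  have hnest : ∀ d r, IV b (L (r+1)) (st d (r+1)) ⊆ IV b (L r) (st d r) := by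
    intro d r x hx
    have h1 := ((hch _ _ (hgood d r)).1 (d r) (d r).2).2 x ((hmid d r).1 hx)
    have : 0 < 1 / (b:ℝ)^(L r + 1) := by positivity
    exact ⟨by linarith, by linarith⟩
  have hex : ∀ d, ∃ x, ∀ r, x ∈ IV b (L r) (st d r) := by
    intro d
    have hanti : Antitone (fun r : ℕ => IV b (L r) (st d r)) :=
      antitone_nat_of_succ_le (fun r => hnest d r)
    have := ciSup_mem_iInter_Icc_of_antitone_Icc
      (f := fun r => ((st d r : ℤ) : ℝ) / (b:ℝ)^(L r))
      (g := fun r => (((st d r : ℤ) : ℝ) + 1) / (b:ℝ)^(L r)) hanti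
      (fun r => div_le_div_of_nonneg_right (by linarith) (by positivity))
    exact ⟨_, fun r => Set.mem_iInter.mp this r⟩
  choose x hx using hex
  refine ⟨x, fun d => ⟨fun r => ⟨_, hgood d r, hx d r⟩, ?_, fun r => (hmid d r).2 _ (hx d (r+1))⟩, ?_⟩
  · have := ((hch _ _ (hgood d 0)).1 (d 0) (d 0).2).2 _ ((hmid d 0).1 (hx d 1))
    rw [st0, hL0] at this
    exact this
  · intro d d' r hk
    have hst : ∀ r, (∀ k < r, d k = d' k) → st d r = st d' r := by
      intro r
      induction r with
      | zero => intro _; rw [st0, st0]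
      | succ r ih =>
        intro hk
        rw [sts, sts, ih (fun k hk' => hk k (by omega)), hk r (by omega)]
    have hs := hst r hk
    constructor
    · have h1 := hx d r
      rw [hs] at h1
      exact IV_dist h1 (hx d' r)
    · intro hne
      have h1 := (hmid d r).1 (hx d (r+1))
      have h2 := (hmid d' r).1 (hx d' (r+1))
      rw [hs] at h1
      refine (hch _ _ (hgood d' r)).2 (d r) (d r).2 (d' r) (d' r).2 ?_ _ h1 _ h2
      intro h; exact hne (Fin.ext h)


theorem Gd_limit {b : ℕ} (hb : 2 ≤ b) {κ c K0 x : ℝ} (hκ : 0 < κ) (L : ℕ → ℕ) (hL : ∀ r, r ≤ L r)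
    (hx : ∀ r, ∃ i, Gd b κ c K0 (L r) i ∧ x ∈ IV b (L r) i) (q p : ℤ) (hq : 1 ≤ q)
    (hK : K0 ≤ (q:ℝ)^2) : c ≤ (q:ℝ) * |(q:ℝ) * x - p| := by
  have hb1 : (1:ℝ) < b := by exact_mod_cast (by omega : 1 < b)
  obtain ⟨r, hr⟩ := pow_unbounded_of_one_lt ((q:ℝ)^2 / κ) hb1
  obtain ⟨i, hi, hxi⟩ := hx r
  refine hi x hxi q p hq hK ?_
  rw [div_lt_iff₀ hκ] at hr
  calc (q:ℝ)^2 < (b:ℝ)^r * κ := hr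
    _ ≤ (b:ℝ)^(L r) * κ := by gcongr; exacts [hb1.le, hL r]
    _ = _ := mul_comm _ _

theorem tree0 (B b : ℕ) (hb : b = 2 * B + 3) {κ c K0 : ℝ} (hκ : 0 < κ)
    (hκb : κ ≤ 1 / (2 * b)) (hc : 0 < c) (hcκ : c ≤ κ / (8 * b)) (m : ℕ) (i : ℤ)
    (hG : Gd b κ c K0 m i) :
    ∃ x : (ℕ → Fin B) → ℝ, (∀ d, (∀ q p : ℤ, 1 ≤ q → K0 ≤ (q:ℝ)^2 →
        c ≤ (q:ℝ) * |(q:ℝ) * x d - p|) ∧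
      ((i:ℝ) / (b:ℝ)^m + 1 / (b:ℝ)^(m+1) ≤ x d ∧
        x d ≤ ((i:ℝ)+1) / (b:ℝ)^m - 1 / (b:ℝ)^(m+1))) ∧
      ∀ d d' r, (∀ k < r, d k = d' k) → |x d - x d'| ≤ 1 / (b:ℝ)^(m + r) ∧
        (d r ≠ d' r → 1 / (b:ℝ)^(m + r + 1) ≤ |x d - x d'|) := by
  obtain ⟨x, h1, h2⟩ := tree B b (by omega) (Gd b κ c K0) m i hG (fun _ => 0) (fun _ _ => True)
    (fun m i hg => child_exists B b hb hκ hκb hc hcκ m i hg)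
    (fun m i hg => ⟨i, hg, subset_rfl, fun _ _ => trivial⟩) (fun r => m + r) rfl (fun r => rfl)
  refine ⟨x, fun d => ⟨fun q p hq hK => ?_, (h1 d).2.1⟩, h2⟩
  exact Gd_limit (by omega) hκ (fun r => m + r) (fun r => by omega) (h1 d).1 q p hq hK

theorem Gd_start (b : ℕ) (κ c K0 : ℝ) (m : ℕ) (i : ℤ) (h : κ * (b:ℝ)^m ≤ K0) :
    Gd b κ c K0 m i := by
  intro y hy q p hq hK hlt
  linarith

theorem BadC.add_int {c x : ℝ} (h : BadC c x) (k : ℤ) : BadC c (x + k) := by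
  intro q p hq
  have := h q (p - q * k) hq
  push_cast at this
  convert this using 3
  ring

theorem BadC.mono {c c' x : ℝ} (h : BadC c x) (hc : c' ≤ c) : BadC c' x :=
  fun q p hq => hc.trans (h q p hq)

theorem BadC.abs_ge {c x : ℝ} (h : BadC c x) (q p : ℤ) (hq : q ≠ 0) :
    c ≤ |(q:ℝ)| * |(q:ℝ) * x - p| := by
  rcases lt_or_gt_of_ne hq with h1 | h1
  · have := h (-q) (-p) (by omega)
    push_cast at this
    rw [abs_of_neg (by exact_mod_cast h1)]
    have e : -(q:ℝ) * x - -(p:ℝ) = -((q:ℝ) * x - p) := by ring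
    rwa [e, abs_neg] at this
  · have := h q p (by omega)
    rwa [abs_of_pos (by exact_mod_cast h1)]

theorem clusters : ∃ c0 : ℝ, 0 < c0 ∧ c0 ≤ 1 / 8 ∧ ∀ h0 h1 : ℕ,
    ∃ w : (Fin h1 → Fin 19683) → ℝ, (∀ u, 1 ≤ w u ∧ w u ≤ 2 ∧ BadC c0 (w u)) ∧
      ∀ u u', |w u - w u'| ≤ 1 / (39369:ℝ)^h0 ∧
        (u ≠ u' → 1 / (39369:ℝ)^(h0 + h1) ≤ |w u - w u'|) := by
  set κ : ℝ := 1 / (2 * (39369:ℕ)) with hκ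
  have hκ0 : 0 < κ := by rw [hκ]; norm_num
  set c : ℝ := κ / (8 * (39369:ℕ)) with hc
  have hc0 : 0 < c := by rw [hc]; positivity
  refine ⟨c, hc0, by rw [hc, hκ]; norm_num, ?_⟩
  intro h0 h1
  obtain ⟨x, hx1, hx2⟩ := tree0 19683 39369 (by norm_num) (κ := κ) (c := c) (K0 := κ) hκ0
    le_rfl hc0 le_rfl 0 0 (Gd_start _ _ _ _ _ _ (by simp))
  let D : (Fin h1 → Fin 19683) → ℕ → Fin 19683 := fun u k =>
    if hk : h0 ≤ k ∧ k < h0 + h1 then u ⟨k - h0, by omega⟩ else 0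
  refine ⟨fun u => x (D u) + 1, ?_, ?_⟩
  · intro u
    obtain ⟨h2, h3, h4⟩ := hx1 (D u)
    norm_num at h3 h4
    refine ⟨by linarith, by linarith, ?_⟩
    have hb : BadC c (x (D u)) := by
      intro q p hq
      refine h2 q p hq ?_
      have : (1:ℝ) ≤ q := by exact_mod_cast hq
      have h1 : κ ≤ 1 := by rw [hκ]; norm_num
      nlinarith
    exact_mod_cast hb.add_int 1
  · intro u u'
    have e : x (D u) + 1 - (x (D u') + 1) = x (D u) - x (D u') := by ring
    rw [e]
    constructor
    · have := (hx2 (D u) (D u') h0 ?_).1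
      · simpa using this
      · intro k hk
        simp only [D]
        rw [dif_neg (by omega), dif_neg (by omega)]
    · intro hne
      have hex : ∃ k, D u k ≠ D u' k := by
        by_contra hcon
        push Not at hcon
        apply hne
        funext i
        have := hcon (h0 + i)
        simp only [D] at this
        rw [dif_pos (by omega), dif_pos (by omega)] at this
        simpa using this
      classical
      have hr := Nat.find_spec hex
      have hlt : ∀ k < Nat.find hex, D u k = D u' k := fun k hk => by
        simpa using Nat.find_min hex hk
      have hrr : Nat.find hex < h0 + h1 := by
        by_contra hge
        apply hr
        simp only [D]
        rw [dif_neg (by omega), dif_neg (by omega)]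
      refine le_trans ?_ ((hx2 _ _ _ hlt).2 hr)
      push_cast
      apply one_div_le_one_div_of_le (by positivity)
      exact pow_le_pow_right₀ (by norm_num) (by omega)


theorem dim_lower (B b : ℕ) (hB : 2 ≤ B) (hb : 2 ≤ b) (x : (ℕ → Fin B) → ℝ) (L : ℕ → ℕ)
    (hx : ∀ d d' r, (∀ k < r, d k = d' k) → d r ≠ d' r → 1 / (b:ℝ)^(L r + 1) ≤ |x d - x d'|)
    (s : NNReal) (s1 : ℝ) (hs : 0 < s) (hs1 : (b:ℝ)^s1 ≤ B) (hL : ∀ r, (s:ℝ) * L r ≤ s1 * r) :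
    (s : ENNReal) ≤ dimH (Set.range x) := by
  classical
  have hb0 : (0:ℝ) < b := by positivity
  have hb1 : (1:ℝ) ≤ b := by exact_mod_cast (by omega : 1 ≤ b)
  have hB0 : (0:ℝ) < B := by positivity
  have hs0 : (0:ℝ) < s := by exact_mod_cast hs
  have key : ∀ d d', |ofDigits d - ofDigits d'| ≤ (b:ℝ)^(s:ℝ) * |x d - x d'|^(s:ℝ) := by
    intro d d'
    by_cases h : d = d'
    · subst h; simp; positivity
    · have hex : ∃ k, d k ≠ d' k := by
        by_contra hcon; push Not at hcon; exact h (funext hcon)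
      have hr := Nat.find_spec hex
      have hlt : ∀ k < Nat.find hex, d k = d' k := fun k hk => by
        simpa using Nat.find_min hex hk
      set r := Nat.find hex
      have h1 := hx d d' r hlt hr
      refine (abs_ofDigits_sub_ofDigits_le hlt).trans ?_
      have h2 : (b:ℝ)^(s:ℝ) * (1 / (b:ℝ)^(L r + 1))^(s:ℝ) ≤ (b:ℝ)^(s:ℝ) * |x d - x d'|^(s:ℝ) := by
        gcongr
      refine le_trans ?_ h2
      have h3 : (b:ℝ)^(s:ℝ) * (1 / (b:ℝ)^(L r + 1))^(s:ℝ) = ((b:ℝ)^((s:ℝ) * L r))⁻¹ := by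
        rw [← Real.mul_rpow hb0.le (by positivity)]
        have : (b:ℝ) * (1 / (b:ℝ)^(L r + 1)) = ((b:ℝ)^(L r))⁻¹ := by
          rw [pow_succ]; field_simp
        rw [this, Real.inv_rpow (by positivity), ← Real.rpow_natCast, ← Real.rpow_mul hb0.le,
          mul_comm]
      rw [h3]
      apply inv_anti₀ (by positivity)
      calc (b:ℝ)^((s:ℝ) * L r) ≤ (b:ℝ)^(s1 * r) := Real.rpow_le_rpow_of_exponent_le hb1 (hL r)
        _ = ((b:ℝ)^s1)^r := by rw [Real.rpow_mul hb0.le, Real.rpow_natCast]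
        _ ≤ (B:ℝ)^r := by gcongr
  let f : ℝ → ℝ := fun y => if h : ∃ d, x d = y then ofDigits (Classical.choose h) else 0
  have hinj : Function.Injective x := by
    intro d d' hdd
    by_contra h
    have hex : ∃ k, d k ≠ d' k := by
      by_contra hcon; push Not at hcon; exact h (funext hcon)
    have hr := Nat.find_spec hex
    have hlt : ∀ k < Nat.find hex, d k = d' k := fun k hk => by
      simpa using Nat.find_min hex hk
    have := hx d d' _ hlt hr
    rw [hdd, sub_self, abs_zero] at this
    have h2 : (0:ℝ) < 1 / (b:ℝ) ^ (L (Nat.find hex) + 1) := by positivity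
    linarith
  have hf : ∀ d, f (x d) = ofDigits d := by
    intro d
    have h : ∃ d', x d' = x d := ⟨d, rfl⟩
    simp only [f]
    rw [dif_pos h, hinj (Classical.choose_spec h)]
  have hold : HolderOnWith ((b:NNReal)^(s:ℝ)) s f (Set.range x) := by
    rintro _ ⟨d, rfl⟩ _ ⟨d', rfl⟩
    rw [hf, hf, edist_dist, edist_dist, Real.dist_eq, Real.dist_eq,
      ENNReal.ofReal_rpow_of_nonneg (abs_nonneg _) hs0.le]
    have : (((b:NNReal)^(s:ℝ) : NNReal) : ENNReal) = ENNReal.ofReal ((b:ℝ)^(s:ℝ)) := by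
      rw [ENNReal.ofReal, Real.toNNReal_rpow_of_nonneg hb0.le]; simp
    rw [this, ← ENNReal.ofReal_mul (by positivity)]
    exact ENNReal.ofReal_le_ofReal (key d d')
  have h1 := hold.dimH_image_le hs
  have h2 : Set.Icc (0:ℝ) 1 ⊆ f '' Set.range x := by
    intro y hy
    obtain ⟨d, -, hd⟩ := ofDigits_SurjOn (b := B) (by omega) hy
    exact ⟨x d, ⟨d, rfl⟩, by rw [hf, hd]⟩
  have h3 : dimH (Set.Icc (0:ℝ) 1) = 1 := by
    rw [Real.dimH_of_nonempty_interior]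
    · simp
    · rw [interior_Icc]; exact ⟨1/2, by norm_num, by norm_num⟩
  have h4 := (h3 ▸ dimH_mono h2).trans h1
  rw [ENNReal.le_div_iff_mul_le (Or.inl (by exact_mod_cast hs.ne')) (Or.inl ENNReal.coe_ne_top)] at h4
  simpa using h4


theorem bezout_mat (a c : ℤ) (hc : 1 ≤ c) (hco : IsCoprime a c) :
    ∃ b d : ℤ, a * d - b * c = 1 ∧ 1 ≤ d ∧ d ≤ c := by
  obtain ⟨u, v, h⟩ := hco
  -- u * a + v * c = 1
  refine ⟨-v - a * ((u - 1) / c), (u - 1) % c + 1, ?_, ?_, ?_⟩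
  · have := Int.mul_ediv_add_emod (u - 1) c
    have e : (u - 1) % c = u - 1 - c * ((u-1) / c) := by linarith
    rw [e]; linear_combination h
  · have := Int.emod_nonneg (u - 1) (by omega : c ≠ 0); omega
  · have := Int.emod_lt_of_pos (u - 1) (by omega : 0 < c); omega

/-- good matrices -/
structure GM (c0 V y : ℝ) (a b c d : ℤ) : Prop where
  det : a * d - b * c = 1
  hcl : c0 * V ≤ c
  hcu : (c:ℝ) ≤ V
  hd1 : 1 ≤ d
  hdc : d ≤ c
  hdl : c0 * c / 2 ≤ d
  h1 : |(c:ℝ) * y - a| ≤ 1 / V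
  h2 : |(d:ℝ) * y - b| ≤ 2 / c
  hac : c ≤ a
  hbd : d ≤ b
  hab : b ≤ a
  ha3 : a ≤ 3 * c
  hb4 : b ≤ 4 * d

theorem GM_exists {c0 V y : ℝ} (hc0 : 0 < c0) (hV : 2 ≤ V) (hV0 : 1 < c0 * V) (hy1 : 1 ≤ y) (hy2 : y ≤ 2)
    (hy : BadC c0 y) : ∃ a b c d : ℤ, GM c0 V y a b c d := by
  have hn : 0 < ⌊V⌋₊ := Nat.floor_pos.mpr (by linarith)
  obtain ⟨t, ht1, ht2⟩ := Real.exists_rat_abs_sub_le_and_den_le y hn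
  have hc1 : (1:ℤ) ≤ (t.den : ℤ) := by exact_mod_cast t.pos
  obtain ⟨b, d, hdet, hd1, hdc⟩ := bezout_mat t.num t.den hc1
    (by exact_mod_cast Rat.isCoprime_num_den t)
  set a := t.num
  obtain ⟨c, hc⟩ : ∃ c : ℤ, c = t.den := ⟨_, rfl⟩
  have hcr : (c:ℝ) = t.den := by rw [hc]; simp
  rw [← hc] at hdet hdc hc1
  have hc1r : (1:ℝ) ≤ c := by exact_mod_cast hc1
  have hd1r : (1:ℝ) ≤ d := by exact_mod_cast hd1
  have hdcr : (d:ℝ) ≤ c := by exact_mod_cast hdc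
  have hV1 : V < ⌊V⌋₊ + 1 := Nat.lt_floor_add_one V
  have hta : (c:ℝ) * (t:ℝ) = a := by
    have h3 : (t.den : ℚ) * t = t.num := by rw [mul_comm]; exact Rat.mul_den_eq_num t
    rw [hcr]; exact_mod_cast h3
  have hd0 : (0:ℝ) < c := by linarith
  have habs : |(c:ℝ) * y - a| ≤ 1 / V := by
    rw [← hta, ← mul_sub, abs_mul, abs_of_pos hd0]
    calc (c:ℝ) * |y - t| ≤ c * (1 / ((⌊V⌋₊ + 1) * t.den)) := by gcongr
      _ = 1 / (⌊V⌋₊ + 1) := by rw [← hcr]; field_simp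
      _ ≤ 1 / V := one_div_le_one_div_of_le (by linarith) hV1.le
  have hcV : (c:ℝ) ≤ V := by
    rw [hcr]; exact le_trans (by exact_mod_cast ht2) (Nat.floor_le (by linarith))
  have hcl : c0 * V ≤ c := by
    have := hy c a hc1
    have h2 : (c:ℝ) * |(c:ℝ) * y - a| ≤ c * (1 / V) := by gcongr
    have h3 : c0 ≤ c / V := by calc c0 ≤ c * (1 / V) := this.trans h2
      _ = c / V := by ring
    rwa [le_div_iff₀ (by linarith)] at h3
  have hdetr : (a:ℝ) * d - b * c = 1 := by exact_mod_cast hdet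
  have h2 : |(d:ℝ) * y - b| ≤ 2 / c := by
    have e : (d:ℝ) * y - b = (d * (c * y - a) + 1) / c := by
      field_simp; linear_combination hdetr
    rw [e, abs_div, abs_of_pos hd0]
    gcongr
    have h5 : |(d:ℝ) * (c * y - a)| ≤ 1 := by
      rw [abs_mul, abs_of_pos (by linarith)]
      calc (d:ℝ) * |c * y - a| ≤ V * (1 / V) := by
            gcongr; linarith
        _ = 1 := by field_simp
    calc |(d:ℝ) * (c * y - a) + 1| ≤ |(d:ℝ) * (c * y - a)| + |1| := abs_add_le _ _
      _ ≤ 2 := by rw [abs_one]; linarith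
  have hV1' : 1 / V ≤ 1 / 2 := one_div_le_one_div_of_le (by norm_num) hV
  have hb' := abs_le.mp habs
  have hac : c ≤ a := by
    have : (c:ℝ) < a + 1 := by nlinarith only [hb', hV1', hy1, hc1r]
    have : c < a + 1 := by exact_mod_cast this
    omega
  have ha3 : a ≤ 3 * c := by
    have : (a:ℝ) ≤ 3 * c := by nlinarith only [hb', hV1', hy2, hc1r]
    exact_mod_cast this
  have hc2 : 2 ≤ c := by
    have : (1:ℝ) < c := by linarith
    have : 1 < c := by exact_mod_cast this
    omega
  refine ⟨a, b, c, d, hdet, hcl, hcV, hd1, hdc, ?_, habs, h2, hac, ?_, ?_, ha3, ?_⟩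
  · have := hy d b hd1
    have h3 : (d:ℝ) * |(d:ℝ) * y - b| ≤ d * (2 / c) := by gcongr
    have h4 := this.trans h3
    rw [← mul_div_assoc, le_div_iff₀ hd0] at h4
    linarith
  · by_contra h
    have : b ≤ d - 1 := by omega
    nlinarith only [this, hdet, hac, hd1, hc2, hdc]
  · by_contra h
    nlinarith only [h, hdet, hdc, hac, hc2, hd1]
  · by_contra h
    nlinarith only [h, hdet, ha3, hc2, hd1]

/-- forward Moebius lemma, large denominators -/
theorem FW1 {a b c d : ℤ} (hdet : a * d - b * c = 1) (hd : 1 ≤ d) (hdc : d ≤ c) {z Z cz : ℝ}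
    (hz1 : 1 ≤ z) (hzZ : z ≤ Z) (hcz1 : cz ≤ 1) (hz : BadC cz z) (q p : ℤ) (hq : c ≤ q) :
    cz / (2 * (Z + 1)) ≤ (q:ℝ) * |(q:ℝ) * ((a * z + b) / (c * z + d)) - p| := by
  have hdr : (1:ℝ) ≤ d := by exact_mod_cast hd
  have hdcr : (d:ℝ) ≤ c := by exact_mod_cast hdc
  have hqr : (c:ℝ) ≤ q := by exact_mod_cast hq
  have hdetr : (a:ℝ) * d - b * c = 1 := by exact_mod_cast hdet
  obtain ⟨r, hr⟩ : ∃ r : ℤ, r = d * p - b * q := ⟨_, rfl⟩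
  obtain ⟨s, hs⟩ : ∃ s : ℤ, s = a * q - c * p := ⟨_, rfl⟩
  have hrr : (r:ℝ) = d * p - b * q := by exact_mod_cast hr
  have hsr : (s:ℝ) = a * q - c * p := by exact_mod_cast hs
  have hqrs : (q:ℝ) = c * r + d * s := by rw [hrr, hsr]; linear_combination (-(q:ℝ)) * hdetr
  have hden : (0:ℝ) < c * z + d := by nlinarith only [hdr, hdcr, hz1]
  have hdenle : (c:ℝ) * z + d ≤ c * (Z + 1) := by nlinarith only [hdr, hdcr, hz1, hzZ]
  have hc0 : (0:ℝ) < c := by linarith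
  have hq0 : (0:ℝ) < q := by linarith
  have e : (q:ℝ) * ((a * z + b) / (c * z + d)) - p = (s * z - r) / (c * z + d) := by
    rw [hrr, hsr]; field_simp; ring
  rw [e, abs_div, abs_of_pos hden]
  have hZ : 0 < c * (Z + 1) := by nlinarith only [hz1, hzZ, hdr, hdcr]
  -- enough : q |sz - r| ≥ c cz/2
  suffices h : c * (cz / 2) ≤ q * |(s:ℝ) * z - r| by
    rw [← mul_div_assoc, div_le_div_iff₀ (by nlinarith only [hz1, hzZ]) hden]
    by_cases hcz0 : 0 ≤ cz
    · calc cz * (c * z + d) ≤ cz * (c * (Z + 1)) := by gcongr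
        _ = (c * (cz / 2)) * (2 * (Z + 1)) := by ring
        _ ≤ _ := by gcongr; nlinarith only [hz1, hzZ]
    · have h1 : cz * (c * z + d) ≤ 0 := by nlinarith only [hcz0, hden]
      have h2 : 0 ≤ q * |(s:ℝ) * z - r| * (2 * (Z + 1)) := by
        have : 0 ≤ |(s:ℝ) * z - r| := abs_nonneg _
        have : 0 ≤ 2 * (Z+1) := by linarith
        positivity
      linarith
  by_cases hs0 : s = 0
  · have hsr0 : (s:ℝ) = 0 := by exact_mod_cast hs0
    have hr1 : (1:ℝ) ≤ |(r:ℝ)| := by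
      have : r ≠ 0 := by
        rintro rfl
        rw [hsr0] at hqrs; simp at hqrs; linarith
      exact_mod_cast Int.one_le_abs this
    rw [hsr0, zero_mul, zero_sub, abs_neg]
    nlinarith only [hr1, hcz1, hqr, hc0]
  · by_cases hle : |(s:ℝ)| ≤ 2 * q / c
    · have h1 := hz.abs_ge s r hs0
      rw [le_div_iff₀ hc0] at hle
      have h2 : |(s:ℝ)| * c * |(s:ℝ) * z - r| ≤ 2 * q * |(s:ℝ) * z - r| := by gcongr
      nlinarith only [h1, h2, hle, hc0]
    · push Not at hle
      have e2 : (s:ℝ) * z - r = s * (z + d / c) - q / c := by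
        rw [hqrs]; field_simp; ring
      have h3 : |(s:ℝ)| - q / c ≤ |(s:ℝ) * z - r| := by
        rw [e2]
        have h4 := abs_sub_abs_le_abs_sub ((s:ℝ) * (z + d / c)) (q / c)
        rw [abs_mul, abs_of_pos (by positivity : (0:ℝ) < q / c)] at h4
        have h5 : 1 ≤ |z + (d:ℝ) / c| := by
          refine le_trans ?_ (le_abs_self _)
          have : (0:ℝ) < d / c := by positivity
          linarith
        have h6 : |(s:ℝ)| * 1 ≤ |(s:ℝ)| * |z + (d:ℝ) / c| := by gcongr
        linarith
      have h7 : q / c ≤ |(s:ℝ) * z - r| := by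
        have : 2 * (q:ℝ) / c = q / c + q / c := by ring
        linarith
      have h8 : 1 ≤ |(s:ℝ) * z - r| := le_trans (by rw [le_div_iff₀ hc0]; linarith) h7
      nlinarith only [h8, hqr, hcz1, hc0]

theorem FW2 {a b c d : ℤ} (hdet : a * d - b * c = 1) (hd : 1 ≤ d) (hdc : d ≤ c) {z Z : ℝ}
    (hz1 : 1 ≤ z) (hzZ : z ≤ Z) (q p : ℤ) (hq1 : 1 ≤ q) (hq : q < c) :
    (q:ℝ) / (c * (Z + 1)) ≤ |(q:ℝ) * ((a * z + b) / (c * z + d)) - p| * q := by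
  have hdr : (1:ℝ) ≤ d := by exact_mod_cast hd
  have hdcr : (d:ℝ) ≤ c := by exact_mod_cast hdc
  have hq0 : (1:ℝ) ≤ q := by exact_mod_cast hq1
  have hdetr : (a:ℝ) * d - b * c = 1 := by exact_mod_cast hdet
  obtain ⟨r, hr⟩ : ∃ r : ℤ, r = d * p - b * q := ⟨_, rfl⟩
  obtain ⟨s, hs⟩ : ∃ s : ℤ, s = a * q - c * p := ⟨_, rfl⟩
  have hrr : (r:ℝ) = d * p - b * q := by exact_mod_cast hr
  have hsr : (s:ℝ) = a * q - c * p := by exact_mod_cast hs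
  have hqrs : q = c * r + d * s := by rw [hr, hs]; linear_combination (-q) * hdet
  have hden : (0:ℝ) < c * z + d := by nlinarith only [hdr, hdcr, hz1]
  have hdenle : (c:ℝ) * z + d ≤ c * (Z + 1) := by nlinarith only [hdr, hdcr, hz1, hzZ]
  have hc0 : (0:ℝ) < c := by linarith
  have e : (q:ℝ) * ((a * z + b) / (c * z + d)) - p = (s * z - r) / (c * z + d) := by
    rw [hrr, hsr]; field_simp; ring
  rw [e, abs_div, abs_of_pos hden]
  have h1 : 1 ≤ |(s:ℝ) * z - r| := by
    rcases lt_trichotomy s 0 with h | h | h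
    · have hr1 : 1 ≤ r := by by_contra hh; nlinarith only [hh, h, hqrs, hq1, hd, hdc]
      have : (1:ℝ) ≤ r := by exact_mod_cast hr1
      have h' : (s:ℝ) < 0 := by exact_mod_cast h
      rw [abs_of_nonpos (by nlinarith only [h', this, hz1])]
      nlinarith only [h', this, hz1]
    · exfalso
      rw [h] at hqrs
      have : 0 < r := by by_contra hh; nlinarith only [hh, hqrs, hq1, hd, hdc]
      nlinarith only [this, hqrs, hq, hd, hdc]
    · have hr1 : r ≤ 0 := by by_contra hh; nlinarith only [hh, h, hqrs, hq, hd, hdc]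
      have : (r:ℝ) ≤ 0 := by exact_mod_cast hr1
      have h' : (1:ℝ) ≤ s := by exact_mod_cast h
      refine le_trans ?_ (le_abs_self _)
      nlinarith only [this, h', hz1]
  rw [div_mul_eq_mul_div]
  apply div_le_div₀ (by positivity) _ hden hdenle
  nlinarith only [h1, hq0]

theorem FW3 {a b c d : ℤ} (hdet : a * d - b * c = 1) (hd : 1 ≤ d) (hdc : d ≤ c) {z : ℝ}
    (hz1 : 1 ≤ z) {y : ℝ} (hy : |(c:ℝ) * y - a| ≤ 1 / c) :
    |(a * z + b) / (c * z + d) - y| ≤ 2 / (c:ℝ)^2 := by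
  have hdr : (1:ℝ) ≤ d := by exact_mod_cast hd
  have hdcr : (d:ℝ) ≤ c := by exact_mod_cast hdc
  have hdetr : (a:ℝ) * d - b * c = 1 := by exact_mod_cast hdet
  have hc0 : (0:ℝ) < c := by linarith
  have hden : (0:ℝ) < c * z + d := by nlinarith only [hdr, hdcr, hz1]
  have e : (a * z + b) / (c * z + d) - y = -(1 / (c * (c * z + d))) - (c * y - a) / c := by
    field_simp; linear_combination -hdetr
  rw [e]
  have h1 : |(c * y - a) / (c:ℝ)| ≤ 1 / (c:ℝ)^2 := by
    rw [abs_div, abs_of_pos hc0]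
    calc |(c:ℝ) * y - a| / c ≤ (1 / c) / c := by gcongr
      _ = _ := by field_simp
  have h2 : |-(1 / ((c:ℝ) * (c * z + d)))| ≤ 1 / (c:ℝ)^2 := by
    rw [abs_neg, abs_of_pos (by positivity)]
    apply one_div_le_one_div_of_le (by positivity)
    nlinarith only [hdr, hdcr, hz1]
  have h3 := abs_sub (-(1 / ((c:ℝ) * (c * z + d)))) ((c * y - a) / (c:ℝ))
  have : 2 / (c:ℝ)^2 = 1 / (c:ℝ)^2 + 1 / (c:ℝ)^2 := by ring
  linarith

theorem FW_bad {c0 V y : ℝ} {a b c d : ℤ} (hc0 : 0 < c0) (hc01 : c0 ≤ 1 / 8) (hy : BadC c0 y)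
    (hg : GM c0 V y a b c d) {w : ℝ} (hw1 : 1 ≤ w) (hw2 : w ≤ 2) (hw : BadC c0 w) :
    BadC (c0 / 6) ((a * w + b) / (c * w + d)) := by
  intro q p hq
  have hqr : (1:ℝ) ≤ q := by exact_mod_cast hq
  have hc1 : (1:ℝ) ≤ c := by exact_mod_cast (hg.hd1.trans hg.hdc)
  by_cases h : c ≤ q
  · have := FW1 hg.det hg.hd1 hg.hdc hw1 hw2 (by linarith) hw q p h
    norm_num at this
    exact this
  · push Not at h
    by_cases h2 : c0 / 2 * c ≤ q
    · have := FW2 hg.det hg.hd1 hg.hdc hw1 hw2 q p hq h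
      rw [mul_comm (q:ℝ)]
      refine le_trans ?_ this
      rw [le_div_iff₀ (by positivity)]
      linarith
    · push Not at h2
      have h3 : |(c:ℝ) * y - a| ≤ 1 / c := hg.h1.trans
        (one_div_le_one_div_of_le (by linarith) hg.hcu)
      have h4 := FW3 hg.det hg.hd1 hg.hdc hw1 h3
      set x := (a * w + b) / (c * w + d)
      have h5 := hy q p hq
      have h6 : |(q:ℝ) * y - p| ≤ |(q:ℝ) * x - p| + q * |x - y| := by
        have e : (q:ℝ) * y - p = ((q:ℝ) * x - p) - q * (x - y) := by ring
        rw [e]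
        refine (abs_sub _ _).trans ?_
        rw [abs_mul, abs_of_pos (by linarith : (0:ℝ) < q)]
      have h7 : (q:ℝ) * (q * |x - y|) ≤ c0 / 2 := by
        calc (q:ℝ) * (q * |x - y|) ≤ (c0 / 2 * c) * ((c0 / 2 * c) * (2 / (c:ℝ)^2)) := by gcongr
          _ = c0^2 / 2 := by field_simp
          _ ≤ c0 / 2 := by nlinarith only [hc0, hc01]
      nlinarith only [mul_le_mul_of_nonneg_left h6 (by linarith : (0:ℝ) ≤ q), h7, h5, hc0]

set_option maxHeartbeats 1000000 in
theorem TR_bad {c0 V y : ℝ} {a b c d : ℤ} (hc0 : 0 < c0) (hc01 : c0 ≤ 1 / 8) (hy : BadC c0 y)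
    (hg : GM c0 V y a b c d) {z cz : ℝ} (hz1 : 1 ≤ z) (hz2 : z ≤ 4) (hz : BadC cz z)
    (hcz : cz ≤ 1) :
    BadC (min (c0 / 34) (cz / 17)) ((a * z + c) / (b * z + d)) := by
  intro q p hq
  have hqr : (1:ℝ) ≤ q := by exact_mod_cast hq
  have hd1 : (1:ℝ) ≤ d := by exact_mod_cast hg.hd1
  have hdc : (d:ℝ) ≤ c := by exact_mod_cast hg.hdc
  have hbd : (d:ℝ) ≤ b := by exact_mod_cast hg.hbd
  have hb4 : (b:ℝ) ≤ 4 * d := by exact_mod_cast hg.hb4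
  have hdetr : (a:ℝ) * d - b * c = 1 := by exact_mod_cast hg.det
  obtain ⟨r, hr⟩ : ∃ r : ℤ, r = d * p - c * q := ⟨_, rfl⟩
  obtain ⟨s, hs⟩ : ∃ s : ℤ, s = a * q - b * p := ⟨_, rfl⟩
  have hrr : (r:ℝ) = d * p - c * q := by exact_mod_cast hr
  have hsr : (s:ℝ) = a * q - b * p := by exact_mod_cast hs
  have hqrs : (q:ℝ) = b * r + d * s := by rw [hrr, hsr]; linear_combination (-(q:ℝ)) * hdetr
  have hden : (0:ℝ) < b * z + d := by nlinarith only [hd1, hbd, hz1]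
  have hdenle : (b:ℝ) * z + d ≤ 17 * d := by nlinarith only [hd1, hbd, hb4, hz1, hz2]
  have e : (q:ℝ) * ((a * z + c) / (b * z + d)) - p = (s * z - r) / (b * z + d) := by
    rw [hrr, hsr, eq_div_iff hden.ne', sub_mul, mul_assoc, div_mul_cancel₀ _ hden.ne']; ring
  rw [e, abs_div, abs_of_pos hden]
  have habs0 : 0 ≤ |(s:ℝ) * z - r| := abs_nonneg _
  suffices h : d * (c0 / 2) ≤ q * |(s:ℝ) * z - r| ∨ d * cz ≤ q * |(s:ℝ) * z - r| by
    rw [← mul_div_assoc]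
    have hmono : q * |(s:ℝ) * z - r| / (17 * d) ≤ q * |(s:ℝ) * z - r| / (b * z + d) := by
      gcongr
    refine le_trans ?_ hmono
    rw [le_div_iff₀ (by positivity)]
    rcases h with h | h
    · have := min_le_left (c0 / 34) (cz / 17)
      nlinarith only [this, h, hd1]
    · have := min_le_right (c0 / 34) (cz / 17)
      nlinarith only [this, h, hd1]
  have hcc : (0:ℝ) < c := by linarith
  by_cases hop : (r:ℝ) * s < 0
  · -- opposite signs
    left
    have hr0 : r ≠ 0 := by rintro rfl; simp at hop
    have hrabs : (1:ℝ) ≤ |(r:ℝ)| := by exact_mod_cast Int.one_le_abs hr0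
    have h1 := hy.abs_ge r (-s) hr0
    push_cast at h1
    rw [sub_neg_eq_add] at h1
    have e2 : (q:ℝ) = d * (r * y + s) - r * (d * y - b) := by rw [hqrs]; ring
    have h2 : d * |(r:ℝ) * y + s| - |(r:ℝ)| * (2 / c) ≤ q := by
      have h3 := abs_sub_abs_le_abs_sub ((d:ℝ) * (r * y + s)) (r * (d * y - b))
      rw [← e2, abs_mul, abs_mul, abs_of_pos (by linarith : (0:ℝ) < d),
        abs_of_pos (by linarith : (0:ℝ) < q)] at h3
      have h4 : |(r:ℝ)| * |(d:ℝ) * y - b| ≤ |(r:ℝ)| * (2 / c) := by gcongr; exact hg.h2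
      linarith
    have h3 : |(r:ℝ)| ≤ |(s:ℝ) * z - r| := by
      rcases lt_or_gt_of_ne hr0 with hneg | hpos
      · have hrn : (r:ℝ) < 0 := by exact_mod_cast hneg
        have hsp : 0 < (s:ℝ) := by by_contra hh; nlinarith only [hh, hrn, hop]
        rw [abs_of_neg hrn]
        refine le_trans ?_ (le_abs_self _); nlinarith only [hsp, hz1, hrn]
      · have hrn : 0 < (r:ℝ) := by exact_mod_cast hpos
        have hsp : (s:ℝ) < 0 := by by_contra hh; nlinarith only [hh, hrn, hop]
        rw [abs_of_pos hrn]
        refine le_trans ?_ (neg_le_abs _); nlinarith only [hsp, hz1, hrn]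
    set R := |(r:ℝ)| with hR
    by_cases hsm : R^2 ≤ d * c * c0 / 4
    · have h5 : d * c0 / 2 ≤ R * q := by
        have h6 : R * (d * |(r:ℝ) * y + s| - R * (2 / c)) ≤ R * q := by gcongr
        have h7 : R^2 * (2 / c) ≤ (d * c * c0 / 4) * (2 / c) := by gcongr
        have h8 : (d * c * c0 / 4) * (2 / (c:ℝ)) = d * c0 / 2 := by field_simp; norm_num
        have h9 : R * |(r:ℝ) * y + s| * d ≥ c0 * d := by gcongr
        nlinarith only [h6, h7, h8, h9]
      have h10 : q * R ≤ q * |(s:ℝ) * z - r| := by gcongr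
      linarith
    · push Not at hsm
      have h5 : d * (c0 / 2) ≤ R := by
        by_contra hh
        push Not at hh
        have h6 : R^2 < (d * (c0 / 2))^2 := by gcongr
        have h7 : (d * (c0 / 2))^2 ≤ d * c * c0 / 4 := by
          have h8 : (d:ℝ) * d ≤ d * c := by gcongr
          have h9 : d * d * (c0 * c0) ≤ d * c * c0 := by
            have : c0 * c0 ≤ c0 := by nlinarith only [hc0, hc01]
            have : (d:ℝ) * d * (c0 * c0) ≤ d * d * c0 := by gcongr
            have : (d:ℝ) * d * c0 ≤ d * c * c0 := by gcongr
            linarith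
          nlinarith only [h9]
        linarith
      have h10 : 1 * R ≤ q * |(s:ℝ) * z - r| := by gcongr
      linarith
  · push Not at hop
    have hnn : 0 ≤ r ∧ 0 ≤ s := by
      have hop' : 0 ≤ r * s := by exact_mod_cast hop
      have hqi : q = b * r + d * s := by exact_mod_cast hqrs
      have hdi := hg.hd1
      have hbi := hg.hbd
      constructor
      · by_contra hh
        push Not at hh
        have : s ≤ 0 := by by_contra h2; nlinarith only [h2, hh, hop']
        nlinarith only [this, hh, hqi, hq, hdi, hbi]
      · by_contra hh
        push Not at hh
        have : r ≤ 0 := by by_contra h2; nlinarith only [h2, hh, hop']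
        nlinarith only [this, hh, hqi, hq, hdi, hbi]
    obtain ⟨hr0, hs0⟩ := hnn
    rcases hs0.eq_or_lt with hs' | hs'
    · left
      have hsz : (s:ℝ) = 0 := by exact_mod_cast hs'.symm
      have hrne : r ≠ 0 := by
        rintro rfl; rw [hsz] at hqrs; simp at hqrs; linarith
      have hr1 : (1:ℝ) ≤ r := by exact_mod_cast (by omega : 1 ≤ r)
      rw [hsz, zero_mul, zero_sub, abs_neg, abs_of_pos (by linarith)]
      have : (d:ℝ) ≤ q := by rw [hqrs, hsz]; nlinarith only [hr1, hbd, hd1]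
      nlinarith only [hr1, this, hc01, hd1, hc0]
    · have hs1 : (1:ℝ) ≤ s := by exact_mod_cast hs'
      have hr1 : (0:ℝ) ≤ r := by exact_mod_cast hr0
      right
      have h1 := hz s r (by omega)
      have : d * (s:ℝ) ≤ q := by rw [hqrs]; nlinarith only [hr1, hbd, hd1]
      calc d * cz ≤ d * ((s:ℝ) * |(s:ℝ) * z - r|) := by gcongr
        _ = (d * s) * |(s:ℝ) * z - r| := by ring
        _ ≤ _ := by gcongr


/-- additive character -/
noncomputable def ee (t : ℝ) : ℂ := Complex.exp (Complex.I * ((2 * π * t : ℝ) : ℂ))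

theorem ee_add (s t : ℝ) : ee (s + t) = ee s * ee t := by
  rw [ee, ee, ee, ← Complex.exp_add]; congr 1; push_cast; ring

theorem ee_zero : ee 0 = 1 := by simp [ee]

theorem norm_ee (t : ℝ) : ‖ee t‖ = 1 := by
  rw [ee, mul_comm]; exact Complex.norm_exp_ofReal_mul_I _

theorem ee_int (k : ℤ) : ee k = 1 := by
  rw [ee]
  have : Complex.I * ((2 * π * (k:ℝ) : ℝ) : ℂ) = (k:ℂ) * (2 * π * Complex.I) := by
    push_cast; ring
  rw [this]; exact Complex.exp_int_mul_two_pi_mul_I k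

theorem ee_conj (t : ℝ) : (starRingEnd ℂ) (ee t) = ee (-t) := by
  rw [ee, ee, ← Complex.exp_conj, map_mul, Complex.conj_I, Complex.conj_ofReal]
  congr 1; push_cast; ring

theorem ee_nat_mul (n : ℕ) (t : ℝ) : ee (n * t) = ee t ^ n := by
  rw [ee, ee, ← Complex.exp_nat_mul]; congr 1; push_cast; ring

theorem norm_ee_sub_one_le (t : ℝ) : ‖ee t - 1‖ ≤ 2 * π * |t| := by
  refine (Real.norm_exp_I_mul_ofReal_sub_one_le).trans ?_
  rw [Real.norm_eq_abs, abs_mul, abs_of_pos (by positivity)]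

theorem norm_ee_sub (s t : ℝ) : ‖ee s - ee t‖ ≤ 2 * π * |s - t| := by
  have : ee s - ee t = ee t * (ee (s - t) - 1) := by
    rw [mul_sub, ← ee_add]; simp
  rw [this, norm_mul, norm_ee, one_mul]
  exact norm_ee_sub_one_le _

theorem norm_ee_sub_one_ge (t : ℝ) : 4 * dni t ≤ ‖ee t - 1‖ := by
  have h1 : ee t = ee (t - round t) := by
    have : t = (t - round t) + ((round t : ℤ) : ℝ) := by ring
    conv_lhs => rw [this]
    rw [ee_add, ee_int, mul_one]
  rw [h1, dni, ee, Complex.norm_exp_I_mul_ofReal_sub_one, Real.norm_eq_abs, abs_mul, abs_two]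
  have h2 := abs_sub_round t
  have h3 : |2 * π * (t - round t) / 2| ≤ π / 2 := by
    have e : 2 * π * (t - round t) / 2 = π * (t - round t) := by ring
    rw [e, abs_mul, abs_of_pos pi_pos]
    nlinarith [pi_pos]
  have h4 := Real.mul_abs_le_abs_sin h3
  have e : 2 * π * (t - round t) / 2 = π * (t - round t) := by ring
  rw [e] at h4 ⊢
  rw [abs_mul, abs_of_pos pi_pos] at h4
  have : 2 / π * (π * |t - round t|) = 2 * |t - round t| := by field_simp
  linarith

theorem geom_ee (N : ℕ) (t : ℝ) : ‖∑ j ∈ Finset.range N, ee (j * t)‖ * (2 * dni t) ≤ 1 := by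
  have h1 : (∑ j ∈ Finset.range N, ee (j * t)) * (ee t - 1) = ee t ^ N - 1 := by
    rw [← geom_sum_mul]; congr 1
    exact Finset.sum_congr rfl fun j _ => ee_nat_mul j t
  have h2 : ‖∑ j ∈ Finset.range N, ee (j * t)‖ * ‖ee t - 1‖ ≤ 2 := by
    rw [← norm_mul, h1]
    refine (norm_sub_le _ _).trans ?_
    rw [norm_pow, norm_ee]; norm_num
  have h3 : ‖∑ j ∈ Finset.range N, ee (j * t)‖ * (4 * dni t) ≤ 2 :=
    le_trans (mul_le_mul_of_nonneg_left (norm_ee_sub_one_ge t) (norm_nonneg _)) h2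
  linarith

theorem sq_sum_ee {ι : Type*} (s : Finset ι) (x : ι → ℝ) :
    (((‖∑ a ∈ s, ee (x a)‖ ^ 2 : ℝ)) : ℂ) = ∑ a ∈ s, ∑ a' ∈ s, ee (x a - x a') := by
  rw [Complex.ofReal_pow, ← Complex.mul_conj', map_sum, Finset.sum_mul_sum]
  refine Finset.sum_congr rfl fun a _ => Finset.sum_congr rfl fun a' _ => ?_
  rw [ee_conj, ← ee_add, sub_eq_add_neg]

theorem norm_sum_ee_neg {ι : Type*} (s : Finset ι) (x : ι → ℝ) :
    ‖∑ a ∈ s, ee (-x a)‖ = ‖∑ a ∈ s, ee (x a)‖ := by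
  rw [← Complex.norm_conj (∑ a ∈ s, ee (x a)), map_sum]
  simp only [ee_conj]

theorem fejer {Ω : Type*} [Fintype Ω] [Nonempty Ω] (u : Ω → ℝ) (N : ℕ) (hN : 1 ≤ N)
    (h : ∀ k : ℕ, 1 ≤ k → k < N → ‖∑ ω, ee (k * u ω)‖ ≤ (Fintype.card Ω : ℝ) / (4 * N)) :
    ∃ ω, dni (u ω) ^ 2 ≤ 1 / N := by
  classical
  have hNr : (1:ℝ) ≤ N := by exact_mod_cast hN
  have hΩ : (1:ℝ) ≤ Fintype.card Ω := by exact_mod_cast Fintype.card_pos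
  set X : ℝ := ((Fintype.card Ω : ℕ) : ℝ) with hX
  have hE : ∀ j j' : ℕ, j < N → j' < N →
      ‖(∑ ω, ee (j * u ω - j' * u ω)) - (if j = j' then (X:ℂ) else 0)‖ ≤ X / (4 * N) := by
    intro j j' hj hj'
    rcases lt_trichotomy j j' with hlt | heq | hgt
    · rw [if_neg (by omega), sub_zero]
      have := h (j' - j) (by omega) (by omega)
      rw [← norm_sum_ee_neg] at this
      convert this using 4 with ω
      rw [Nat.cast_sub hlt.le]; ring
    · subst heq
      simp only [sub_self, ee_zero, if_true, Finset.sum_const, Finset.card_univ, nsmul_eq_mul,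
        mul_one]
      simp [hX]; positivity
    · rw [if_neg (by omega), sub_zero]
      have := h (j - j') (by omega) (by omega)
      convert this using 4 with ω
      rw [Nat.cast_sub hgt.le]; ring
  have hT : (((∑ ω, ‖∑ j ∈ Finset.range N, ee (j * u ω)‖^2 : ℝ)) : ℂ) =
      ∑ j ∈ Finset.range N, ∑ j' ∈ Finset.range N, ∑ ω, ee (j * u ω - j' * u ω) := by
    rw [Complex.ofReal_sum]
    simp_rw [sq_sum_ee]
    rw [Finset.sum_comm]
    refine Finset.sum_congr rfl fun j _ => ?_
    rw [Finset.sum_comm]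
  have hdiag : ∑ j ∈ Finset.range N, ∑ j' ∈ Finset.range N, (if j = j' then (X:ℂ) else 0) = N * X := by
    simp only [Finset.sum_ite_eq]
    rw [Finset.sum_congr rfl (fun j hj => if_pos hj)]
    simp
  have hdiff : ‖(((∑ ω, ‖∑ j ∈ Finset.range N, ee (j * u ω)‖^2 : ℝ)) : ℂ) - N * X‖ ≤
      N * X / 4 := by
    rw [hT, ← hdiag, ← Finset.sum_sub_distrib]
    simp_rw [← Finset.sum_sub_distrib]
    refine (norm_sum_le _ _).trans ?_
    refine (Finset.sum_le_sum (g := fun _ => X / 4) fun j hj => ?_).trans ?_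
    · refine (norm_sum_le _ _).trans ?_
      refine (Finset.sum_le_sum (g := fun _ => X / (4 * N)) fun j' hj' => ?_).trans ?_
      · exact hE j j' (Finset.mem_range.mp hj) (Finset.mem_range.mp hj')
      · rw [Finset.sum_const, Finset.card_range, nsmul_eq_mul]
        apply le_of_eq; field_simp
    · rw [Finset.sum_const, Finset.card_range, nsmul_eq_mul]
      apply le_of_eq; ring
  have hre : 3 / 4 * N * X ≤ ∑ ω, ‖∑ j ∈ Finset.range N, ee (j * u ω)‖^2 := by
    have h1 := (Complex.abs_re_le_norm _).trans hdiff
    have h2 : ((((∑ ω, ‖∑ j ∈ Finset.range N, ee (j * u ω)‖^2 : ℝ)) : ℂ) - N * X).re =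
      (∑ ω, ‖∑ j ∈ Finset.range N, ee (j * u ω)‖^2) - N * X := by
      rw [Complex.sub_re, Complex.ofReal_re]; simp
    rw [h2] at h1
    have := (abs_le.mp h1).1
    linarith
  by_contra hcon
  push Not at hcon
  have hb : ∀ ω, ‖∑ j ∈ Finset.range N, ee (j * u ω)‖^2 ≤ N / 4 := by
    intro ω
    have h1 := hcon ω
    have h2 := geom_ee N (u ω)
    set Y := ‖∑ j ∈ Finset.range N, ee (j * u ω)‖
    have hY : 0 ≤ Y := norm_nonneg _
    have h3 : (Y * (2 * dni (u ω)))^2 ≤ 1 := by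
      have : 0 ≤ Y * (2 * dni (u ω)) := by have := dni_nonneg (u ω); positivity
      nlinarith
    rw [div_lt_iff₀ (by linarith)] at h1
    have h4 : Y^2 * 4 * (dni (u ω)^2 * N) ≤ N := by
      have : Y^2 * 4 * (dni (u ω)^2 * N) = (Y * (2 * dni (u ω)))^2 * N := by ring
      rw [this]; nlinarith
    have h5 : Y^2 * 4 * 1 ≤ Y^2 * 4 * (dni (u ω)^2 * N) := by gcongr
    linarith
  have hsum : ∑ ω, ‖∑ j ∈ Finset.range N, ee (j * u ω)‖^2 ≤ X * (N / 4) := by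
    refine (Finset.sum_le_sum fun ω _ => hb ω).trans ?_
    rw [Finset.sum_const, Finset.card_univ, nsmul_eq_mul]
  nlinarith

theorem dni_small {t : ℝ} (ht : |t| ≤ 1 / 2) : |t| ≤ dni t := by
  rw [dni]
  by_cases h : round t = 0
  · rw [h]; simp
  · have : (1:ℝ) ≤ |((round t : ℤ) : ℝ)| := by exact_mod_cast Int.one_le_abs h
    have h2 := abs_sub_abs_le_abs_sub ((round t : ℤ) : ℝ) t
    rw [abs_sub_comm] at h2
    linarith

theorem harm_sum {ι : Type*} [Fintype ι] [DecidableEq ι] (w : ι → ℝ) {ε1 : ℝ} (h1 : 0 < ε1) (K : ℕ)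
    (hsep : ∀ l l', l ≠ l' → ε1 ≤ |w l - w l'|) (hK : ∀ l l', |w l - w l'| ≤ K * ε1) (l : ι) :
    ∑ l' ∈ Finset.univ.erase l, ε1 / |w l - w l'| ≤ 2 * (1 + Real.log K) := by
  have key : ∀ (v : ι → ℝ) (s : Finset ι), (∀ l' ∈ s, 0 < v l') → (∀ l' ∈ s, ε1 ≤ v l') →
      (∀ l' ∈ s, v l' ≤ K * ε1) → (∀ a ∈ s, ∀ b ∈ s, a ≠ b → ε1 ≤ |v a - v b|) →
      ∑ l' ∈ s, ε1 / v l' ≤ 1 + Real.log K := by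
    intro v s hv0 hv1 hvK hvs
    have hle : ∀ l' ∈ s, ε1 / v l' ≤ ((⌊v l' / ε1⌋₊ : ℝ))⁻¹ := by
      intro l' hl
      have hv := hv0 l' hl
      have h2 : 1 ≤ ⌊v l' / ε1⌋₊ := by
        apply Nat.le_floor; rw [Nat.cast_one, le_div_iff₀ h1, one_mul]; exact hv1 l' hl
      have h3 : (1:ℝ) ≤ ⌊v l' / ε1⌋₊ := by exact_mod_cast h2
      have h4 : (⌊v l' / ε1⌋₊ : ℝ) ≤ v l' / ε1 := Nat.floor_le (by positivity)
      calc ε1 / v l' = (v l' / ε1)⁻¹ := by rw [inv_div]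
        _ ≤ _ := inv_anti₀ (by linarith) h4
    have hinj : Set.InjOn (fun l' => ⌊v l' / ε1⌋₊) (s : Set ι) := by
      intro a ha b hb hab
      by_contra hne
      have h5 := hvs a ha b hb hne
      have f1 := Nat.floor_le (div_nonneg (hv0 a ha).le h1.le)
      have f2 := Nat.lt_floor_add_one (v a / ε1)
      have f3 := Nat.floor_le (div_nonneg (hv0 b hb).le h1.le)
      have f4 := Nat.lt_floor_add_one (v b / ε1)
      simp only at hab
      rw [hab] at f1 f2
      rw [le_div_iff₀ h1] at f1 f3
      rw [div_lt_iff₀ h1] at f2 f4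
      have : |v a - v b| < ε1 := by rw [abs_lt]; constructor <;> linarith
      linarith
    calc ∑ l' ∈ s, ε1 / v l' ≤ ∑ l' ∈ s, ((⌊v l' / ε1⌋₊ : ℝ))⁻¹ := Finset.sum_le_sum hle
      _ = ∑ k ∈ s.image (fun l' => ⌊v l' / ε1⌋₊), ((k : ℝ))⁻¹ := by
          rw [Finset.sum_image hinj]
      _ ≤ ∑ k ∈ Finset.Icc 1 K, ((k : ℝ))⁻¹ := by
          apply Finset.sum_le_sum_of_subset_of_nonneg
          · intro k hk
            obtain ⟨l', hl, rfl⟩ := Finset.mem_image.mp hk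
            rw [Finset.mem_Icc]
            refine ⟨?_, ?_⟩
            · apply Nat.le_floor; rw [Nat.cast_one, le_div_iff₀ h1, one_mul]; exact hv1 l' hl
            · have : v l' / ε1 ≤ K := by rw [div_le_iff₀ h1]; exact hvK l' hl
              exact Nat.floor_le_of_le this
          · intros; positivity
      _ ≤ 1 + Real.log K := by
          have := harmonic_le_one_add_log K
          rw [harmonic_eq_sum_Icc] at this
          push_cast at this
          exact this
  have hpos : ∀ l', l' ≠ l → 0 < |w l - w l'| := fun l' hl => lt_of_lt_of_le h1 (hsep _ _ hl.symm)
  rw [← Finset.sum_filter_add_sum_filter_not (Finset.univ.erase l) (fun l' => w l < w l')]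
  have A := key (fun l' => w l' - w l) ((Finset.univ.erase l).filter (fun l' => w l < w l'))
    (fun l' hl => by have := (Finset.mem_filter.mp hl).2; linarith)
    (fun l' hl => by
      obtain ⟨h2, h3⟩ := Finset.mem_filter.mp hl
      have := hsep l' l (Finset.ne_of_mem_erase h2)
      rwa [abs_of_pos (by linarith)] at this)
    (fun l' hl => (le_abs_self _).trans (hK _ _))
    (fun a _ b _ hab => by simpa using hsep a b hab)
  have B := key (fun l' => w l - w l') ((Finset.univ.erase l).filter (fun l' => ¬ w l < w l'))
    (fun l' hl => by
      obtain ⟨h2, h3⟩ := Finset.mem_filter.mp hl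
      have := hsep l l' (Finset.ne_of_mem_erase h2).symm
      rw [abs_of_nonneg (by linarith)] at this
      linarith)
    (fun l' hl => by
      obtain ⟨h2, h3⟩ := Finset.mem_filter.mp hl
      have := hsep l l' (Finset.ne_of_mem_erase h2).symm
      rwa [abs_of_nonneg (by linarith)] at this)
    (fun l' hl => (le_abs_self _).trans (hK _ _))
    (fun a _ b _ hab => by
      have := hsep b a hab.symm
      convert this using 2
      ring)
  have A' : ∑ l' ∈ (Finset.univ.erase l).filter (fun l' => w l < w l'), ε1 / |w l - w l'| ≤
      1 + Real.log K := by
    refine le_trans (le_of_eq (Finset.sum_congr rfl fun l' hl => ?_)) A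
    have := (Finset.mem_filter.mp hl).2
    rw [abs_sub_comm, abs_of_pos (by linarith)]
  have B' : ∑ l' ∈ (Finset.univ.erase l).filter (fun l' => ¬ w l < w l'), ε1 / |w l - w l'| ≤
      1 + Real.log K := by
    refine le_trans (le_of_eq (Finset.sum_congr rfl fun l' hl => ?_)) B
    have := (Finset.mem_filter.mp hl).2
    rw [abs_of_nonneg (by linarith)]
  linarith

theorem large_sieve {ι : Type*} [Fintype ι] (w : ι → ℝ) (w0 : ℝ) {ε1 g : ℝ} (h1 : 0 < ε1)
    (K J : ℕ) (hg : 0 < g)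
    (hsep : ∀ l l', l ≠ l' → ε1 ≤ |w l - w l'|) (hK : ∀ l l', |w l - w l'| ≤ K * ε1)
    (hgK : g * (K * ε1) ≤ 1 / 2) :
    ∑ c ∈ Finset.range J, ‖∑ l, ee (g * c * (w l - w0))‖ ^ 2 ≤
      Fintype.card ι * (J + 1 / (g * ε1) * (1 + Real.log K)) := by
  classical
  have hT : (((∑ c ∈ Finset.range J, ‖∑ l, ee (g * c * (w l - w0))‖ ^ 2 : ℝ)) : ℂ) =
      ∑ l, ∑ l', ∑ c ∈ Finset.range J, ee (c * (g * (w l - w l'))) := by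
    rw [Complex.ofReal_sum]
    simp_rw [sq_sum_ee]
    rw [Finset.sum_comm]
    refine Finset.sum_congr rfl fun l _ => ?_
    rw [Finset.sum_comm]
    refine Finset.sum_congr rfl fun l' _ => Finset.sum_congr rfl fun c _ => ?_
    congr 1; ring
  have hnn : 0 ≤ ∑ c ∈ Finset.range J, ‖∑ l, ee (g * c * (w l - w0))‖ ^ 2 :=
    Finset.sum_nonneg fun _ _ => by positivity
  have hn : ∑ c ∈ Finset.range J, ‖∑ l, ee (g * c * (w l - w0))‖ ^ 2 =
      ‖∑ l, ∑ l', ∑ c ∈ Finset.range J, ee (c * (g * (w l - w l')))‖ := by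
    rw [← hT, Complex.norm_real, Real.norm_eq_abs, abs_of_nonneg hnn]
  rw [hn]
  refine (norm_sum_le _ _).trans ?_
  have hl : ∀ l ∈ (Finset.univ : Finset ι), ‖∑ l', ∑ c ∈ Finset.range J, ee (c * (g * (w l - w l')))‖ ≤
      J + 1 / (g * ε1) * (1 + Real.log K) := by
    intro l _
    refine (norm_sum_le _ _).trans ?_
    rw [← Finset.add_sum_erase _ _ (Finset.mem_univ l)]
    gcongr
    · simp [ee_zero]
    · have h2 := harm_sum w h1 K hsep hK l
      have h3 : ∀ l' ∈ Finset.univ.erase l, ‖∑ c ∈ Finset.range J, ee (c * (g * (w l - w l')))‖ ≤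
          1 / (2 * (g * ε1)) * (ε1 / |w l - w l'|) := by
        intro l' hl'
        have hpos : 0 < |w l - w l'| := lt_of_lt_of_le h1 (hsep _ _ (Finset.ne_of_mem_erase hl').symm)
        have h4 := geom_ee J (g * (w l - w l'))
        have h5 : |g * (w l - w l')| = g * |w l - w l'| := by rw [abs_mul, abs_of_pos hg]
        have h6 : g * |w l - w l'| ≤ dni (g * (w l - w l')) := by
          rw [← h5]; apply dni_small; rw [h5]
          exact (mul_le_mul_of_nonneg_left (hK l l') hg.le).trans hgK
        have h7 : 1 / (2 * (g * ε1)) * (ε1 / |w l - w l'|) = 1 / (2 * (g * |w l - w l'|)) := by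
          field_simp
        rw [h7, le_div_iff₀ (by positivity)]
        refine le_trans ?_ h4
        gcongr
      refine (Finset.sum_le_sum h3).trans ?_
      rw [← Finset.mul_sum]
      calc 1 / (2 * (g * ε1)) * _ ≤ 1 / (2 * (g * ε1)) * (2 * (1 + Real.log K)) := by gcongr
        _ = _ := by field_simp
  refine (Finset.sum_le_sum hl).trans ?_
  rw [Finset.sum_const, Finset.card_univ, nsmul_eq_mul]


theorem energy {I : Type*} [Fintype I] (cf : I → I → ℕ) (J : ℕ) (hJ : ∀ i j, cf i j < J)
    (hcol : ∀ i i' j j', i ≠ i' → j ≠ j' → cf i j = cf i j' → cf i' j = cf i' j' → False)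
    (f : ℕ → ℝ) :
    (∑ i, ∑ j, f (cf i j)) ^ 2 ≤
      2 * ((Fintype.card I : ℕ) : ℝ) ^ 3 * ∑ c ∈ Finset.range J, f c ^ 2 := by
  classical
  set M : ℝ := ((Fintype.card I : ℕ) : ℝ) with hM
  have hM0 : 0 ≤ M := by positivity
  let n : I → ℕ → ℝ := fun i c => ∑ j, if cf i j = c then (1:ℝ) else 0
  have h1 : ∀ i, ∑ j, f (cf i j) = ∑ c ∈ Finset.range J, n i c * f c := by
    intro i
    simp only [n, Finset.sum_mul]
    rw [Finset.sum_comm]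
    refine Finset.sum_congr rfl fun j _ => ?_
    simp only [ite_mul, one_mul, zero_mul]
    rw [Finset.sum_ite_eq, if_pos (Finset.mem_range.mpr (hJ i j))]
  have h2 : ∀ i, ∑ c ∈ Finset.range J, n i c ^ 2 =
      ∑ j, ∑ j', if cf i j = cf i j' then (1:ℝ) else 0 := by
    intro i
    simp only [n, sq, Finset.sum_mul_sum]
    rw [Finset.sum_comm]
    refine Finset.sum_congr rfl fun j _ => ?_
    rw [Finset.sum_comm]
    refine Finset.sum_congr rfl fun j' _ => ?_
    simp only [ite_mul, one_mul, zero_mul]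
    rw [Finset.sum_ite_eq, if_pos (Finset.mem_range.mpr (hJ i j))]
    simp only [eq_comm]
  have h3 : ∑ i, ∑ c ∈ Finset.range J, n i c ^ 2 ≤ 2 * M ^ 2 := by
    simp only [h2]
    rw [Finset.sum_comm]
    have h4 : ∀ j j' : I, ∑ i, (if cf i j = cf i j' then (1:ℝ) else 0) ≤
        (if j = j' then M else 0) + 1 := by
      intro j j'
      by_cases hjj : j = j'
      · subst hjj; simp [hM]
      · rw [if_neg hjj, zero_add, Finset.sum_boole]
        have : (Finset.univ.filter (fun i => cf i j = cf i j')).card ≤ 1 := by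
          rw [Finset.card_le_one]
          intro i hi i' hi'
          by_contra hne
          exact hcol i i' j j' hne hjj (Finset.mem_filter.mp hi).2 (Finset.mem_filter.mp hi').2
        exact_mod_cast this
    calc ∑ j, ∑ i, ∑ j', (if cf i j = cf i j' then (1:ℝ) else 0)
        = ∑ j, ∑ j', ∑ i, (if cf i j = cf i j' then (1:ℝ) else 0) :=
          Finset.sum_congr rfl fun j _ => Finset.sum_comm
      _ ≤ ∑ j : I, ∑ j' : I, ((if j = j' then M else 0) + 1) :=
          Finset.sum_le_sum fun j _ => Finset.sum_le_sum fun j' _ => h4 j j'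
      _ = 2 * M ^ 2 := by
          simp only [Finset.sum_add_distrib, Finset.sum_ite_eq, Finset.mem_univ, if_true,
            Finset.sum_const, Finset.card_univ, nsmul_eq_mul, mul_one]
          rw [← hM]; ring
  simp only [h1]
  have h5 := Finset.sum_mul_sq_le_sq_mul_sq ((Finset.univ : Finset I) ×ˢ Finset.range J)
    (fun p => n p.1 p.2) (fun p => f p.2)
  rw [Finset.sum_product, Finset.sum_product, Finset.sum_product] at h5
  simp only [Finset.sum_const, Finset.card_univ, nsmul_eq_mul] at h5
  refine h5.trans ?_
  rw [← hM]
  have h6 : 0 ≤ ∑ c ∈ Finset.range J, f c ^ 2 := Finset.sum_nonneg fun _ _ => sq_nonneg _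
  calc _ ≤ 2 * M ^ 2 * (M * ∑ c ∈ Finset.range J, f c ^ 2) := by gcongr
    _ = _ := by ring

theorem norm_sum_ee_close {ι : Type*} [Fintype ι] (x y : ι → ℝ) (h : ℝ) (hxy : ∀ l, |x l - y l| ≤ h) :
    ‖∑ l, ee (x l)‖ ≤ ‖∑ l, ee (y l)‖ + ((Fintype.card ι : ℕ) : ℝ) * (2 * π * h) := by
  have h1 : ∑ l, ee (x l) = ∑ l, ee (y l) + ∑ l, (ee (x l) - ee (y l)) := by
    rw [Finset.sum_sub_distrib]; ring
  rw [h1]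
  refine (norm_add_le _ _).trans ?_
  gcongr
  refine (norm_sum_le _ _).trans ?_
  refine (Finset.sum_le_sum (g := fun _ => 2 * π * h) fun l _ => ?_).trans ?_
  · refine (norm_ee_sub _ _).trans ?_
    have := hxy l
    have hp := Real.pi_pos
    gcongr
  · rw [Finset.sum_const, Finset.card_univ, nsmul_eq_mul]

theorem core {I ι : Type*} [Fintype I] [Fintype ι] [Nonempty I] [Nonempty ι]
    (u : I → I → ι → ℝ) (A base : I → I → ℝ) (w : ι → ℝ) (w0 : ℝ) {ε ε1 g η : ℝ} (K J N : ℕ)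
    (hN : 1 ≤ N) (hε1 : 0 < ε1) (hg : 0 < g)
    (hu : ∀ i j l, |u i j l - base i j - A i j * (w l - w0)| ≤ η)
    (hη : N * η ≤ 1 / (128 * N)) (hA0 : ∀ i j, 0 ≤ A i j) (hAJ : ∀ i j, N * A i j < g * J)
    (hcol : ∀ i i' j j', i ≠ i' → j ≠ j' → |A i j - A i j'| < g → |A i' j - A i' j'| < g → False)
    (hw : ∀ l, |w l - w0| ≤ ε) (hgε : g * ε ≤ 1 / (128 * N))
    (hsep : ∀ l l', l ≠ l' → ε1 ≤ |w l - w l'|) (hK : ∀ l l', |w l - w l'| ≤ K * ε1)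
    (hgK : g * (K * ε1) ≤ 1 / 2)
    (h512 : 512 * (N:ℝ)^2 * (J + 1 / (g * ε1) * (1 + Real.log K)) ≤
      ((Fintype.card I : ℕ) : ℝ) * ((Fintype.card ι : ℕ) : ℝ)) :
    ∃ i j l, dni (u i j l) ^ 2 ≤ 1 / N := by
  classical
  have hNr : (1:ℝ) ≤ N := by exact_mod_cast hN
  obtain ⟨X, hX⟩ : ∃ X : ℝ, X = ((Fintype.card ι : ℕ) : ℝ) := ⟨_, rfl⟩
  obtain ⟨M, hM⟩ : ∃ M : ℝ, M = ((Fintype.card I : ℕ) : ℝ) := ⟨_, rfl⟩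
  have hX0 : 1 ≤ X := by rw [hX]; exact_mod_cast Fintype.card_pos
  have hM0 : 1 ≤ M := by rw [hM]; exact_mod_cast Fintype.card_pos
  suffices hmain : ∀ k : ℕ, 1 ≤ k → k < N → ‖∑ p : I × I × ι, ee (k * u p.1 p.2.1 p.2.2)‖ ≤
      ((Fintype.card (I × I × ι) : ℕ) : ℝ) / (4 * N) by
    obtain ⟨⟨i, j, l⟩, hω⟩ := fejer (Ω := I × I × ι) (fun p => u p.1 p.2.1 p.2.2) N hN hmain
    exact ⟨i, j, l, hω⟩
  intro k hk1 hkN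
  have hk1r : (1:ℝ) ≤ k := by exact_mod_cast hk1
  have hkNr : (k:ℝ) ≤ N := by exact_mod_cast hkN.le
  have hkA : ∀ i j, 0 ≤ k * A i j / g := fun i j => div_nonneg (mul_nonneg (by positivity) (hA0 i j)) hg.le
  let cf : I → I → ℕ := fun i j => ⌊k * A i j / g⌋₊
  have hc1 : ∀ i j, g * cf i j ≤ k * A i j := by
    intro i j
    have := Nat.floor_le (hkA i j)
    rw [le_div_iff₀ hg] at this
    simpa only [cf, mul_comm] using this
  have hc2 : ∀ i j, k * A i j < g * cf i j + g := by
    intro i j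
    have := Nat.lt_floor_add_one (k * A i j / g)
    rw [div_lt_iff₀ hg] at this
    simp only [cf]; linarith
  let F : ℕ → ℝ := fun c => ‖∑ l, ee (g * c * (w l - w0))‖
  have hcJ : ∀ i j, cf i j < J := by
    intro i j
    have h1 : g * (cf i j : ℝ) < g * J := by
      refine (hc1 i j).trans_lt (lt_of_le_of_lt ?_ (hAJ i j))
      exact mul_le_mul_of_nonneg_right hkNr (hA0 i j)
    have := lt_of_mul_lt_mul_left h1 hg.le
    exact_mod_cast this
  have hclose : ∀ i j j', cf i j = cf i j' → |A i j - A i j'| < g := by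
    intro i j j' h
    have a1 := hc1 i j
    have a2 := hc2 i j
    have a3 := hc1 i j'
    have a4 := hc2 i j'
    rw [h] at a1 a2
    have : |(k:ℝ) * (A i j - A i j')| < g := by rw [abs_lt]; constructor <;> linarith
    rw [abs_mul, abs_of_pos (by linarith)] at this
    have h0 := abs_nonneg (A i j - A i j')
    nlinarith only [this, h0, hk1r]
  have hE := energy cf J hcJ (fun i i' j j' h1 h2 h3 h4 =>
    hcol i i' j j' h1 h2 (hclose _ _ _ h3) (hclose _ _ _ h4)) F
  have hLS := large_sieve w w0 hε1 K J hg hsep hK hgK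
  rw [← hM, ← hX] at h512
  rw [← hM] at hE
  rw [← hX] at hLS
  set Q : ℝ := J + 1 / (g * ε1) * (1 + Real.log K) with hQ
  have hin : ∀ i j, ‖∑ l, ee (k * u i j l)‖ ≤ F (cf i j) + X / (8 * N) := by
    intro i j
    have h1 : ‖∑ l, ee (k * u i j l)‖ ≤
        ‖∑ l, ee (k * base i j + g * cf i j * (w l - w0))‖ + X * (2 * π * (1 / (64 * N))) := by
      rw [hX]
      apply norm_sum_ee_close
      intro l
      have e : k * u i j l - (k * base i j + g * cf i j * (w l - w0)) =
        k * (u i j l - base i j - A i j * (w l - w0)) + (k * A i j - g * cf i j) * (w l - w0) := by ring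
      rw [e]
      refine (abs_add_le _ _).trans ?_
      rw [abs_mul, abs_mul, abs_of_pos (by linarith : (0:ℝ) < k)]
      have b1 : (k:ℝ) * |u i j l - base i j - A i j * (w l - w0)| ≤ N * η :=
        mul_le_mul hkNr (hu i j l) (abs_nonneg _) (by linarith)
      have b2 : |k * A i j - g * cf i j| * |w l - w0| ≤ g * ε := by
        apply mul_le_mul _ (hw l) (abs_nonneg _) hg.le
        rw [abs_le]; constructor <;> linarith [hc1 i j, hc2 i j]
      have b3 : 1 / (64 * (N:ℝ)) = 1 / (128 * N) + 1 / (128 * N) := by field_simp; norm_num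
      linarith
    have h2 : ‖∑ l, ee (k * base i j + g * cf i j * (w l - w0))‖ = F (cf i j) := by
      simp only [F, ee_add, ← Finset.mul_sum, norm_mul, norm_ee, one_mul]
    rw [h2] at h1
    refine h1.trans ?_
    gcongr
    have hpi := Real.pi_lt_four
    have : 2 * π * (1 / (64 * (N:ℝ))) ≤ 2 * 4 * (1 / (64 * N)) := by gcongr
    calc X * (2 * π * (1 / (64 * (N:ℝ)))) ≤ X * (2 * 4 * (1 / (64 * N))) := by gcongr
      _ = X / (8 * N) := by field_simp; norm_num
  have hcard : ((Fintype.card (I × I × ι) : ℕ) : ℝ) = M * (M * X) := by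
    rw [Fintype.card_prod, Fintype.card_prod, hM, hX]; push_cast; ring
  rw [hcard, Fintype.sum_prod_type]
  simp only [Fintype.sum_prod_type]
  have hS : (∑ i, ∑ j, F (cf i j)) ≤ M * (M * X) / (16 * N) := by
    apply le_of_sq_le_sq _ (by positivity)
    refine hE.trans ?_
    calc 2 * M ^ 3 * ∑ c ∈ Finset.range J, F c ^ 2 ≤ 2 * M ^ 3 * (X * Q) := by gcongr
      _ = (M ^ 3 * X) / (256 * N ^ 2) * (512 * N ^ 2 * Q) := by field_simp; ring
      _ ≤ (M ^ 3 * X) / (256 * N ^ 2) * (M * X) := by gcongr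
      _ = _ := by field_simp; norm_num
  calc ‖∑ i, ∑ j, ∑ l, ee (k * u i j l)‖ ≤ ∑ i, ∑ j, ‖∑ l, ee (k * u i j l)‖ := by
        refine (norm_sum_le _ _).trans (Finset.sum_le_sum fun i _ => norm_sum_le _ _)
    _ ≤ ∑ i, ∑ j, (F (cf i j) + X / (8 * N)) :=
        Finset.sum_le_sum fun i _ => Finset.sum_le_sum fun j _ => hin i j
    _ = (∑ i, ∑ j, F (cf i j)) + M * (M * (X / (8 * N))) := by
        simp only [Finset.sum_add_distrib, Finset.sum_const, Finset.card_univ, nsmul_eq_mul, hM]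
    _ ≤ M * (M * X) / (16 * N) + M * (M * (X / (8 * N))) := by gcongr
    _ = 3 / 16 * (M * (M * X) / N) := by field_simp; norm_num
    _ ≤ 1 / 4 * (M * (M * X) / N) :=
        mul_le_mul_of_nonneg_right (by norm_num) (by positivity)
    _ = _ := by field_simp


/-- vectors with slope close to `y` -/
structure VO (c0 V y P1 P2 : ℝ) : Prop where
  l1 : c0 * V ≤ P1
  u1 : P1 ≤ 9 * V
  l2 : c0 * V ≤ P2
  u2 : P2 ≤ 3 * V
  sl : |P1 - y * P2| ≤ 4 / (c0 * V)

theorem VO_p {c0 V y : ℝ} {a b c d : ℤ} (hc0 : 0 < c0) (hc01 : c0 ≤ 1 / 8) (hV : 0 < V)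
    (hg : GM c0 V y a b c d) {κ : ℝ} (h0 : 0 ≤ κ) (h1 : κ ≤ 1) :
    VO c0 V y (a + κ * b) (c + κ * d) := by
  obtain ⟨det, hcl, hcu, hd1, hdc, hdl, e1, e2, hac, hbd, hab, ha3, hb4⟩ := hg
  have hd1' : (1:ℝ) ≤ d := by exact_mod_cast hd1
  have hdc' : (d:ℝ) ≤ c := by exact_mod_cast hdc
  have hac' : (c:ℝ) ≤ a := by exact_mod_cast hac
  have hbd' : (d:ℝ) ≤ b := by exact_mod_cast hbd
  have hab' : (b:ℝ) ≤ a := by exact_mod_cast hab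
  have ha3' : (a:ℝ) ≤ 3 * c := by exact_mod_cast ha3
  have hcV : 0 < c0 * V := by positivity
  have kb : κ * b ≤ b := by nlinarith only [h1, hbd', hd1']
  have kb0 : 0 ≤ κ * b := mul_nonneg h0 (by linarith)
  have kd : κ * d ≤ d := by nlinarith only [h1, hd1']
  have kd0 : 0 ≤ κ * d := mul_nonneg h0 (by linarith)
  refine ⟨by linarith, by linarith, by linarith, by linarith, ?_⟩
  have e : a + κ * b - y * (c + κ * d) = -(c * y - a) - κ * (d * y - b) := by ring
  rw [e]
  refine (abs_sub _ _).trans ?_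
  rw [abs_neg, abs_mul, abs_of_nonneg h0]
  have f1 : 1 / V ≤ 1 / (c0 * V) := by
    apply one_div_le_one_div_of_le hcV; nlinarith only [hV, hc01]
  have f2 : 2 / (c:ℝ) ≤ 2 / (c0 * V) := by gcongr
  have f3 : κ * |d * y - b| ≤ 1 * |d * y - b| := by gcongr
  have f4 : 4 / (c0 * V) = 1 / (c0 * V) + 2 / (c0 * V) + 1 / (c0 * V) := by ring
  have f5 : 0 < 1 / (c0 * V) := by positivity
  linarith

theorem VO_q {c0 V y : ℝ} {a b c d : ℤ} (hc0 : 0 < c0) (hc01 : c0 ≤ 1 / 8) (hV : 0 < V)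
    (hg : GM c0 V y a b c d) {w : ℝ} (h0 : 1 ≤ w) (h1 : w ≤ 2) :
    VO c0 V y (a * w + b) (c * w + d) := by
  obtain ⟨det, hcl, hcu, hd1, hdc, hdl, e1, e2, hac, hbd, hab, ha3, hb4⟩ := hg
  have hd1' : (1:ℝ) ≤ d := by exact_mod_cast hd1
  have hdc' : (d:ℝ) ≤ c := by exact_mod_cast hdc
  have hac' : (c:ℝ) ≤ a := by exact_mod_cast hac
  have hbd' : (d:ℝ) ≤ b := by exact_mod_cast hbd
  have hab' : (b:ℝ) ≤ a := by exact_mod_cast hab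
  have ha3' : (a:ℝ) ≤ 3 * c := by exact_mod_cast ha3
  have hcV : 0 < c0 * V := by positivity
  have kb : a * w ≤ a * 2 := mul_le_mul_of_nonneg_left h1 (by linarith)
  have kb0 : a * 1 ≤ a * w := mul_le_mul_of_nonneg_left h0 (by linarith)
  have kd : c * w ≤ c * 2 := mul_le_mul_of_nonneg_left h1 (by linarith)
  have kd0 : c * 1 ≤ c * w := mul_le_mul_of_nonneg_left h0 (by linarith)
  refine ⟨by linarith, by linarith, by linarith, by linarith, ?_⟩
  have e : a * w + b - y * (c * w + d) = -(w * (c * y - a)) - (d * y - b) := by ring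
  rw [e]
  refine (abs_sub _ _).trans ?_
  rw [abs_neg, abs_mul, abs_of_nonneg (by linarith : 0 ≤ w)]
  have f1 : 1 / V ≤ 1 / (c0 * V) := by
    apply one_div_le_one_div_of_le hcV; nlinarith only [hV, hc01]
  have f2 : 2 / (c:ℝ) ≤ 2 / (c0 * V) := by gcongr
  have f3 : w * |c * y - a| ≤ 2 * |c * y - a| := by gcongr
  have f4 : 4 / (c0 * V) = 2 * (1 / (c0 * V)) + 2 / (c0 * V) := by ring
  linarith

theorem VO_wedge {c0 V y y' P1 P2 P1' P2' ρ : ℝ} (hc0 : 0 < c0) (hV : 0 < V) (hρ : 0 < ρ)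
    (hVρ : 48 / c0 ^ 3 ≤ V ^ 2 * ρ)
    (h : VO c0 V y P1 P2) (h' : VO c0 V y' P1' P2') (hy : ρ ≤ |y - y'|) :
    c0 ^ 2 * V ^ 2 * ρ / 2 ≤ |P1 * P2' - P2 * P1'| := by
  obtain ⟨l1, u1, l2, u2, sl⟩ := h
  obtain ⟨l1', u1', l2', u2', sl'⟩ := h'
  have hcV : 0 < c0 * V := by positivity
  have e : P2 * P2' * (y - y') = (P1 * P2' - P2 * P1') - (P1 - y * P2) * P2' + P2 * (P1' - y' * P2') := by
    ring
  have e2 : |P2 * P2' * (y - y')| ≤ |P1 * P2' - P2 * P1'| + |P1 - y * P2| * P2' + P2 * |P1' - y' * P2'| := by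
    rw [e]
    refine (abs_add_le _ _).trans ?_
    have := abs_sub (P1 * P2' - P2 * P1') ((P1 - y * P2) * P2')
    rw [abs_mul (P1 - y * P2), abs_of_nonneg (by linarith : 0 ≤ P2')] at this
    rw [abs_mul P2, abs_of_nonneg (by linarith : 0 ≤ P2)]
    linarith
  have b1 : |P1 - y * P2| * P2' ≤ 4 / (c0 * V) * (3 * V) := by
    gcongr; linarith
  have b2 : P2 * |P1' - y' * P2'| ≤ 3 * V * (4 / (c0 * V)) := by gcongr
  have b3 : 4 / (c0 * V) * (3 * V) = 12 / c0 := by field_simp; norm_num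
  have b4 : 3 * V * (4 / (c0 * V)) = 12 / c0 := by field_simp; norm_num
  have b5 : (c0 * V) * (c0 * V) * ρ ≤ |P2 * P2' * (y - y')| := by
    rw [abs_mul, abs_mul, abs_of_nonneg (by linarith : 0 ≤ P2'), abs_of_nonneg (by linarith : 0 ≤ P2)]
    have : (c0 * V) * (c0 * V) ≤ P2 * P2' := mul_le_mul l2 l2' hcV.le (by linarith)
    exact mul_le_mul this hy hρ.le (mul_nonneg (by linarith) (by linarith))
  have b6 : c0 ^ 2 * (48 / c0 ^ 3) ≤ c0 ^ 2 * (V ^ 2 * ρ) := by gcongr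
  have b7 : c0 ^ 2 * (48 / c0 ^ 3) = 48 / c0 := by field_simp
  have b8 : 48 / c0 = 2 * (12 / c0 + 12 / c0) := by ring
  linarith

theorem collision {c0 V y y' P1 P2 P1' P2' x x' Q1 Q2 Q1' Q2' ρ t : ℝ} (hc0 : 0 < c0) (hV : 0 < V)
    (hρ : 0 < ρ) (hVρ : 48 / c0 ^ 3 ≤ V ^ 2 * ρ)
    (h : VO c0 V y P1 P2) (h' : VO c0 V y' P1' P2') (hy : ρ ≤ |y - y'|)
    (g : VO c0 V x Q1 Q2) (g' : VO c0 V x' Q1' Q2') (hx : ρ ≤ |x - x'|)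
    (t1 : |(P1 * Q1 + P2 * Q2) - (P1 * Q1' + P2 * Q2')| ≤ t)
    (t2 : |(P1' * Q1 + P2' * Q2) - (P1' * Q1' + P2' * Q2')| ≤ t) :
    c0 ^ 4 * V ^ 2 * ρ ^ 2 ≤ 720 * t := by
  have w1 := VO_wedge hc0 hV hρ hVρ h h' hy
  have w2 := VO_wedge hc0 hV hρ hVρ g g' hx
  obtain ⟨l1, u1, l2, u2, -⟩ := h
  obtain ⟨l1', u1', l2', u2', -⟩ := h'
  obtain ⟨m1, v1, m2, v2, -⟩ := g
  have hcV : 0 < c0 * V := by positivity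
  have t0 : 0 ≤ t := (abs_nonneg _).trans t1
  set D := |P1 * P2' - P2 * P1'| with hD
  have a1 : |Q1 - Q1'| * D ≤ t * (6 * V) := by
    rw [hD, ← abs_mul]
    have e : (Q1 - Q1') * (P1 * P2' - P2 * P1') =
      P2' * ((P1 * Q1 + P2 * Q2) - (P1 * Q1' + P2 * Q2')) -
      P2 * ((P1' * Q1 + P2' * Q2) - (P1' * Q1' + P2' * Q2')) := by ring
    rw [e]
    refine (abs_sub _ _).trans ?_
    rw [abs_mul, abs_mul, abs_of_nonneg (by linarith : 0 ≤ P2'), abs_of_nonneg (by linarith : 0 ≤ P2)]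
    have c1 := mul_le_mul u2' t1 (abs_nonneg _) (by linarith)
    have c2 := mul_le_mul u2 t2 (abs_nonneg _) (by linarith)
    linarith
  have a2 : |Q2 - Q2'| * D ≤ t * (18 * V) := by
    rw [hD, ← abs_mul]
    have e : (Q2 - Q2') * (P1 * P2' - P2 * P1') =
      P1 * ((P1' * Q1 + P2' * Q2) - (P1' * Q1' + P2' * Q2')) -
      P1' * ((P1 * Q1 + P2 * Q2) - (P1 * Q1' + P2 * Q2')) := by ring
    rw [e]
    refine (abs_sub _ _).trans ?_
    rw [abs_mul, abs_mul, abs_of_nonneg (by linarith : 0 ≤ P1'), abs_of_nonneg (by linarith : 0 ≤ P1)]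
    have c1 := mul_le_mul u1' t1 (abs_nonneg _) (by linarith)
    have c2 := mul_le_mul u1 t2 (abs_nonneg _) (by linarith)
    linarith
  have a3 : |Q1 * Q2' - Q2 * Q1'| ≤ 3 * V * |Q1 - Q1'| + 9 * V * |Q2 - Q2'| := by
    have e : Q1 * Q2' - Q2 * Q1' = Q2 * (Q1 - Q1') - Q1 * (Q2 - Q2') := by ring
    rw [e]
    refine (abs_sub _ _).trans ?_
    rw [abs_mul, abs_mul, abs_of_nonneg (by linarith : 0 ≤ Q2), abs_of_nonneg (by linarith : 0 ≤ Q1)]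
    have c1 := mul_le_mul_of_nonneg_right v2 (abs_nonneg (Q1 - Q1'))
    have c2 := mul_le_mul_of_nonneg_right v1 (abs_nonneg (Q2 - Q2'))
    linarith
  set k := c0 ^ 2 * V ^ 2 * ρ / 2 with hk
  have hk0 : 0 < k := by positivity
  have a4 : k * k ≤ 180 * V ^ 2 * t := by
    calc k * k ≤ (3 * V * |Q1 - Q1'| + 9 * V * |Q2 - Q2'|) * D := by
          apply mul_le_mul (w2.trans a3) w1 hk0.le
          have := abs_nonneg (Q1 - Q1'); have := abs_nonneg (Q2 - Q2'); positivity
      _ = 3 * V * (|Q1 - Q1'| * D) + 9 * V * (|Q2 - Q2'| * D) := by ring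
      _ ≤ 3 * V * (t * (6 * V)) + 9 * V * (t * (18 * V)) := by gcongr
      _ = _ := by ring
  have a5 : V ^ 2 * (c0 ^ 4 * V ^ 2 * ρ ^ 2) ≤ V ^ 2 * (720 * t) := by
    have : k * k = V ^ 2 * (c0 ^ 4 * V ^ 2 * ρ ^ 2) / 4 := by rw [hk]; ring
    linarith
  exact le_of_mul_le_mul_left a5 (by positivity)

/-- inverse square to linear -/
theorem inv_sq_close {C lo hi S S' g : ℝ} (hC : 0 < C) (hlo : 0 < lo)
    (h1 : lo ≤ S) (h2 : S ≤ hi) (h1' : lo ≤ S') (h2' : S' ≤ hi)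
    (h : |C / S ^ 2 - C / S' ^ 2| ≤ g) : |S - S'| ≤ g * hi ^ 4 / (2 * lo * C) := by
  have hS : 0 < S := by linarith
  have hS' : 0 < S' := by linarith
  have e : C / S ^ 2 - C / S' ^ 2 = (S' - S) * (C * (S + S') / (S ^ 2 * S' ^ 2)) := by
    field_simp; ring
  rw [e, abs_mul, abs_sub_comm, abs_of_pos (by positivity : 0 < C * (S + S') / (S ^ 2 * S' ^ 2))] at h
  have hb : C * (2 * lo) / (hi ^ 2 * hi ^ 2) ≤ C * (S + S') / (S ^ 2 * S' ^ 2) := by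
    gcongr; linarith
  have h3 : |S - S'| * (C * (2 * lo) / (hi ^ 2 * hi ^ 2)) ≤ g :=
    (mul_le_mul_of_nonneg_left hb (abs_nonneg _)).trans h
  have hhi : 0 < hi := by linarith
  rw [le_div_iff₀ (by positivity)]
  calc |S - S'| * (2 * lo * C) = |S - S'| * (C * (2 * lo) / (hi ^ 2 * hi ^ 2)) * hi ^ 4 := by
        field_simp
    _ ≤ g * hi ^ 4 := by gcongr

theorem psi_lin {X Y w w0 ψ ψ0 S T : ℝ} (hX : 0 ≤ X) (hY : 0 < Y) (hw : 1 ≤ w) 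
    (hS : S = X * w0 + Y) (hT : T = X * w + Y) (hSp : 0 < S) (h : ψ - ψ0 = -(w - w0) / (T * S)) :
    |ψ - ψ0 + (w - w0) / S ^ 2| ≤ (w - w0) ^ 2 / S ^ 2 := by
  have hTX : X ≤ T := by rw [hT]; nlinarith only [hX, hY, hw]
  have hT0 : 0 < T := by rw [hT]; nlinarith only [hX, hY, hw]
  have e : ψ - ψ0 + (w - w0) / S ^ 2 = (w - w0) ^ 2 / S ^ 2 * (X / T) := by
    rw [h]; field_simp; rw [hT, hS]; ring
  rw [e, abs_of_nonneg (by positivity)]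
  have : X / T ≤ 1 := by rw [div_le_one hT0]; exact hTX
  exact mul_le_of_le_one_right (by positivity) this

theorem zpoint {c0 V y y' : ℝ} {a b c d a' b' c' d' : ℤ} (hc0 : 0 < c0) (hc01 : c0 ≤ 1 / 8)
    (hy : BadC c0 y) (hg : GM c0 V y a b c d) (hy' : BadC c0 y') (hg' : GM c0 V y' a' b' c' d')
    {w κ : ℝ} (hw1 : 1 ≤ w) (hw2 : w ≤ 2) (hw : BadC c0 w) (h0 : 0 ≤ κ) :
    ∃ z, 1 ≤ z ∧ z ≤ 6 / c0 ∧ BadC (c0 / 102) z ∧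
      1 / (z + κ) = (b * (a' * w + b') + d * (c' * w + d')) /
        ((a + κ * b) * (a' * w + b') + (c + κ * d) * (c' * w + d')) := by
  have hin := FW_bad hc0 hc01 hy' hg' hw1 hw2 hw
  have hd1 : (1:ℝ) ≤ d := by exact_mod_cast hg.hd1
  have hdc : (d:ℝ) ≤ c := by exact_mod_cast hg.hdc
  have hac : (c:ℝ) ≤ a := by exact_mod_cast hg.hac
  have hbd : (d:ℝ) ≤ b := by exact_mod_cast hg.hbd
  have hab : (b:ℝ) ≤ a := by exact_mod_cast hg.hab
  have ha3 : (a:ℝ) ≤ 3 * c := by exact_mod_cast hg.ha3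
  have hdl := hg.hdl
  have hd1' : (1:ℝ) ≤ d' := by exact_mod_cast hg'.hd1
  have hdc' : (d':ℝ) ≤ c' := by exact_mod_cast hg'.hdc
  have hac' : (c':ℝ) ≤ a' := by exact_mod_cast hg'.hac
  have hbd' : (d':ℝ) ≤ b' := by exact_mod_cast hg'.hbd
  have ha3' : (a':ℝ) ≤ 3 * c' := by exact_mod_cast hg'.ha3
  have hb4' : (b':ℝ) ≤ 4 * d' := by exact_mod_cast hg'.hb4
  have m1 : (c':ℝ) * w ≤ a' * w := mul_le_mul_of_nonneg_right hac' (by linarith)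
  have m2 : (a':ℝ) * w ≤ 3 * c' * w := mul_le_mul_of_nonneg_right ha3' (by linarith)
  have m3 : 0 < (c':ℝ) * w := mul_pos (by linarith) (by linarith)
  obtain ⟨n, hn⟩ : ∃ n : ℝ, n = a' * w + b' := ⟨_, rfl⟩
  obtain ⟨m, hm⟩ : ∃ m : ℝ, m = c' * w + d' := ⟨_, rfl⟩
  rw [← hn, ← hm] at hin ⊢
  have hm0 : 0 < m := by linarith
  have hnm : m ≤ n := by linarith
  have hnm4 : n ≤ 4 * m := by linarith
  obtain ⟨ζ, hζ⟩ : ∃ ζ : ℝ, ζ = n / m := ⟨_, rfl⟩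
  have hζn : n = ζ * m := by rw [hζ]; field_simp
  rw [← hζ] at hin
  have hζ1 : 1 ≤ ζ := by rw [hζ, le_div_iff₀ hm0]; linarith
  have hζ4 : ζ ≤ 4 := by rw [hζ, div_le_iff₀ hm0]; linarith
  have hT := TR_bad hc0 hc01 hy hg hζ1 hζ4 hin (by linarith)
  have hden : 0 < (b:ℝ) * ζ + d := by
    have : 0 < (b:ℝ) * ζ := mul_pos (by linarith) (by linarith)
    linarith
  have k1 : (b:ℝ) * ζ ≤ a * ζ := mul_le_mul_of_nonneg_right hab (by linarith)
  refine ⟨(a * ζ + c) / (b * ζ + d), ?_, ?_, ?_, ?_⟩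
  · rw [le_div_iff₀ hden]; linarith
  · rw [div_le_div_iff₀ hden hc0]
    have k2 : c0 * (c:ℝ) ≤ 2 * d := by linarith
    have k3 : c0 * (a:ℝ) ≤ 6 * b := by
      have := mul_le_mul_of_nonneg_left ha3 hc0.le
      linarith
    have k4 : c0 * (a:ℝ) * ζ ≤ 6 * b * ζ := mul_le_mul_of_nonneg_right k3 (by linarith)
    linarith
  · refine hT.mono ?_
    rw [le_min_iff]; constructor <;> linarith
  · have p1 : 0 < (a + κ * b) * n + (c + κ * d) * m := by
      have q1 : 0 ≤ κ * b := mul_nonneg h0 (by linarith)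
      have q2 : 0 ≤ κ * d := mul_nonneg h0 (by linarith)
      have q3 : 0 < (a + κ * b) * n := mul_pos (by linarith) (by linarith)
      have q4 : 0 < (c + κ * d) * m := mul_pos (by linarith) (by linarith)
      linarith
    have e1 : (a * ζ + c) / (b * ζ + d) + κ = ((a + κ * b) * n + (c + κ * d) * m) / (m * (b * ζ + d)) := by
      rw [hζn, div_add' _ _ _ hden.ne', div_eq_div_iff hden.ne' (mul_pos hm0 hden).ne']; ring
    rw [e1, one_div_div, hζn]
    congr 1; ring

theorem psi_diff {a b c d a' b' c' d' κ w w0 : ℝ} (hdet : a * d - b * c = 1)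
    (hdet' : a' * d' - b' * c' = 1)
    (hT : 0 < (a + κ * b) * (a' * w + b') + (c + κ * d) * (c' * w + d'))
    (hS : 0 < (a + κ * b) * (a' * w0 + b') + (c + κ * d) * (c' * w0 + d')) :
    (b * (a' * w + b') + d * (c' * w + d')) /
        ((a + κ * b) * (a' * w + b') + (c + κ * d) * (c' * w + d')) -
    (b * (a' * w0 + b') + d * (c' * w0 + d')) /
        ((a + κ * b) * (a' * w0 + b') + (c + κ * d) * (c' * w0 + d')) =
    -(w - w0) / (((a + κ * b) * (a' * w + b') + (c + κ * d) * (c' * w + d')) *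
      ((a + κ * b) * (a' * w0 + b') + (c + κ * d) * (c' * w0 + d'))) := by
  rw [div_sub_div _ _ hT.ne' hS.ne']
  congr 1
  linear_combination (-(w - w0) * (a' * d' - b' * c')) * hdet - (w - w0) * hdet'


theorem ev_pow (K : ℝ) : ∃ ν0 : ℕ, ∀ ν : ℕ, ν0 ≤ ν → K * (1 + ν) ≤ (39369:ℝ) ^ ν := by
  obtain ⟨m, hm⟩ := exists_nat_ge (|K| + 1)
  refine ⟨m + 2, fun ν hν => ?_⟩
  have h1 : ∀ n : ℕ, ((n:ℝ) + 1) ≤ 2 ^ n := by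
    intro n
    have : n + 1 ≤ 2 ^ n := Nat.lt_two_pow_self
    exact_mod_cast this
  have hK : K ≤ (2:ℝ) ^ ν := by
    have h2 := h1 ν
    have h3 : (m:ℝ) + 2 ≤ ν := by exact_mod_cast hν
    have := le_abs_self K
    linarith
  have h4 := h1 ν
  calc K * (1 + ν) ≤ 2 ^ ν * 2 ^ ν := mul_le_mul hK (by linarith) (by positivity) (by positivity)
    _ = 4 ^ ν := by rw [← mul_pow]; norm_num
    _ ≤ 39369 ^ ν := by gcongr; norm_num

theorem thmH : ∃ c2 Z : ℝ, ∃ ν0 : ℕ, 0 < c2 ∧ c2 ≤ 1 ∧ 1 ≤ Z ∧ ∀ ν : ℕ, ν0 ≤ ν → ∀ C κ ω : ℝ,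
    (39369:ℝ) ^ (43 * ν) ≤ C → 0 ≤ κ → κ ≤ 1 → ∃ z, 1 ≤ z ∧ z ≤ Z ∧ BadC c2 z ∧
      dni (C / (z + κ) - ω) ^ 2 ≤ 1 / (39369:ℝ) ^ ν := by
  obtain ⟨c0, hc0, hc01, hcl⟩ := clusters
  have hlogℓ : 0 < Real.log 39369 := Real.log_pos (by norm_num)
  obtain ⟨K3, hK3⟩ : ∃ K3 : ℝ, K3 = 10 ^ 12 / c0 ^ 6 + 10 ^ 7 * Real.log 39369 := ⟨_, rfl⟩
  obtain ⟨ν0, hν0⟩ := ev_pow K3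
  refine ⟨c0 / 102, 6 / c0, ν0, by positivity, by linarith, ?_, ?_⟩
  · rw [le_div_iff₀ hc0]; linarith
  intro ν hν C κ ω hC hκ0 hκ1
  have hx3 := hν0 ν hν
  obtain ⟨x, hx⟩ : ∃ x : ℝ, x = (39369:ℝ) ^ ν := ⟨_, rfl⟩
  have hpw : ∀ k : ℕ, (39369:ℝ) ^ (k * ν) = x ^ k := by
    intro k; rw [hx, ← pow_mul, mul_comm]
  rw [hpw] at hC
  rw [← hx] at hx3 ⊢
  -- size of x
  have hinv : ∀ k : ℕ, k ≤ 6 → 1 / c0 ^ k ≤ 1 / c0 ^ 6 := by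
    intro k hk
    apply one_div_le_one_div_of_le (by positivity)
    exact pow_le_pow_of_le_one hc0.le (by linarith) hk
  have i6 : 1 ≤ 1 / c0 ^ 6 := by simpa using hinv 0 (by norm_num)
  have hν0' : (0:ℝ) ≤ ν := Nat.cast_nonneg _
  have hx6 : 10 ^ 12 * (1 / c0 ^ 6) ≤ x := by
    refine le_trans ?_ hx3
    have : 10 ^ 12 * (1 / c0 ^ 6) ≤ K3 := by
      rw [hK3, mul_one_div]; linarith
    have h0 : 0 ≤ K3 := by rw [hK3]; positivity
    nlinarith only [this, h0, hν0']
  have hx1 : 1 ≤ x := by linarith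
  have hx0 : 0 < x := by linarith
  -- V
  obtain ⟨V, hV4, hVx⟩ : ∃ V : ℝ, V ^ 4 = C / x ^ 27 ∧ x ^ 4 ≤ V := by
    have hCx : x ^ 16 ≤ C / x ^ 27 := by
      rw [le_div_iff₀ (by positivity), ← pow_add]; exact hC
    have hp : (0:ℝ) ≤ C / x ^ 27 := le_trans (by positivity) hCx
    refine ⟨(C / x ^ 27) ^ ((1:ℝ) / 4), ?_, ?_⟩
    · rw [← Real.rpow_natCast, ← Real.rpow_mul hp]; norm_num
    · have : x ^ 4 = (x ^ 16) ^ ((1:ℝ) / 4) := by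
        rw [← Real.rpow_natCast x 16, ← Real.rpow_mul hx0.le, ← Real.rpow_natCast x 4]; norm_num
      rw [this]
      exact Real.rpow_le_rpow (by positivity) hCx (by norm_num)
  have hC0 : 0 < C := lt_of_lt_of_le (by positivity) hC
  have hCV : C = x ^ 27 * V ^ 4 := by rw [hV4]; field_simp
  have hxV : x ≤ V := le_trans (by
    calc x = x ^ 1 := (pow_one x).symm
      _ ≤ x ^ 4 := pow_le_pow_right₀ hx1 (by norm_num)) hVx
  have hV0 : 0 < V := by linarith
  have hV2 : 2 ≤ V := by linarith
  have hc0V : 1 < c0 * V := by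
    have h1 := hinv 1 (by norm_num)
    rw [pow_one] at h1
    have h2 : 1 / c0 < V := by linarith
    rw [div_lt_iff₀ hc0] at h2; linarith
  -- clusters
  obtain ⟨Y, hY1, hY2⟩ := hcl 0 (6 * ν)
  obtain ⟨w, hw1, hw2⟩ := hcl (15 * ν) (13 * ν)
  obtain ⟨i0⟩ : Nonempty (Fin (13 * ν) → Fin 19683) := ⟨fun _ => 0⟩
  have : Nonempty (Fin (13 * ν) → Fin 19683) := ⟨i0⟩
  have : Nonempty (Fin (6 * ν) → Fin 19683) := ⟨fun _ => 0⟩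
  have hGM : ∀ i, ∃ a b c d : ℤ, GM c0 V (Y i) a b c d := fun i =>
    GM_exists hc0 hV2 hc0V (hY1 i).1 (hY1 i).2.1 (hY1 i).2.2
  choose a b c d hG using hGM
  set w0 := w i0 with hw0
  have hw01 : 1 ≤ w0 := (hw1 i0).1
  have hw02 : w0 ≤ 2 := (hw1 i0).2.1
  have hp := fun i => VO_p hc0 hc01 hV0 (hG i) hκ0 hκ1
  have hqw := fun j l => VO_q hc0 hc01 hV0 (hG j) (hw1 l).1 (hw1 l).2.1
  have hq := fun j => hqw j i0
  rw [← hw0] at hq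
  have hz := fun i j l => zpoint hc0 hc01 (hY1 i).2.2 (hG i) (hY1 j).2.2 (hG j) (hw1 l).1 (hw1 l).2.1
    (hw1 l).2.2 hκ0
  choose z hz1 hz2 hz3 hz4 using hz
  have hVV : 0 < c0 * V := by positivity
  -- S
  obtain ⟨S, hS⟩ : ∃ S : (Fin (6 * ν) → Fin 19683) → (Fin (6 * ν) → Fin 19683) → ℝ, ∀ i j, S i j =
    (a i + κ * b i) * (a j * w0 + b j) + (c i + κ * d i) * (c j * w0 + d j) := ⟨_, fun _ _ => rfl⟩
  have hSl : ∀ i j, c0 ^ 2 * V ^ 2 ≤ S i j := by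
    intro i j
    have h1 := mul_le_mul (hp i).l1 (hq j).l1 hVV.le (hVV.le.trans (hp i).l1)
    have h2 := mul_nonneg (hVV.le.trans (hp i).l2) (hVV.le.trans (hq j).l2)
    rw [hS]; nlinarith only [h1, h2]
  have hSu : ∀ i j, S i j ≤ 90 * V ^ 2 := by
    intro i j
    have h1 := mul_le_mul (hp i).u1 (hq j).u1 (hVV.le.trans (hq j).l1) (by positivity)
    have h2 := mul_le_mul (hp i).u2 (hq j).u2 (hVV.le.trans (hq j).l2) (by positivity)
    rw [hS]; nlinarith only [h1, h2]
  have hSp : ∀ i j, 0 < S i j := fun i j => lt_of_lt_of_le (by positivity) (hSl i j)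
  have hAu : ∀ i j, C / S i j ^ 2 ≤ x ^ 27 / c0 ^ 4 := by
    intro i j
    calc C / S i j ^ 2 ≤ C / (c0 ^ 2 * V ^ 2) ^ 2 := by
          have := hSl i j
          gcongr
      _ = x ^ 27 / c0 ^ 4 := by rw [hCV]; field_simp
  -- distances
  have hw2' : ∀ l l', |w l - w l'| ≤ 1 / x ^ 15 := fun l l' => by
    have := (hw2 l l').1; rwa [hpw] at this
  have hw3' : ∀ l l', l ≠ l' → 1 / x ^ 28 ≤ |w l - w l'| := fun l l' h => by
    have := (hw2 l l').2 h
    rwa [show 15 * ν + 13 * ν = 28 * ν by ring, hpw] at this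
  have hY3 : ∀ i i', i ≠ i' → 1 / x ^ 6 ≤ |Y i - Y i'| := fun l l' h => by
    have := (hY2 l l').2 h
    rwa [zero_add, hpw] at this
  set g : ℝ := x ^ 14 / 128 with hg
  have hg0 : 0 < g := by positivity
  set J : ℕ := ⌊128 * x ^ 14 / c0 ^ 4⌋₊ + 1 with hJ
  have hJ1 : 128 * x ^ 14 / c0 ^ 4 < J := by
    rw [hJ]; push_cast; exact Nat.lt_floor_add_one _
  have hJ2 : (J:ℝ) ≤ 128 * x ^ 14 / c0 ^ 4 + 1 := by
    rw [hJ]; push_cast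
    have : ((⌊128 * x ^ 14 / c0 ^ 4⌋₊ : ℕ) : ℝ) ≤ 128 * x ^ 14 / c0 ^ 4 := Nat.floor_le (by positivity)
    linarith
  have hNx : ((39369 ^ ν : ℕ) : ℝ) = x := by rw [hx]; push_cast; rfl
  have hKx : ((39369 ^ (13 * ν) : ℕ) : ℝ) = x ^ 13 := by push_cast; exact hpw 13
  have hcore := core (fun i j l => ω - C / (z i j l + κ))
    (fun i j => C / S i j ^ 2)
    (fun i j => ω - C * ((b i * (a j * w0 + b j) + d i * (c j * w0 + d j)) / S i j)) w w0
    (ε := 1 / x ^ 15) (ε1 := 1 / x ^ 28) (g := g) (η := 1 / (x ^ 3 * c0 ^ 4))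
    (39369 ^ (13 * ν)) J (39369 ^ ν) (Nat.one_le_pow _ _ (by norm_num)) (by positivity) hg0
  rw [hNx, hKx] at hcore
  have hgoal := hcore ?_ ?_ ?_ ?_ ?_ (fun l => hw2' l i0) ?_ hw3' ?_ ?_ ?_
  · obtain ⟨i, j, l, h⟩ := hgoal
    refine ⟨z i j l, hz1 i j l, hz2 i j l, hz3 i j l, ?_⟩
    rw [← dni_neg, neg_sub]; exact h
  · -- hu
    intro i j l
    have hT : 0 < (a i + κ * b i) * (a j * w l + b j) + (c i + κ * d i) * (c j * w l + d j) := by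
      have h1 := mul_pos (hVV.trans_le (hp i).l1) (hVV.trans_le (hqw j l).l1)
      have h2 := mul_pos (hVV.trans_le (hp i).l2) (hVV.trans_le (hqw j l).l2)
      linarith
    have hS' := hSp i j
    rw [hS] at hS'
    have hdet : (a i : ℝ) * d i - b i * c i = 1 := by exact_mod_cast (hG i).det
    have hdet' : (a j : ℝ) * d j - b j * c j = 1 := by exact_mod_cast (hG j).det
    have hd := psi_diff hdet hdet' hT hS'
    rw [← hS, ← hz4 i j l] at hd
    have hbj : (1:ℝ) ≤ d j := by exact_mod_cast (hG j).hd1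
    have hbj2 : (d j:ℝ) ≤ b j := by exact_mod_cast (hG j).hbd
    have hbj3 : (d j:ℝ) ≤ c j := by exact_mod_cast (hG j).hdc
    have hbj4 : (c j:ℝ) ≤ a j := by exact_mod_cast (hG j).hac
    have hP1 := hVV.trans_le (hp i).l1
    have hP2 := hVV.trans_le (hp i).l2
    have hlin := psi_lin (X := (a i + κ * b i) * a j + (c i + κ * d i) * c j)
      (Y := (a i + κ * b i) * b j + (c i + κ * d i) * d j) (w := w l) (w0 := w0) (S := S i j)
      (add_nonneg (mul_nonneg hP1.le (by linarith)) (mul_nonneg hP2.le (by linarith)))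
      (add_pos (mul_pos hP1 (by linarith)) (mul_pos hP2 (by linarith))) (hw1 l).1
      (by rw [hS]; ring) (by ring) (hSp i j) hd
    have e : ω - C / (z i j l + κ) -
        (ω - C * ((b i * (a j * w0 + b j) + d i * (c j * w0 + d j)) / S i j)) -
        C / S i j ^ 2 * (w l - w0) = -(C * (1 / (z i j l + κ) -
        (b i * (a j * w0 + b j) + d i * (c j * w0 + d j)) / S i j + (w l - w0) / S i j ^ 2)) := by
      ring
    rw [e, abs_neg, abs_mul, abs_of_pos hC0]
    refine (mul_le_mul_of_nonneg_left hlin hC0.le).trans ?_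
    have h15 : (w l - w0) ^ 2 ≤ (1 / x ^ 15) ^ 2 := by
      rw [← sq_abs]; have := hw2' l i0; gcongr
    calc C * ((w l - w0) ^ 2 / S i j ^ 2) = C / S i j ^ 2 * (w l - w0) ^ 2 := by ring
      _ ≤ x ^ 27 / c0 ^ 4 * (1 / x ^ 15) ^ 2 :=
          mul_le_mul (hAu i j) h15 (by positivity) (by positivity)
      _ = _ := by field_simp
  · -- hη
    rw [mul_one_div, div_le_div_iff₀ (by positivity) (by positivity)]
    have h4 := hinv 4 (by norm_num)
    have h5 : 128 * (1 / c0 ^ 4) ≤ x := by linarith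
    rw [mul_one_div, div_le_iff₀ (by positivity)] at h5
    calc x * (128 * x) = x ^ 2 * 128 := by ring
      _ ≤ x ^ 2 * (x * c0 ^ 4) := by gcongr
      _ = _ := by ring
  · intro i j; have := hSp i j; positivity
  · intro i j
    calc x * (C / S i j ^ 2) ≤ x * (x ^ 27 / c0 ^ 4) := by have := hAu i j; gcongr
      _ = g * (128 * x ^ 14 / c0 ^ 4) := by rw [hg]; field_simp
      _ < g * J := by gcongr
  · -- collisions
    intro i i' j j' hii hjj h1 h2
    have k1 := inv_sq_close hC0 (by positivity) (hSl i j) (hSu i j) (hSl i j') (hSu i j') h1.le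
    have k2 := inv_sq_close hC0 (by positivity) (hSl i' j) (hSu i' j) (hSl i' j') (hSu i' j') h2.le
    rw [hS, hS] at k1 k2
    have hVρ : 48 / c0 ^ 3 ≤ V ^ 2 * (1 / x ^ 6) := by
      have h3 := hinv 3 (by norm_num)
      have h4 : 48 * (1 / c0 ^ 3) ≤ x := by linarith
      rw [mul_one_div] at h4
      refine h4.trans ?_
      rw [mul_one_div, le_div_iff₀ (by positivity)]
      calc x * x ^ 6 = x ^ 7 := by ring
        _ ≤ x ^ 8 := pow_le_pow_right₀ hx1 (by norm_num)
        _ = (x ^ 4) ^ 2 := by ring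
        _ ≤ V ^ 2 := by gcongr
    have hc := collision hc0 hV0 (by positivity) hVρ (hp i) (hp i') (hY3 i i' hii) (hq j) (hq j')
      (hY3 j j' hjj) k1 k2
    rw [hCV, hg] at hc
    have e1 : c0 ^ 4 * V ^ 2 * (1 / x ^ 6) ^ 2 = c0 ^ 4 * x * (V ^ 2 / x ^ 13) := by field_simp
    have e2 : 720 * (x ^ 14 / 128 * (90 * V ^ 2) ^ 4 / (2 * (c0 ^ 2 * V ^ 2) * (x ^ 27 * V ^ 4))) =
      (720 * 90 ^ 4 / 256 / c0 ^ 2) * (V ^ 2 / x ^ 13) := by field_simp; norm_num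
    rw [e1, e2] at hc
    have h5 := le_of_mul_le_mul_right hc (by positivity)
    rw [le_div_iff₀ (by positivity)] at h5
    rw [mul_one_div, div_le_iff₀ (by positivity)] at hx6
    have : c0 ^ 4 * x * c0 ^ 2 = x * c0 ^ 6 := by ring
    rw [this] at h5
    norm_num at h5 hx6
    linarith
  · apply le_of_eq; rw [hg]; field_simp
  · intro l l'
    refine (hw2' l l').trans (le_of_eq ?_)
    field_simp
  · have : g * (x ^ 13 * (1 / x ^ 28)) = 1 / (128 * x) := by rw [hg]; field_simp
    rw [this, div_le_div_iff₀ (by positivity) (by norm_num)]; linarith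
  · -- 512
    have hcard : x ^ 17 ≤ ((Fintype.card (Fin (6 * ν) → Fin 19683) : ℕ) : ℝ) *
        ((Fintype.card (Fin (13 * ν) → Fin 19683) : ℕ) : ℝ) := by
      simp only [Fintype.card_fun, Fintype.card_fin]
      push_cast
      rw [← pow_add, show 6 * ν + 13 * ν = 19 * ν by ring, hx, ← pow_mul, mul_comm ν, pow_mul, pow_mul]
      gcongr
      norm_num
    refine le_trans ?_ hcard
    have hlog : Real.log (x ^ 13) = 13 * (ν * Real.log 39369) := by
      rw [hx, Real.log_pow, Real.log_pow]; push_cast; ring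
    rw [hlog]
    have e3 : 1 / (g * (1 / x ^ 28)) = 128 * x ^ 14 := by rw [hg]; field_simp
    rw [e3]
    have h14 : 1 ≤ x ^ 14 := one_le_pow₀ hx1
    have h4 := hinv 4 (by norm_num)
    have hb : 65536 * (1 / c0 ^ 4 + 2 + 13 * (ν * Real.log 39369)) ≤ x := by
      refine le_trans ?_ hx3
      rw [hK3]
      have m1 : 0 ≤ ν * Real.log 39369 := by positivity
      have m2 : 0 ≤ 10 ^ 12 * (1 / c0 ^ 6) * (ν:ℝ) := by positivity
      have e4 : (10 ^ 12 : ℝ) / c0 ^ 6 = 10 ^ 12 * (1 / c0 ^ 6) := by ring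
      rw [e4]
      generalize 1 / c0 ^ 6 = A at m2 h4 i6 ⊢
      generalize 1 / c0 ^ 4 = A4 at h4 ⊢
      nlinarith only [m1, m2, h4, i6, hlogℓ]
    calc 512 * x ^ 2 * (J + 128 * x ^ 14 * (1 + 13 * (ν * Real.log 39369)))
        ≤ 512 * x ^ 2 * ((128 * x ^ 14 / c0 ^ 4 + 128 * x ^ 14) +
          128 * x ^ 14 * (1 + 13 * (ν * Real.log 39369))) := by
          gcongr; linarith
      _ = x ^ 16 * (65536 * (1 / c0 ^ 4 + 2 + 13 * (ν * Real.log 39369))) := by ring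
      _ ≤ x ^ 16 * x := by gcongr
      _ = x ^ 17 := by ring


set_option maxHeartbeats 2000000 in
theorem steer (B b : ℕ) (hB : 1 ≤ B) (hb : b = 2 * B + 3) :
    ∃ κ c1 W : ℝ, ∃ ν0 : ℕ, 0 < κ ∧ κ ≤ 1 / (2 * b) ∧ 0 < c1 ∧ c1 ≤ κ / (8 * b) ∧ c1 ≤ 1 ∧ 1 ≤ W ∧
    ∀ ν : ℕ, ν0 ≤ ν → ∀ m i, Gd b κ c1 1 m i → ∀ n θ : ℝ,
      W ^ 2 * (b:ℝ) ^ m * (39369:ℝ) ^ (86 * ν) ≤ n → ∀ M : ℕ, (39369:ℝ) ^ ν / c1 * n ≤ (b:ℝ) ^ M →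
      ∃ i', Gd b κ c1 1 M i' ∧ IV b M i' ⊆ IV b m i ∧
        ∀ y ∈ IV b M i', dni (n * y - θ) ≤ 2 / (39369:ℝ) ^ ν := by
  obtain ⟨c2, Z, ν0, hc2, hc21, hZ, hH⟩ := thmH
  have hb5 : (5:ℝ) ≤ b := by exact_mod_cast (by omega : 5 ≤ b)
  have hb0 : (0:ℝ) < b := by linarith
  obtain ⟨c3, hc3⟩ : ∃ c3 : ℝ, c3 = c2 / (2 * (Z + 1)) := ⟨_, rfl⟩
  have hc30 : 0 < c3 := by rw [hc3]; positivity
  have hc31 : c3 ≤ 1 := by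
    rw [hc3, div_le_one (by positivity)]; linarith
  obtain ⟨κ, hκ⟩ : ∃ κ : ℝ, κ = c3 / (4 * b) := ⟨_, rfl⟩
  have hκ0 : 0 < κ := by rw [hκ]; positivity
  have hκb : κ ≤ 1 / (2 * b) := by
    rw [hκ]; apply div_le_div₀ (by norm_num) hc31 (by positivity); linarith
  have hκ4 : κ ≤ c3 / 4 := by
    rw [hκ]; apply div_le_div_of_nonneg_left hc30.le (by norm_num); linarith
  obtain ⟨c', hc'⟩ : ∃ c' : ℝ, c' = κ / (8 * b) := ⟨_, rfl⟩
  have hc'0 : 0 < c' := by rw [hc']; positivity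
  have hc'κ : c' ≤ κ / 8 := by
    rw [hc']; apply div_le_div_of_nonneg_left hκ0.le (by norm_num); linarith
  have hc'1 : c' ≤ 1 := by linarith
  obtain ⟨c1, hc1⟩ : ∃ c1 : ℝ, c1 = c' / (8 * (Z + 1)) := ⟨_, rfl⟩
  have hc10 : 0 < c1 := by rw [hc1]; positivity
  have hc1c : c1 ≤ c' / 16 := by
    rw [hc1]; apply div_le_div_of_nonneg_left hc'0.le (by norm_num); linarith
  obtain ⟨W, hW⟩ : ∃ W : ℝ, W = 4 * b / c1 + 1 := ⟨_, rfl⟩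
  have hW0 : 0 < 4 * b / c1 := by positivity
  have hWb : 4 * b ≤ 4 * b / c1 := by
    rw [le_div_iff₀ hc10]; nlinarith only [hc1c, hc'1, hb0]
  have hWpos : 0 < W := by linarith
  refine ⟨κ, c1, W, ν0, hκ0, hκb, hc10, by rw [← hc']; linarith, by linarith, by linarith, ?_⟩
  intro ν hν m i hG n θ hn M hM
  set β : ℝ := (b:ℝ) ^ m with hβ
  have hβ1 : 1 ≤ β := one_le_pow₀ (by linarith)
  have hβ0 : 0 < β := by linarith
  have hbm1 : (b:ℝ) ^ (m + 1) = b * β := by rw [hβ, pow_succ]; ring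
  obtain ⟨R, hR⟩ : ∃ R : ℝ, R = (39369:ℝ) ^ ν := ⟨_, rfl⟩
  have hR1 : 1 ≤ R := by rw [hR]; exact one_le_pow₀ (by norm_num)
  have h86 : (39369:ℝ) ^ (86 * ν) = (39369:ℝ) ^ (43 * (2 * ν)) := by congr 1; ring
  have h43 : (1:ℝ) ≤ (39369:ℝ) ^ (43 * (2 * ν)) := one_le_pow₀ (by norm_num)
  rw [h86] at hn
  rw [← hR] at hM ⊢
  -- auxiliary bad point
  obtain ⟨xx, hxx, -⟩ := tree0 B b hb hκ0 hκb hc'0 hc'.le m i (Gd_start b κ c' (κ * β) m i le_rfl)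
  obtain ⟨hx1, hx2, hx3⟩ := hxx (fun _ => ⟨0, hB⟩)
  set x' := xx (fun _ => ⟨0, hB⟩) with hx'
  rw [hbm1] at hx2 hx3
  have hbβ : 0 < 1 / (b * β) := by positivity
  have hx'IV : x' ∈ IV b m i := ⟨by linarith, by linarith⟩
  -- Dirichlet
  obtain ⟨s, hs⟩ : ∃ s : ℝ, s = Real.sqrt β := ⟨_, rfl⟩
  have hs1 : 1 ≤ s := by rw [hs]; exact Real.one_le_sqrt.mpr hβ1
  have hs2 : s ^ 2 = β := by rw [hs]; exact Real.sq_sqrt hβ0.le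
  have hnD : 0 < ⌈4 * b / c1 * s⌉₊ := Nat.ceil_pos.mpr (by positivity)
  obtain ⟨t, ht1, ht2⟩ := Real.exists_rat_abs_sub_le_and_den_le x' hnD
  have hnD1 : 4 * b / c1 * s ≤ (⌈4 * b / c1 * s⌉₊ : ℝ) := Nat.le_ceil _
  have hnD2 : (⌈4 * b / c1 * s⌉₊ : ℝ) < 4 * b / c1 * s + 1 := Nat.ceil_lt_add_one (by positivity)
  set nD : ℝ := ((⌈4 * b / c1 * s⌉₊ : ℕ) : ℝ) with hnDdef
  obtain ⟨Q, hQ⟩ : ∃ Q : ℤ, Q = t.den := ⟨_, rfl⟩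
  obtain ⟨P, hP⟩ : ∃ P : ℤ, P = t.num := ⟨_, rfl⟩
  have hQ1 : 1 ≤ Q := by rw [hQ]; exact_mod_cast t.pos
  have hQr1 : (1:ℝ) ≤ Q := by exact_mod_cast hQ1
  have hQr0 : (0:ℝ) < Q := by linarith
  have hQden : (Q:ℝ) = t.den := by rw [hQ]; push_cast; rfl
  have htPQ : (t:ℝ) = P / Q := by rw [hQden, hP]; exact Rat.cast_def t
  have hQn : (Q:ℝ) ≤ nD := by rw [hQden, hnDdef]; exact_mod_cast ht2
  have hnD0 : 0 < nD := by linarith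
  have hap : |(Q:ℝ) * x' - P| ≤ 1 / (nD + 1) := by
    rw [htPQ, ← hQden] at ht1
    have e : (Q:ℝ) * x' - P = Q * (x' - P / Q) := by field_simp
    rw [e, abs_mul, abs_of_pos hQr0]
    calc (Q:ℝ) * |x' - P / Q| ≤ Q * (1 / ((nD + 1) * Q)) := by gcongr
      _ = 1 / (nD + 1) := by field_simp
  have hQlow : c1 ≤ (Q:ℝ) * |(Q:ℝ) * x' - P| := by
    by_cases h : κ * β ≤ (Q:ℝ) ^ 2
    · have := hx1 Q P hQ1 h; linarith
    · push Not at h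
      exact hG x' hx'IV Q P hQ1 (one_le_pow₀ hQr1) h
  have hQl : 4 * b * s ≤ Q := by
    have h1 : c1 ≤ Q * (1 / (nD + 1)) := hQlow.trans (by gcongr)
    rw [mul_one_div, le_div_iff₀ (by linarith)] at h1
    have h2 : c1 * (4 * b / c1 * s) ≤ c1 * (nD + 1) := by gcongr; linarith
    have h3 : c1 * (4 * b / c1 * s) = 4 * b * s := by field_simp
    linarith
  have hQu : (Q:ℝ) ≤ W * s := by rw [hW]; nlinarith only [hQn, hnD2, hs1]
  have hQ2 : 16 * b ^ 2 * β ≤ (Q:ℝ) ^ 2 := by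
    have := pow_le_pow_left₀ (by positivity) hQl 2
    rw [mul_pow, hs2] at this
    nlinarith only [this]
  have hQW : (Q:ℝ) ^ 2 ≤ W ^ 2 * β := by
    have := pow_le_pow_left₀ hQr0.le hQu 2
    rwa [mul_pow, hs2] at this
  have hapQ : |(Q:ℝ) * x' - P| ≤ 1 / Q := hap.trans (by gcongr; linarith)
  obtain ⟨P', Q', hdet, hQ'1, hQ'Q⟩ := bezout_mat P Q hQ1 (by
    rw [hP, hQ]; exact_mod_cast Rat.isCoprime_num_den t)
  have hQ'r1 : (1:ℝ) ≤ Q' := by exact_mod_cast hQ'1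
  have hQ'Qr : (Q':ℝ) ≤ Q := by exact_mod_cast hQ'Q
  have hdetr : (P:ℝ) * Q' - P' * Q = 1 := by exact_mod_cast hdet
  have hn0 : 0 < n := lt_of_lt_of_le (by positivity) hn
  -- Theorem H
  obtain ⟨z, hz1, hzZ, hzB, hzd⟩ := hH (2 * ν) (by omega) (n / Q ^ 2) (Q' / Q) (n * P / Q - θ)
    (by
      rw [le_div_iff₀ (by positivity)]
      refine le_trans ?_ hn
      rw [mul_comm]
      gcongr) (by positivity) (by rw [div_le_one hQr0]; exact hQ'Qr)
  have hden : 0 < (Q:ℝ) * z + Q' := by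
    have : 0 < (Q:ℝ) * z := mul_pos hQr0 (by linarith)
    linarith
  obtain ⟨x, hx⟩ : ∃ x : ℝ, x = (P * z + P') / (Q * z + Q') := ⟨_, rfl⟩
  have hnx : n * x - θ = -(n / Q ^ 2 / (z + Q' / Q) - (n * P / Q - θ)) := by
    have e1 : n / (Q:ℝ) ^ 2 / (z + Q' / Q) = n / (Q * (Q * z + Q')) := by
      field_simp
    have e2 : n * x = n * P / Q - n / (Q * (Q * z + Q')) := by
      rw [hx]
      have : n * ((P * z + P') / (Q * z + Q')) = (n * P * (Q * z + Q') - n * (P * Q' - P' * Q)) /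
        (Q * (Q * z + Q')) := by
        rw [eq_div_iff (by positivity)]; field_simp; ring
      rw [this, hdetr]; field_simp
    rw [e1, e2]; ring
  have hdx : dni (n * x - θ) ≤ 1 / R := by
    rw [hnx, dni_neg]
    apply le_of_sq_le_sq _ (by positivity)
    refine hzd.trans (le_of_eq ?_)
    rw [hR, div_pow, one_pow, ← pow_mul, mul_comm]
  have hxx' : |x - x'| ≤ 2 / (Q:ℝ) ^ 2 := by
    rw [hx]; exact FW3 hdet hQ'1 hQ'Q hz1 hapQ
  -- badness of x
  have hbadL : ∀ q p : ℤ, 1 ≤ q → W ^ 2 * β ≤ (q:ℝ) ^ 2 → c3 ≤ (q:ℝ) * |(q:ℝ) * x - p| := by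
    intro q p hq hqW
    have hqr : (1:ℝ) ≤ q := by exact_mod_cast hq
    have : (Q:ℝ) ≤ q := le_of_sq_le_sq (hQW.trans hqW) (by linarith)
    rw [hx, hc3]
    exact FW1 hdet hQ'1 hQ'Q hz1 hzZ hc21 hzB q p (by exact_mod_cast this)
  have hbadS : ∀ q p : ℤ, 1 ≤ q → κ * β ≤ (q:ℝ) ^ 2 → 2 * c1 ≤ (q:ℝ) * |(q:ℝ) * x - p| := by
    intro q p hq hqκ
    have hqr : (1:ℝ) ≤ q := by exact_mod_cast hq
    by_cases hqQ : Q ≤ q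
    · have := FW1 hdet hQ'1 hQ'Q hz1 hzZ hc21 hzB q p hqQ
      rw [← hx, ← hc3] at this
      linarith
    push Not at hqQ
    by_cases hql : (q:ℝ) ^ 2 ≤ c' / 4 * Q ^ 2
    · have h1 := hx1 q p hq hqκ
      have h2 : |(q:ℝ) * x' - p| ≤ |(q:ℝ) * x - p| + q * (2 / (Q:ℝ) ^ 2) := by
        have e : (q:ℝ) * x' - p = ((q:ℝ) * x - p) - q * (x - x') := by ring
        rw [e]
        refine (abs_sub _ _).trans ?_
        rw [abs_mul (q:ℝ), abs_of_pos (by linarith : (0:ℝ) < q)]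
        gcongr
      have h3 : (q:ℝ) * |(q:ℝ) * x' - p| ≤ q * (|(q:ℝ) * x - p| + q * (2 / (Q:ℝ) ^ 2)) := by gcongr
      have h4 : (q:ℝ) * (q * (2 / (Q:ℝ) ^ 2)) ≤ c' / 2 := by
        have : (q:ℝ) * (q * (2 / (Q:ℝ) ^ 2)) = 2 * q ^ 2 / Q ^ 2 := by ring
        rw [this, div_le_iff₀ (by positivity)]; linarith
      linarith
    · push Not at hql
      have h1 := FW2 hdet hQ'1 hQ'Q hz1 hzZ q p hq hqQ
      rw [← hx, mul_comm |_|] at h1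
      refine le_trans ?_ h1
      rw [le_div_iff₀ (by positivity), hc1]
      have h2 : c' / 2 * Q ≤ q := by
        apply le_of_sq_le_sq _ (by linarith)
        refine le_trans ?_ hql.le
        have : c' ^ 2 ≤ c' := by nlinarith only [hc'0, hc'1]
        have hQQ : 0 < (Q:ℝ) ^ 2 := by positivity
        nlinarith only [this, hQQ]
      have h3 : 2 * (c' / (8 * (Z + 1))) * (Q * (Z + 1)) = c' / 4 * Q := by field_simp; norm_num
      rw [h3]
      have : 0 < c' * Q := by positivity
      linarith
  -- target interval
  have hbM0 : (0:ℝ) < (b:ℝ) ^ M := by positivity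
  have hKn : n / c1 ≤ (b:ℝ) ^ M := by
    refine le_trans ?_ hM
    rw [div_mul_eq_mul_div]
    apply div_le_div_of_nonneg_right _ hc10.le
    nlinarith only [hR1, hn0]
  have hnW : W ^ 2 * β ≤ n := by
    refine le_trans ?_ hn
    have : 0 ≤ W ^ 2 * β := by positivity
    nlinarith only [this, h43]
  have hnM : n ≤ (b:ℝ) ^ M := by
    refine le_trans ?_ hKn
    rw [le_div_iff₀ hc10]
    nlinarith only [hc1c, hc'1, hn0]
  have hMb : 16 * b ^ 2 * β ≤ (b:ℝ) ^ M := hQ2.trans (hQW.trans (hnW.trans hnM))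
  set i' : ℤ := ⌊x * (b:ℝ) ^ M⌋ with hi'
  have hxi : x ∈ IV b M i' := by
    constructor
    · rw [div_le_iff₀ hbM0]; exact Int.floor_le _
    · rw [le_div_iff₀ hbM0]; exact (Int.lt_floor_add_one _).le
  have hdist : ∀ y ∈ IV b M i', |x - y| ≤ 1 / (b:ℝ) ^ M := fun y hy => IV_dist hxi hy
  have hsm1 : 2 / (Q:ℝ) ^ 2 ≤ 1 / (b * β) / 2 := by
    rw [div_div, div_le_div_iff₀ (by positivity) (by positivity)]
    have : 4 * (b * β) ≤ 16 * b ^ 2 * β := by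
      have : 0 < b * β := by positivity
      nlinarith only [this, hb5]
    linarith
  have hsm2 : 1 / (b:ℝ) ^ M ≤ 1 / (b * β) / 2 := by
    rw [div_div, div_le_div_iff₀ (by positivity) (by positivity)]
    have : 2 * (b * β) ≤ 16 * b ^ 2 * β := by
      have : 0 < b * β := by positivity
      nlinarith only [this, hb5]
    linarith
  have hsub : IV b M i' ⊆ IV b m i := by
    intro y hy
    have h1 := abs_le.mp ((hdist y hy).trans hsm2)
    have h2 := abs_le.mp (hxx'.trans hsm1)
    constructor <;> linarith [h1.1, h1.2, h2.1, h2.2]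
  refine ⟨i', ?_, hsub, ?_⟩
  · intro y hy q p hq hq1 hqM
    have hqr : (1:ℝ) ≤ q := by exact_mod_cast hq
    by_cases hqm : (q:ℝ) ^ 2 < κ * β
    · exact hG y (hsub hy) q p hq hq1 hqm
    push Not at hqm
    have h2 : |(q:ℝ) * x - p| ≤ |(q:ℝ) * y - p| + q * (1 / (b:ℝ) ^ M) := by
      have e : (q:ℝ) * x - p = ((q:ℝ) * y - p) + q * (x - y) := by ring
      rw [e]
      refine (abs_add_le _ _).trans ?_
      rw [abs_mul (q:ℝ), abs_of_pos (by linarith : (0:ℝ) < q)]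
      have := hdist y hy
      gcongr
    have h3 : (q:ℝ) * |(q:ℝ) * x - p| ≤ q * (|(q:ℝ) * y - p| + q * (1 / (b:ℝ) ^ M)) := by gcongr
    have e3 : (q:ℝ) * (q * (1 / (b:ℝ) ^ M)) = q ^ 2 / (b:ℝ) ^ M := by ring
    by_cases hqW : W ^ 2 * β ≤ (q:ℝ) ^ 2
    · have h4 := hbadL q p hq hqW
      have h5 : (q:ℝ) ^ 2 / (b:ℝ) ^ M ≤ κ := by rw [div_le_iff₀ hbM0]; exact hqM.le
      linarith
    · push Not at hqW
      have h4 := hbadS q p hq hqm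
      have h5 : (q:ℝ) ^ 2 / (b:ℝ) ^ M ≤ c1 := by
        rw [div_le_iff₀ hbM0]
        have : n ≤ (b:ℝ) ^ M * c1 := by rwa [div_le_iff₀ hc10] at hKn
        linarith
      linarith
  · intro y hy
    have e : n * y - θ = (n * x - θ) + n * (y - x) := by ring
    rw [e]
    refine (dni_add_le _ _).trans ?_
    have h1 : |n * (y - x)| ≤ 1 / R := by
      rw [abs_mul, abs_of_pos hn0, abs_sub_comm]
      calc n * |x - y| ≤ n * (1 / (b:ℝ) ^ M) := by have := hdist y hy; gcongr
        _ ≤ 1 / R := by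
          rw [mul_one_div, div_le_div_iff₀ hbM0 (by linarith)]
          refine le_trans ?_ (hM.trans (le_of_eq (one_mul _).symm))
          rw [div_mul_eq_mul_div, le_div_iff₀ hc10, mul_comm]
          have : 0 < R * n := by positivity
          nlinarith only [hc1c, hc'1, this]
    have : 2 / R = 1 / R + 1 / R := by ring
    linarith


theorem multi {b : ℕ} (hb : 2 ≤ b) (G : ℕ → ℤ → Prop) {A K e : ℝ} (hA : 1 ≤ A) (hK : 1 ≤ K)
    (hchild : ∀ m i, G m i → ∃ i', G (m+1) i' ∧ IV b (m+1) i' ⊆ IV b m i)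
    (H : ∀ m i, G m i → ∀ n θ : ℝ, A * (b:ℝ) ^ m ≤ n → ∀ M : ℕ, K * n ≤ (b:ℝ) ^ M →
      ∃ i', G M i' ∧ IV b M i' ⊆ IV b m i ∧ ∀ y ∈ IV b M i', dni (n * y - θ) ≤ e)
    (m : ℕ) (i : ℤ) (hG : G m i) (n θ : ℕ → ℝ) (hn : ∀ j, A * (b:ℝ) ^ m ≤ n j)
    (hr : ∀ j j', j < j' → K * b * A * n j ≤ n j') (J : ℕ) :
    ∀ M, m ≤ M → (∀ j < J, K * n j ≤ (b:ℝ) ^ M) → ∃ i', G M i' ∧ IV b M i' ⊆ IV b m i ∧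
      ∀ y ∈ IV b M i', ∀ j < J, dni (n j * y - θ j) ≤ e := by
  have hbr : (2:ℝ) ≤ b := by exact_mod_cast hb
  induction J with
  | zero =>
    intro M hM _
    induction M, hM using Nat.le_induction with
    | base => exact ⟨i, hG, subset_rfl, fun _ _ j hj => by omega⟩
    | succ M hM ih =>
      obtain ⟨i', h1, h2, -⟩ := ih (fun j hj => by omega)
      obtain ⟨i'', h3, h4⟩ := hchild M i' h1
      exact ⟨i'', h3, h4.trans h2, fun _ _ j hj => by omega⟩
  | succ J ih =>
    intro M hM hMn
    have hA0 : 0 < A := by linarith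
    have hbm : (1:ℝ) ≤ (b:ℝ) ^ m := one_le_pow₀ (by linarith)
    have h1 : (b:ℝ) ^ m ≤ n J / A := by
      rw [le_div_iff₀ hA0, mul_comm]; exact hn J
    obtain ⟨mJ, hm1, hm2⟩ := exists_nat_pow_near (hbm.trans h1) (by linarith : (1:ℝ) < b)
    have hmm : m ≤ mJ := by
      have : (b:ℝ) ^ m < (b:ℝ) ^ (mJ + 1) := h1.trans_lt hm2
      have := (pow_lt_pow_iff_right₀ (by linarith : (1:ℝ) < b)).mp this
      omega
    obtain ⟨i1, g1, g2, g3⟩ := ih mJ hmm (by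
      intro j hj
      have h2 := hr j J hj
      have h3 : K * n j * b ≤ n J / A := by
        rw [le_div_iff₀ hA0]; linarith
      have h4 := h3.trans_lt hm2
      rw [pow_succ] at h4
      exact (lt_of_mul_lt_mul_right h4 (by linarith)).le)
    obtain ⟨i2, k1, k2, k3⟩ := H mJ i1 g1 (n J) (θ J) (by
      rw [le_div_iff₀ hA0] at hm1; linarith) M (hMn J (by omega))
    refine ⟨i2, k1, k2.trans g2, fun y hy j hj => ?_⟩
    rcases Nat.lt_succ_iff_lt_or_eq.mp hj with h | h
    · exact g3 y (k2 hy) j h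
    · subst h; exact k3 y hy


lemma cf_facts (a : ℝ) (ha : Irrational a) : ∃ P : ℕ → ℤ, ∃ Q : ℕ → ℕ,
    (∀ t, qden a t = Q t) ∧ (∀ t, 1 ≤ Q t) ∧ (∀ t, Q t ≤ Q (t+1)) ∧ (∀ t, 2 * Q t ≤ Q (t+2)) ∧
    (∀ t, IsCoprime (P t) (Q t : ℤ)) ∧ ∀ t, |a - P t / Q t| ≤ 1 / (Q t : ℝ)^2 := by
  have hnt : ∀ n, ¬ (GenContFract.of a).TerminatedAt n := by
    intro n hn
    have : (GenContFract.of a).Terminates := ⟨n, hn⟩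
    rw [GenContFract.terminates_iff_rat] at this
    obtain ⟨q, hq⟩ := this
    exact ha ⟨q, hq.symm⟩
  have hs : ∀ n, ∃ gp, (GenContFract.of a).s.get? n = some gp := fun n =>
    Option.ne_none_iff_exists'.1 (hnt n)
  have hint : ∀ n, ((∃ z : ℤ, ((GenContFract.of a).contsAux n).a = z) ∧
      (∃ z : ℤ, ((GenContFract.of a).contsAux n).b = z)) ∧
      ((∃ z : ℤ, ((GenContFract.of a).contsAux (n+1)).a = z) ∧
      (∃ z : ℤ, ((GenContFract.of a).contsAux (n+1)).b = z)) := by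
    intro n
    induction n with
    | zero =>
      refine ⟨⟨⟨1, by simp⟩, ⟨0, by simp⟩⟩, ⟨⟨⌊a⌋, ?_⟩, ⟨1, by simp⟩⟩⟩
      simp
    | succ n ih =>
      refine ⟨ih.2, ?_⟩
      obtain ⟨gp, hgp⟩ := hs n
      obtain ⟨h1, z, hz⟩ := GenContFract.of_partNum_eq_one_and_exists_int_partDen_eq hgp
      rw [GenContFract.contsAux_recurrence hgp rfl rfl]
      obtain ⟨⟨⟨x1, hx1⟩, ⟨x2, hx2⟩⟩, ⟨x3, hx3⟩, ⟨x4, hx4⟩⟩ := ih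
      refine ⟨⟨z * x3 + x1, ?_⟩, ⟨z * x4 + x2, ?_⟩⟩
      · simp [h1, hz, hx1, hx3]
      · simp [h1, hz, hx2, hx4]
  have hP : ∀ t, ∃ z : ℤ, (GenContFract.of a).nums t = z := fun t => (hint t).2.1
  have hZ : ∀ t, ∃ z : ℤ, (GenContFract.of a).dens t = z := fun t => (hint t).2.2
  have hmono : ∀ t, (GenContFract.of a).dens t ≤ (GenContFract.of a).dens (t+1) := fun t =>
    GenContFract.of_den_mono
  have h1 : ∀ t, 1 ≤ (GenContFract.of a).dens t := by
    intro t
    induction t with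
    | zero => simp
    | succ t ih => exact ih.trans (hmono t)
  have hQ : ∀ t, ∃ z : ℕ, (GenContFract.of a).dens t = z := by
    intro t
    obtain ⟨z, hz⟩ := hZ t
    have h := h1 t
    rw [hz] at h
    have h0 : (0:ℤ) ≤ z := by
      have : (1:ℤ) ≤ z := by exact_mod_cast h
      omega
    lift z to ℕ using h0
    exact ⟨z, by rw [hz]; simp⟩
  choose P hP using hP
  choose Q hQ using hQ
  refine ⟨P, Q, fun t => hQ t, ?_, ?_, ?_, ?_, ?_⟩
  · intro t
    have := h1 t
    rw [hQ] at this
    exact_mod_cast this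
  · intro t
    have := hmono t
    rw [hQ, hQ] at this
    exact_mod_cast this
  · intro t
    obtain ⟨gp, hgp⟩ := hs (t+1)
    have e1 := (GenContFract.of_partNum_eq_one_and_exists_int_partDen_eq hgp).1
    have e2 := GenContFract.of_one_le_get?_partDen (GenContFract.partDen_eq_s_b hgp)
    have e3 := GenContFract.dens_recurrence hgp rfl rfl
    have e4 := hmono t
    have e5 := h1 (t+1)
    have : 2 * (GenContFract.of a).dens t ≤ (GenContFract.of a).dens (t+2) := by
      rw [e3, e1]
      nlinarith only [e2, e4, e5]
    rw [hQ, hQ] at this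
    exact_mod_cast this
  · intro t
    have hd := SimpContFract.determinant (s := SimpContFract.of a) (hnt t)
    have e : ((SimpContFract.of a : SimpContFract ℝ) : GenContFract ℝ) = GenContFract.of a := rfl
    rw [e, hQ, hQ, hP, hP] at hd
    have hd' : P t * Q (t+1) - Q t * P (t+1) = (-1)^(t+1) := by exact_mod_cast hd
    have hsq : ((-1:ℤ)^(t+1)) * (-1)^(t+1) = 1 := by
      rw [← pow_add, ← two_mul]; simp
    refine ⟨(-1)^(t+1) * Q (t+1), -((-1)^(t+1) * P (t+1)), ?_⟩
    calc _ = (-1)^(t+1) * (P t * Q (t+1) - Q t * P (t+1)) := by ring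
      _ = 1 := by rw [hd', hsq]
  · intro t
    have := GenContFract.abs_sub_convs_le (hnt t)
    rw [GenContFract.conv_eq_num_div_den, hP, hQ, hQ] at this
    refine this.trans ?_
    have q1 : (1:ℝ) ≤ Q t := by rw [← hQ]; exact h1 t
    have q2 : (Q t:ℝ) ≤ Q (t+1) := by rw [← hQ, ← hQ]; exact hmono t
    apply one_div_le_one_div_of_le (by positivity)
    nlinarith only [q1, q2]

lemma near_n (a g : ℝ) (p : ℤ) (q : ℕ) (hq : 1 ≤ q) (hc : IsCoprime p (q : ℤ))
    (h : |a - p / q| ≤ 1 / (q:ℝ)^2) :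
    ∃ n : ℕ, q ≤ n ∧ n < 2 * q ∧ (n:ℝ) * dni (n * a - g) ≤ 5 := by
  obtain ⟨u, v, huv⟩ := hc
  have hq0 : (0:ℝ) < q := by exact_mod_cast hq
  have hqz : (0:ℤ) < q := by exact_mod_cast hq
  set k := round ((q:ℝ) * g) with hk
  have h0 : 0 ≤ (u * k) % q := Int.emod_nonneg _ hqz.ne'
  have h1 : (u * k) % q < q := Int.emod_lt_of_pos _ hqz
  obtain ⟨r, hr⟩ := Int.eq_ofNat_of_zero_le h0
  have hrq : r < q := by
    rw [hr] at h1; exact_mod_cast h1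
  have hdm := Int.emod_add_mul_ediv (u * k) q
  rw [hr] at hdm
  refine ⟨q + r, by omega, by omega, ?_⟩
  set w := (u * k) / (q:ℤ) with hw
  -- (q+r) p = k + q * j
  have hj : ((q + r : ℕ) : ℤ) * p = k + q * (p - v * k - w * p) := by
    push_cast
    have : (r:ℤ) = u * k - q * w := by linarith
    rw [this]
    linear_combination k * huv
  set j := p - v * k - w * p with hj'
  set n : ℝ := ((q + r : ℕ) : ℝ) with hn
  have hjR : n * p = k + q * j := by
    rw [hn]; exact_mod_cast hj
  have hn1 : n ≤ 2 * q := by rw [hn]; push_cast; have : (r:ℝ) < q := by exact_mod_cast hrq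
                             linarith
  have hn0 : 0 ≤ n := by rw [hn]; positivity
  have hkr : |(q:ℝ) * g - k| ≤ 1/2 := abs_sub_round _
  have e : n * a - g - j = n * (a - p / q) + (k - q * g) / q := by
    have : n * p / q = k / q + j := by rw [hjR]; field_simp
    field_simp
    field_simp at this
    linarith
  have hd : dni (n * a - g) ≤ 5 / 2 / q := by
    refine (dni_le _ j).trans ?_
    rw [e]
    refine (abs_add_le _ _).trans ?_
    rw [abs_mul, abs_div, abs_of_nonneg hn0, abs_of_pos hq0, abs_sub_comm (k:ℝ)]
    have t1 : n * |a - p/q| ≤ 2 * q * (1 / (q:ℝ)^2) :=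
      mul_le_mul hn1 h (abs_nonneg _) (by positivity)
    have t2 : |(q:ℝ) * g - k| / q ≤ 1/2 / q := by gcongr
    have t3 : 2 * (q:ℝ) * (1 / (q:ℝ)^2) + 1/2/q = 5/2/q := by field_simp; norm_num
    linarith
  calc n * dni (n * a - g) ≤ 2 * q * (5/2/q) :=
        mul_le_mul hn1 hd (dni_nonneg _) (by positivity)
    _ = 5 := by field_simp

lemma K_seq (a g : ℝ) (ha : a ∈ KSet) : ∃ Q N : ℕ → ℕ, ∃ D : ℝ, 1 ≤ D ∧ (∀ t, 1 ≤ Q t) ∧ Monotone Q ∧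
    (∀ t, 2 * Q t ≤ Q (t+2)) ∧ (∀ t, 1 ≤ t → Real.log (Q t) ≤ D * t) ∧
    (∀ t, Q t ≤ N t) ∧ (∀ t, N t < 2 * Q t) ∧ ∀ t, (N t:ℝ) * dni (N t * a - g) ≤ 5 := by
  obtain ⟨hi, C, hC⟩ := ha
  obtain ⟨P, Q, h1, h2, h3, h4, h5, h6⟩ := cf_facts a hi
  choose N hN using fun t => near_n a g (P t) (Q t) (h2 t) (h5 t) (h6 t)
  refine ⟨Q, N, max C 1, le_max_right _ _, h2, monotone_nat_of_le_succ h3, h4, ?_,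
    fun t => (hN t).1, fun t => (hN t).2.1, fun t => (hN t).2.2⟩
  intro t ht
  have := hC t ht
  rw [h1, div_le_iff₀ (by exact_mod_cast ht)] at this
  exact this.trans (mul_le_mul_of_nonneg_right (le_max_left _ _) (by positivity))


lemma tele_lt (f : ℕ → ℝ) (c : ℝ) (G : ℕ) (h : ∀ g < G, c < f (g+1) - f g) : G * c ≤ f G - f 0 := by
  induction G with
  | zero => simp
  | succ G ih =>
    have h1 := ih (fun g hg => h g (by omega))
    have h2 := h G (by omega)
    push_cast
    linarith

lemma Q_two (Q : ℕ → ℕ) (h4 : ∀ t, 2 * Q t ≤ Q (t+2)) (t k : ℕ) :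
    2^k * Q t ≤ Q (t + 2 * k) := by
  induction k with
  | zero => simp
  | succ k ih =>
    have := h4 (t + 2 * k)
    have e : t + 2 * (k+1) = t + 2 * k + 2 := by ring
    rw [e, pow_succ]
    nlinarith only [ih, this]

lemma win_select (Q : ℕ → ℕ) (D : ℝ) (hD : 1 ≤ D) (h1 : ∀ t, 1 ≤ Q t) (hm : Monotone Q)
    (h4 : ∀ t, 2 * Q t ≤ Q (t+2)) (hl : ∀ t, 1 ≤ t → Real.log (Q t) ≤ D * t)
    (E lam X η : ℝ) (hE : 1 ≤ E) (hlam : 0 ≤ lam) (hX : 0 ≤ X) (hη : 0 < η) (ν0 : ℕ) :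
    ∃ ν t0 u : ℕ, ν0 ≤ ν ∧ 1 ≤ u ∧ E * ((39369:ℝ)^ν)^87 ≤ 2^u ∧
      Real.log (Q (t0 + 2 * u * 39369^ν)) - Real.log (Q t0) ≤ 8 * D * u * 39369^ν ∧
      225 * (1 + Real.log (Q (t0 + 2 * u * 39369^ν))) < ((39369:ℝ)^ν)^2 ∧
      lam * (X + 11 * D * u * 39369^ν / η + 1) + u ≤ Real.log (Q t0) := by
  set C1 : ℝ := lam * (X + 1 + 15488 * D / η) + 1408 with hC1
  have hC1p : 0 ≤ C1 := by positivity
  set C0 : ℝ := 1000 * D * (3 * C1 + 2 + 11264) with hC0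
  have hC0p : 0 ≤ C0 := by positivity
  obtain ⟨ν1, hν1⟩ := ev_pow (C0 + E)
  set ν := max (max ν0 ν1) 1 with hν
  have hνa : ν0 ≤ ν := (le_max_left _ _).trans (le_max_left _ _)
  have hνb : ν1 ≤ ν := (le_max_right _ _).trans (le_max_left _ _)
  have hνc : 1 ≤ ν := le_max_right _ _
  have hpw := hν1 ν hνb
  set Rn : ℕ := 39369^ν with hRn
  have hRc : ((39369:ℝ)^ν) = (Rn:ℝ) := by rw [hRn]; push_cast; rfl
  rw [hRc] at hpw
  set R : ℝ := (Rn:ℝ) with hR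
  have hR1 : 1 ≤ R := by rw [← hRc]; exact one_le_pow₀ (by norm_num)
  have hν1' : (1:ℝ) ≤ ν := by exact_mod_cast hνc
  have hER : E ≤ R := by nlinarith only [hpw, hC0p, hE, hν1']
  have hCR : C0 * (1 + ν) ≤ R := by nlinarith only [hpw, hC0p, hE, hν1']
  set u := 1408 * ν with hu
  have huR : (u:ℝ) = 1408 * ν := by rw [hu]; push_cast; ring
  set T := ⌊R^2 / (1000 * D)⌋₊ with hT
  have hT1 : (T:ℝ) ≤ R^2 / (1000*D) := Nat.floor_le (by positivity)
  have hT2 : R^2 / (1000*D) < T + 1 := Nat.lt_floor_add_one _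
  have hT3 : R * (1 + ν) * (3 * C1 + 2 + 11264) ≤ T + 1 := by
    refine le_trans ?_ hT2.le
    rw [le_div_iff₀ (by positivity)]
    calc _ = R * (C0 * (1 + ν)) := by rw [hC0]; ring
      _ ≤ R * R := by gcongr
      _ = R^2 := by ring
  have hT1' : (T:ℝ) * (1000 * D) ≤ R^2 := by rwa [le_div_iff₀ (by positivity)] at hT1
  have hRν : 2 ≤ R * (1 + ν) := by nlinarith only [hR1, hν1']
  have hT8 : 8 * u * R + 1 ≤ T := by
    rw [huR]; nlinarith only [hT3, hRν, hC1p, mul_nonneg (by linarith : (0:ℝ) ≤ R * (1+ν)) hC1p, hR1]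
  have hTC : C1 * (R * (1 + ν)) ≤ (T - 1) / 3 := by
    nlinarith only [hT3, hRν, hC1p]
  have hu1 : (1:ℝ) ≤ u := by rw [huR]; linarith
  have hT1n : (1:ℝ) ≤ T := by nlinarith only [hT8, mul_nonneg (by linarith : (0:ℝ) ≤ u) (by linarith : (0:ℝ) ≤ R)]
  have hTn1 : 1 ≤ T := by exact_mod_cast hT1n
  set k := 2 * u * Rn with hk
  have hkR : (k:ℝ) = 2 * u * R := by rw [hk]; push_cast; ring
  have hkpos : 0 < k := by
    have : (0:ℝ) < k := by rw [hkR]; positivity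
    exact_mod_cast this
  set G := T / k with hG
  have hGk : G * k ≤ T := Nat.div_mul_le_self T k
  have hGk2 : T < G * k + k := by
    have := Nat.lt_div_mul_add (a := T) hkpos
    exact this
  have hGkR : (G:ℝ) * k ≤ T := by exact_mod_cast hGk
  have hGk2R : (T:ℝ) < G * k + k := by exact_mod_cast hGk2
  have hend : ∀ g ≤ G, Real.log (Q (T + g * k)) ≤ 2 * D * T := by
    intro g hg
    have := hl (T + g * k) (by omega)
    refine this.trans ?_
    have hgk : g * k ≤ T := (Nat.mul_le_mul_right k hg).trans hGk
    have : ((T + g * k : ℕ) : ℝ) ≤ 2 * T := by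
      have : T + g * k ≤ 2 * T := by omega
      exact_mod_cast this
    nlinarith only [this, hD]
  have hpig : ∃ g < G, Real.log (Q (T + (g+1) * k)) - Real.log (Q (T + g * k)) ≤ 8 * D * u * R := by
    by_contra hcon
    push Not at hcon
    have h := tele_lt (fun g => Real.log (Q (T + g * k))) (8 * D * u * R) G hcon
    simp only [zero_mul, add_zero] at h
    have h0 : 0 ≤ Real.log (Q T) := Real.log_natCast_nonneg _
    have h2 := hend G le_rfl
    have e : (G:ℝ) * (8 * D * u * R) = 4 * D * (G * k) := by rw [hkR]; ring
    rw [e] at h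
    have h3 : 3/4 * (T:ℝ) ≤ G * k := by rw [hkR] at *; linarith
    nlinarith only [h, h0, h2, h3, hD, hT1n, mul_le_mul_of_nonneg_left h3 (by linarith : (0:ℝ) ≤ D),
      mul_pos (by linarith : (0:ℝ) < D) (by linarith : (0:ℝ) < T)]
  obtain ⟨g, hg, hgd⟩ := hpig
  have e1 : T + g * k + 2 * u * Rn = T + (g+1) * k := by rw [hk]; ring
  refine ⟨ν, T + g * k, u, hνa, by omega, ?_, ?_, ?_, ?_⟩
  · rw [hRc, hu]
    have : R ≤ 2^(16*ν) := by
      rw [pow_mul, ← hRc]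
      exact pow_le_pow_left₀ (by norm_num) (by norm_num) _
    calc E * R^87 ≤ R * R^87 := by gcongr
      _ = R^88 := by ring
      _ ≤ (2^(16*ν))^88 := by gcongr
      _ = 2^(1408*ν) := by rw [← pow_mul]; congr 1; ring
  · rw [hRc, e1]; exact hgd
  · rw [hRc, e1]
    have := hend (g+1) (by omega)
    nlinarith only [this, hT1', hD, hT1n, mul_le_mul hD hT1n (by norm_num) (by linarith)]
  · rw [hRc]
    have hq := Q_two Q h4 (T + g * k - 2 * ((T + g*k)/2)) ((T + g * k)/2)
    have e2 : T + g * k - 2 * ((T + g*k)/2) + 2 * ((T + g*k)/2) = T + g * k := by omega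
    rw [e2] at hq
    have hq' : 2^(T/2) ≤ Q (T + g*k) := by
      calc 2^(T/2) ≤ 2^((T+g*k)/2) := Nat.pow_le_pow_right (by norm_num) (by
            exact Nat.div_le_div_right (by omega))
        _ ≤ 2^((T+g*k)/2) * Q (T + g * k - 2 * ((T + g*k)/2)) := Nat.le_mul_of_pos_right _ (h1 _)
        _ ≤ _ := hq
    have hlq : ((T/2 : ℕ):ℝ) * Real.log 2 ≤ Real.log (Q (T + g * k)) := by
      rw [← Real.log_pow]
      apply Real.log_le_log (by positivity)
      exact_mod_cast hq'
    have hTT : (T:ℝ) ≤ 2 * ((T/2 : ℕ):ℝ) + 1 := by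
      have : T ≤ 2 * (T/2) + 1 := by omega
      exact_mod_cast this
    have hl2 := Real.log_two_gt_d9
    have h5 : ((T:ℝ) - 1)/3 ≤ Real.log (Q (T + g * k)) := by
      refine le_trans ?_ hlq
      nlinarith only [hTT, hl2, hT1n]
    refine le_trans (le_trans ?_ hTC) h5
    rw [huR, hC1]
    have hRn1 : 1 ≤ R * (1 + ν) := by linarith
    have i1 : lam * (X + 1) ≤ lam * (X+1) * (R * (1 + ν)) := le_mul_of_one_le_right (by positivity) hRn1
    have i2 : lam * (15488 * D / η) * (R * ν) ≤ lam * (15488 * D / η) * (R * (1 + ν)) := by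
      gcongr; linarith
    have i3 : (1408:ℝ) * ν ≤ 1408 * (R * (1 + ν)) := by nlinarith only [hR1, hν1']
    have i4 : lam * (X + 11 * D * (1408 * ν) * R / η + 1) = lam * (X+1) + lam * (15488 * D / η) * (R * ν) := by ring
    rw [i4]
    linarith


lemma rhs_big (ε R P Qd : ℝ) (n : ℝ) (hε : 0 < ε) (hR : 0 < R) (hn : Real.exp (Real.exp (Real.exp 1)) ≤ n)
    (hlog : 225 * Real.log n < R^2) (hP0 : 0 ≤ P) (hP : P ≤ 5) (hQ0 : 0 ≤ Qd) (hQ : Qd ≤ 3 / R) :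
    P * Qd < (Real.log (Real.log (Real.log n))) ^ (ε + 1/2) / (Real.log n) ^ ((1:ℝ)/2) := by
  have l1 : Real.exp (Real.exp 1) ≤ Real.log n := by
    rw [Real.le_log_iff_exp_le (lt_of_lt_of_le (Real.exp_pos _) hn)]; exact hn
  have hl1 : 0 < Real.log n := lt_of_lt_of_le (Real.exp_pos _) l1
  have l2 : Real.exp 1 ≤ Real.log (Real.log n) := by
    rw [Real.le_log_iff_exp_le hl1]; exact l1
  have hl2 : 0 < Real.log (Real.log n) := lt_of_lt_of_le (Real.exp_pos _) l2
  have l3 : 1 ≤ Real.log (Real.log (Real.log n)) := by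
    rw [Real.le_log_iff_exp_le hl2]; exact l2
  have r1 : 1 ≤ (Real.log (Real.log (Real.log n))) ^ (ε + 1/2) :=
    Real.one_le_rpow l3 (by linarith)
  rw [← Real.sqrt_eq_rpow]
  have hs : 0 < √(Real.log n) := Real.sqrt_pos.2 hl1
  have hs2 : 15 * √(Real.log n) < R := by
    have h2 := Real.sq_sqrt hl1.le
    nlinarith only [h2, hlog, hs, hR]
  calc P * Qd ≤ 5 * (3 / R) := mul_le_mul hP hQ hQ0 (by norm_num)
    _ = 15 / R := by ring
    _ < 1 / √(Real.log n) := by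
      rw [div_lt_div_iff₀ hR hs]; linarith
    _ ≤ _ := by gcongr


lemma grid' (R δ : ℝ) (Rn : ℕ) (hR : R = Rn) (hRn : 1 ≤ Rn) :
    ∃ j < Rn, ∀ x : ℝ, dni (x - δ) ≤ dni (x - (j:ℝ) / R) + 1 / R := by
  have hR0 : 0 < R := by rw [hR]; exact_mod_cast hRn
  have hf0 := Int.fract_nonneg δ
  have hf1 := Int.fract_lt_one δ
  have hx0 : 0 ≤ Int.fract δ * R := by positivity
  refine ⟨⌊Int.fract δ * R⌋₊, ?_, ?_⟩
  · rw [Nat.floor_lt hx0, ← hR]; nlinarith only [hf1, hR0]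
  · intro x
    set j := ⌊Int.fract δ * R⌋₊
    have h1 : (j:ℝ) ≤ Int.fract δ * R := Nat.floor_le hx0
    have h2 : Int.fract δ * R < j + 1 := Nat.lt_floor_add_one _
    have e1 : x - δ = (x - (j:ℝ)/R + ((j:ℝ)/R - Int.fract δ)) + ((-⌊δ⌋ : ℤ):ℝ) := by
      have := Int.self_sub_floor δ
      push_cast
      linarith
    rw [e1, dni_add_int]
    refine (dni_add_le _ _).trans ?_
    gcongr
    rw [abs_le]
    constructor
    · have : Int.fract δ ≤ (j+1)/R := by rw [le_div_iff₀ hR0]; exact h2.le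
      rw [add_div] at this; linarith
    · have : (j:ℝ)/R ≤ Int.fract δ := by rw [div_le_iff₀ hR0]; exact h1
      have : 0 < 1 / R := by positivity
      linarith

set_option maxHeartbeats 1000000 in
lemma window {b : ℕ} (hb : 5 ≤ b) (G : ℕ → ℤ → Prop) (c1 W : ℝ) (hc1 : 0 < c1) (hc1' : c1 ≤ 1)
    (hW : 1 ≤ W) (ν0 : ℕ)
    (hchild : ∀ m i, G m i → ∃ i', G (m+1) i' ∧ IV b (m+1) i' ⊆ IV b m i)
    (H : ∀ ν, ν0 ≤ ν → ∀ m i, G m i → ∀ n θ : ℝ, W^2 * b^m * 39369^(86*ν) ≤ n → ∀ M : ℕ,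
      39369^ν / c1 * n ≤ b^M → ∃ i', G M i' ∧ IV b M i' ⊆ IV b m i ∧
        ∀ y ∈ IV b M i', dni (n * y - θ) ≤ 2 / 39369^ν)
    (a g ε : ℝ) (hε : 0 < ε) (ha : a ∈ KSet) (X0 : ℕ) (η : ℝ) (hη : 0 < η) :
    ∃ m h : ℕ, X0 ≤ m ∧ 1 ≤ h ∧ (h:ℝ) ≤ η * m ∧ ∀ i, G m i → ∃ i', G (m+h) i' ∧
      IV b (m+h) i' ⊆ IV b m i ∧ ∀ y ∈ IV b (m+h) i', ∀ δ : ℝ, ∃ n : ℕ, X0 ≤ n ∧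
        (n : ℝ) * dni (n * a - g) * dni (n * y - δ) <
            (Real.log (Real.log (Real.log n))) ^ (ε + 1/2) / (Real.log n) ^ ((1:ℝ)/2) := by
  obtain ⟨Q, N, D, hD, h1, hmono, h4, hl, hQN, hNQ, hN5⟩ := K_seq a g ha
  set X : ℕ := max X0 ⌈Real.exp (Real.exp (Real.exp 1))⌉₊ with hX
  have hXe : Real.exp (Real.exp (Real.exp 1)) ≤ X :=
    (Nat.le_ceil _).trans (by exact_mod_cast le_max_right _ _)
  have hX0 : X0 ≤ X := le_max_left _ _
  have hbR : (5:ℝ) ≤ b := by exact_mod_cast hb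
  have hb1 : (1:ℝ) < b := by linarith
  set lam := Real.log b with hlam
  have hlam1 : 1 ≤ lam := by
    rw [hlam, Real.le_log_iff_exp_le (by linarith)]
    have := Real.exp_one_lt_d9
    linarith
  have hE1 : 1 ≤ 2 * b * W^2 / c1 := by
    rw [le_div_iff₀ hc1]
    have : 1 ≤ W^2 := one_le_pow₀ hW
    nlinarith only [this, hbR, hc1']
  obtain ⟨ν, t0, u, hν, hu, hEu, hdiff, hlogend, hlow⟩ :=
    win_select Q D hD h1 hmono h4 hl (2 * b * W^2 / c1) lam X η hE1 (by linarith) (by positivity) hη ν0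
  set Rn : ℕ := 39369^ν with hRn
  have hRc : ((39369:ℝ)^ν) = (Rn:ℝ) := by rw [hRn]; push_cast; rfl
  have hRn1 : 1 ≤ Rn := Nat.one_le_pow _ _ (by norm_num)
  rw [hRc] at hEu hdiff hlogend hlow
  set R : ℝ := (Rn:ℝ) with hR
  have hR1 : 1 ≤ R := by rw [hR]; exact_mod_cast hRn1
  set A : ℝ := W^2 * R^86 with hA
  set K : ℝ := R / c1 with hK
  have hA1 : 1 ≤ A := by
    have i1 : 1 ≤ W^2 := one_le_pow₀ hW
    have i2 : 1 ≤ R^86 := one_le_pow₀ hR1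
    rw [hA]; nlinarith only [i1, i2]
  have hK1 : 1 ≤ K := by rw [hK, le_div_iff₀ hc1]; linarith
  have hKbA : 2 * (K * b * A) ≤ 2^u := by
    refine le_trans (le_of_eq ?_) hEu
    rw [hK, hA]; field_simp
  have hKA : 2 * (K * A) ≤ 2^u := by
    refine le_trans ?_ hKbA
    have : 0 ≤ K * A := by positivity
    nlinarith only [this, hb1]
  have hAu : A ≤ 2^u := by nlinarith only [hKA, hA1, hK1]
  have hu0 : (1:ℝ) ≤ u := by exact_mod_cast hu
  have hl2 := Real.log_two_lt_d9
  have hlog2u : Real.log ((2:ℝ)^u) ≤ u := by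
    rw [Real.log_pow]; nlinarith only [hl2, hu0]
  set te := t0 + 2 * u * Rn with hte
  have hQ0 : (1:ℝ) ≤ Q t0 := by exact_mod_cast h1 t0
  have hQe : (1:ℝ) ≤ Q te := by exact_mod_cast h1 te
  have hQQ : (Q t0:ℝ) ≤ Q te := by exact_mod_cast hmono (by omega)
  have hN0 : (Q t0:ℝ) ≤ N t0 := by exact_mod_cast hQN t0
  have hN0' : (N t0:ℝ) < 2 * Q t0 := by exact_mod_cast hNQ t0
  have hDuR : 1 ≤ D * u * R := by
    have i1 : 1 ≤ D * u := by nlinarith only [hD, hu0]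
    nlinarith only [i1, hR1]
  have hYnn : 0 ≤ 11 * D * u * R / η := by positivity
  have h2uQ : (2:ℝ)^u ≤ Q t0 := by
    rw [← Real.log_le_log_iff (by positivity) (by linarith)]
    refine hlog2u.trans (le_trans ?_ hlow)
    have : 0 ≤ lam * (X + 11 * D * u * R / η + 1) := by positivity
    linarith
  have hlogA : Real.log A ≤ u := (Real.log_le_log (by linarith) hAu).trans hlog2u
  have hlogKA : Real.log (2 * K * A) ≤ u := by
    refine (Real.log_le_log (by positivity) ?_).trans hlog2u
    linarith
  obtain ⟨m, hm1, hm2⟩ := exists_nat_pow_near (x := (N t0:ℝ)/A) (y := (b:ℝ))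
    (by rw [le_div_iff₀ (by linarith)]; linarith) hb1
  obtain ⟨M', hM1, hM2⟩ := exists_nat_pow_near (x := 2 * K * Q te) (y := (b:ℝ))
    (by nlinarith only [hK1, hQe]) hb1
  have hAm : A * b^m ≤ N t0 := by
    rw [le_div_iff₀ (by linarith)] at hm1; linarith
  -- lower bound for m
  have hmlow : Real.log (Q t0) - Real.log A ≤ (m+1) * lam := by
    rw [← Real.log_div (by linarith) (by linarith)]
    have : Real.log (Q t0 / A) ≤ Real.log ((b:ℝ)^(m+1)) := by
      apply Real.log_le_log (by positivity)
      refine le_trans ?_ hm2.le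
      gcongr
    rw [Real.log_pow] at this
    push_cast at this
    exact this
  have hmY : X + 11 * D * u * R / η ≤ m := by
    have : lam * (X + 11 * D * u * R / η + 1) ≤ lam * (m + 1) := by linarith
    have := le_of_mul_le_mul_left this (by linarith)
    linarith
  have hXm : X ≤ m := by
    have : (X:ℝ) ≤ m := by linarith
    exact_mod_cast this
  -- upper bound for M'
  have hMup : M' * lam ≤ Real.log (2 * K * A) - Real.log A + Real.log (Q te) := by
    have : Real.log ((b:ℝ)^M') ≤ Real.log (2 * K * Q te) := Real.log_le_log (by positivity) hM1
    rw [Real.log_pow, Real.log_mul (by positivity) (by linarith)] at this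
    rw [Real.log_mul (by positivity) (by linarith)]
    linarith
  have hMm : m < M' + 1 := by
    have : (b:ℝ)^m < b^(M'+1) := by
      refine lt_of_le_of_lt ?_ hM2
      calc (b:ℝ)^m ≤ A * b^m := le_mul_of_one_le_left (by positivity) hA1
        _ ≤ 2 * Q t0 := by linarith
        _ ≤ 2 * K * Q te := by nlinarith only [hK1, hQQ, hQe]
    exact (pow_lt_pow_iff_right₀ hb1).1 this
  have hh : ((M' + 1 - m : ℕ):ℝ) ≤ 11 * D * u * R := by
    rw [Nat.cast_sub (by omega)]
    push_cast
    have i1 : ((M':ℝ) - m - 1) * lam ≤ 9 * (D * u * R) := by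
      have : (u:ℝ) ≤ D * u * R := by
        have : 1 ≤ D * R := by nlinarith only [hD, hR1]
        nlinarith only [this, hu0]
      linarith
    by_cases hs : (M':ℝ) - m - 1 ≤ 0
    · linarith
    · push Not at hs
      have : (M':ℝ) - m - 1 ≤ ((M':ℝ) - m - 1) * lam := le_mul_of_one_le_right hs.le hlam1
      linarith
  refine ⟨m, M' + 1 - m, hX0.trans hXm, by omega, ?_, ?_⟩
  · refine hh.trans ?_
    have : 11 * D * u * R / η ≤ m := by
      have : (0:ℝ) ≤ X := by positivity
      linarith
    rw [div_le_iff₀ hη] at this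
    linarith
  intro i hi
  have hMe : m + (M' + 1 - m) = M' + 1 := by omega
  rw [hMe]
  have hnj : ∀ j, A * b^m ≤ (N (t0 + 2 * u * j) : ℝ) := by
    intro j
    have : (2:ℝ) * Q t0 ≤ Q (t0 + 2 * u * j) ∨ j = 0 := by
      rcases Nat.eq_zero_or_pos j with rfl | hj
      · right; rfl
      · left
        have h' := Q_two Q h4 t0 1
        have h'' : Q (t0 + 2 * 1) ≤ Q (t0 + 2 * u * j) := hmono (by nlinarith only [hu, hj, Nat.mul_le_mul hu hj])
        have : 2 * Q t0 ≤ Q (t0 + 2 * u * j) := by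
          rw [pow_one] at h'; exact h'.trans h''
        exact_mod_cast this
    rcases this with h' | rfl
    · have : (Q (t0 + 2 * u * j):ℝ) ≤ N (t0 + 2 * u * j) := by exact_mod_cast hQN _
      linarith
    · simpa using hAm
  have hrat : ∀ j j', j < j' → K * b * A * (N (t0 + 2 * u * j) : ℝ) ≤ N (t0 + 2 * u * j') := by
    intro j j' hjj
    have e1 := Q_two Q h4 (t0 + 2 * u * j) u
    have e2 : Q (t0 + 2 * u * j + 2 * u) ≤ Q (t0 + 2 * u * j') := hmono (by nlinarith only [hjj])
    have e3 : ((2:ℝ)^u) * Q (t0 + 2 * u * j) ≤ N (t0 + 2 * u * j') := by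
      exact_mod_cast (e1.trans e2).trans (hQN _)
    refine le_trans ?_ e3
    have e4 : (N (t0 + 2 * u * j):ℝ) ≤ 2 * Q (t0 + 2 * u * j) := by exact_mod_cast (hNQ _).le
    calc K * b * A * (N (t0 + 2 * u * j) : ℝ) ≤ K * b * A * (2 * Q (t0 + 2 * u * j)) := by gcongr
      _ = 2 * (K * b * A) * Q (t0 + 2 * u * j) := by ring
      _ ≤ _ := by gcongr
  have hNend : ∀ j < Rn, (N (t0 + 2 * u * j) : ℝ) ≤ 2 * Q te := by
    intro j hj
    have e4 : (N (t0 + 2 * u * j):ℝ) ≤ 2 * Q (t0 + 2 * u * j) := by exact_mod_cast (hNQ _).le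
    have e5 : Q (t0 + 2 * u * j) ≤ Q te := hmono (by rw [hte]; gcongr)
    have : (Q (t0 + 2 * u * j):ℝ) ≤ Q te := by exact_mod_cast e5
    linarith
  obtain ⟨i', hi'1, hi'2, hi'3⟩ := multi (b := b) (by omega) G (A := A) (K := K) (e := 2 / R) hA1 hK1 hchild
    (by
      intro m i hG n θ hn M hM
      have := H ν hν m i hG n θ (by
        rw [mul_comm 86 ν, pow_mul, hRc]
        refine le_trans (le_of_eq ?_) hn
        rw [hA]; ring) M (by rw [hRc]; exact hM)
      rw [hRc] at this
      exact this)
    m i hi (fun j => (N (t0 + 2 * u * j) : ℝ)) (fun j => (j:ℝ) / R) hnj hrat Rn (M'+1) (by omega)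
    (by
      intro j hj
      have := hNend j hj
      calc K * (N (t0 + 2 * u * j) : ℝ) ≤ K * (2 * Q te) := by gcongr
        _ = 2 * K * Q te := by ring
        _ ≤ _ := hM2.le)
  refine ⟨i', hi'1, hi'2, ?_⟩
  intro y hy δ
  obtain ⟨j, hj, hgr⟩ := grid' R δ Rn hR hRn1
  have hnX : X ≤ N (t0 + 2 * u * j) := by
    have e1 : (b:ℝ)^m ≤ N (t0 + 2 * u * j) :=
      le_trans (le_mul_of_one_le_left (by positivity) hA1) (hnj j)
    have e2 : b^m ≤ N (t0 + 2 * u * j) := by exact_mod_cast e1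
    have e3 : m < b^m := Nat.lt_pow_self (by omega)
    omega
  refine ⟨N (t0 + 2 * u * j), hX0.trans hnX, ?_⟩
  have hnX' : (X:ℝ) ≤ N (t0 + 2 * u * j) := by exact_mod_cast hnX
  have hnpos : (0:ℝ) < N (t0 + 2 * u * j) := lt_of_lt_of_le (Real.exp_pos _) (hXe.trans hnX')
  refine rhs_big ε R _ _ _ hε (by linarith) (hXe.trans hnX') ?_ (mul_nonneg hnpos.le (dni_nonneg _)) (hN5 _) (dni_nonneg _) ?_
  · refine lt_of_le_of_lt ?_ hlogend
    have : Real.log (N (t0 + 2 * u * j)) ≤ Real.log (2 * Q te) := Real.log_le_log hnpos (hNend j hj)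
    rw [Real.log_mul (by norm_num) (by linarith)] at this
    linarith
  · have e1 := hgr ((N (t0 + 2 * u * j) : ℝ) * y)
    have e2 := hi'3 y hy j hj
    have e3 : 2 / R + 1 / R = 3 / R := by ring
    linarith


/-- schedule of window starts and lengths -/
noncomputable def sched (F : ℕ → ℕ → ℕ × ℕ) : ℕ → ℕ × ℕ
  | 0 => F 0 1
  | w+1 => F (w+1) (2 * ((sched F w).1 + (sched F w).2) + w + 2)

/-- levels of the tree -/
def lev (h : ℕ → ℕ) : ℕ → ℕ
  | 0 => 0
  | r+1 => lev h r + 1 + h (lev h r + 1)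

lemma lev_ge (h : ℕ → ℕ) (r : ℕ) : r ≤ lev h r := by
  induction r with
  | zero => simp
  | succ r ih => rw [lev]; omega

lemma visited (h mm hh : ℕ → ℕ) (hinj : StrictMono mm) (h1 : ∀ w, 1 ≤ mm w)
    (hgap : ∀ w w', w < w' → mm w + hh w < mm w') (hh1 : ∀ w, h (mm w) = hh w)
    (hh0 : ∀ p, (∀ w, mm w ≠ p) → h p = 0) (w : ℕ) : ∃ r, lev h r + 1 = mm w := by
  have hex : ∃ r, mm w < lev h r + 1 := ⟨mm w, by have := lev_ge h (mm w); omega⟩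
  classical
  obtain ⟨r, hr⟩ : ∃ r, Nat.find hex = r + 1 := by
    have : Nat.find hex ≠ 0 := by
      intro h0
      have := Nat.find_spec hex
      rw [h0, lev] at this
      have := h1 w
      omega
    exact Nat.exists_eq_succ_of_ne_zero this
  have hs := Nat.find_spec hex
  rw [hr, lev] at hs
  have hn := Nat.find_min hex (m := r) (by omega)
  refine ⟨r, ?_⟩
  by_contra hne
  have hlt : lev h r + 1 < mm w := by omega
  by_cases hp : ∀ w', mm w' ≠ lev h r + 1
  · rw [hh0 _ hp] at hs; omega
  · push Not at hp
    obtain ⟨w', hw'⟩ := hp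
    rw [← hw', hh1] at hs
    have : w' < w := hinj.lt_iff_lt.1 (by omega)
    have := hgap _ _ this
    omega

lemma excess (h mm hh : ℕ → ℕ) (hinj : StrictMono mm)
    (hh1 : ∀ w, h (mm w) = hh w)
    (hh0 : ∀ p, (∀ w, mm w ≠ p) → h p = 0) (r : ℕ) :
    ∀ w, lev h r < mm w → lev h r ≤ r + ∑ k ∈ Finset.range w, hh k := by
  induction r with
  | zero => intro w _; simp [lev]
  | succ r ih =>
    intro w hw
    rw [lev] at hw ⊢
    by_cases hp : ∀ w', mm w' ≠ lev h r + 1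
    · rw [hh0 _ hp] at hw ⊢
      have := ih w (by omega)
      omega
    · push Not at hp
      obtain ⟨w', hw'⟩ := hp
      have e := ih w' (by omega)
      rw [← hw', hh1] at hw ⊢
      have hlt : w' < w := hinj.lt_iff_lt.1 (by omega)
      have hsum : ∑ k ∈ Finset.range (w'+1), hh k ≤ ∑ k ∈ Finset.range w, hh k :=
        Finset.sum_le_sum_of_subset (Finset.range_subset_range.2 hlt)
      rw [Finset.sum_range_succ] at hsum
      omega

lemma lev_le (h mm hh : ℕ → ℕ) (hinj : StrictMono mm)
    (hgap : ∀ w, 2 * mm w ≤ mm (w+1)) (hh1 : ∀ w, h (mm w) = hh w)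
    (hh0 : ∀ p, (∀ w, mm w ≠ p) → h p = 0) (η : ℝ) (hη : 0 ≤ η)
    (hhm : ∀ w, (hh w:ℝ) ≤ η * mm w) (r : ℕ) : (lev h r:ℝ) ≤ r + 2 * η * lev h r := by
  have hS : ∀ w, ((∑ k ∈ Finset.range (w+1), hh k : ℕ):ℝ) ≤ 2 * η * mm w := by
    intro w
    induction w with
    | zero =>
      have := hhm 0
      have h0 : 0 ≤ η * mm 0 := by positivity
      simp only [zero_add, Finset.sum_range_one]
      linarith
    | succ w ih =>
      rw [Finset.sum_range_succ]
      push_cast at ih ⊢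
      have h2 := hhm (w+1)
      have h3 : (2:ℝ) * mm w ≤ mm (w+1) := by exact_mod_cast hgap w
      have h4 := mul_le_mul_of_nonneg_left h3 hη
      linarith
  have hex : ∃ w, lev h r < mm w := ⟨lev h r + 1, by
    have := hinj.le_apply (x := lev h r + 1)
    omega⟩
  classical
  have hs := excess h mm hh hinj hh1 hh0 r _ (Nat.find_spec hex)
  have hsR : (lev h r:ℝ) ≤ r + ((∑ k ∈ Finset.range (Nat.find hex), hh k : ℕ):ℝ) := by exact_mod_cast hs
  have hnn : 0 ≤ 2 * η * lev h r := by positivity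
  rcases Nat.eq_zero_or_pos (Nat.find hex) with h0 | h0
  · rw [h0] at hsR
    simp only [Finset.range_zero, Finset.sum_empty, Nat.cast_zero, add_zero] at hsR
    linarith
  · obtain ⟨w, hw⟩ := Nat.exists_eq_succ_of_ne_zero h0.ne'
    have hmin := Nat.find_min hex (m := w) (by omega)
    rw [hw] at hsR
    have h5 := hS w
    have h6 : (mm w:ℝ) ≤ lev h r := by exact_mod_cast (by omega : mm w ≤ lev h r)
    have h7 := mul_le_mul_of_nonneg_left h6 (by positivity : 0 ≤ 2 * η)
    simp only [Nat.succ_eq_add_one] at hsR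
    linarith

lemma exists_B (s1 : ℝ) (h0 : 0 < s1) (h1 : s1 < 1) :
    ∃ B : ℕ, 2 ≤ B ∧ ((2 * B + 3 : ℕ):ℝ)^s1 ≤ B := by
  have ht : Tendsto (fun B : ℕ => (B:ℝ)^(1 - s1)) atTop atTop :=
    (tendsto_rpow_atTop (by linarith)).comp tendsto_natCast_atTop_atTop
  obtain ⟨B, hB, hB2⟩ := ((ht.eventually_ge_atTop ((5:ℝ)^s1)).and (eventually_ge_atTop 2)).exists
  refine ⟨B, hB2, ?_⟩
  have hB0 : (0:ℝ) < B := by positivity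
  have hle : ((2 * B + 3 : ℕ):ℝ) ≤ 5 * B := by
    exact_mod_cast (by omega : 2 * B + 3 ≤ 5 * B)
  calc ((2 * B + 3 : ℕ):ℝ)^s1 ≤ (5 * (B:ℝ))^s1 := by gcongr
    _ = 5^s1 * (B:ℝ)^s1 := Real.mul_rpow (by norm_num) hB0.le
    _ ≤ (B:ℝ)^(1-s1) * (B:ℝ)^s1 := by gcongr
    _ = B := by rw [← Real.rpow_add hB0]; simp

theorem main_s (ε : ℝ) (hε : 0 < ε) (α γ : ℕ → ℝ) (hα : ∀ i, α i ∈ KSet) (s : NNReal) (hs : 0 < s)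
    (hs1 : s < 1) :
    ∃ G : Set ℝ, G ⊆ Bad ∧ (s : ENNReal) ≤ dimH G ∧
      ∀ β ∈ G, ∀ i : ℕ, ∀ δ : ℝ,
        ∃ᶠ n : ℕ in Filter.atTop,
          (n : ℝ) * dni (n * α i - γ i) * dni (n * β - δ) <
            (Real.log (Real.log (Real.log n))) ^ (ε + 1/2) / (Real.log n) ^ ((1:ℝ)/2) := by
  have hs0 : (0:ℝ) < s := by exact_mod_cast hs
  have hs1' : (s:ℝ) < 1 := by exact_mod_cast hs1
  obtain ⟨s1, hs1d⟩ : ∃ s1 : ℝ, s1 = (1 + s) / 2 := ⟨_, rfl⟩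
  have hs1p : 0 < s1 := by rw [hs1d]; linarith
  have hs1l : s1 < 1 := by rw [hs1d]; linarith
  have hss : (s:ℝ) < s1 := by rw [hs1d]; linarith
  obtain ⟨η, hηd⟩ : ∃ η : ℝ, η = (1 - s / s1) / 2 := ⟨_, rfl⟩
  have hη : 0 < η := by
    have : (s:ℝ) / s1 < 1 := by rw [div_lt_one hs1p]; exact hss
    rw [hηd]; linarith
  have hηs : s1 * (1 - 2 * η) = s := by rw [hηd]; field_simp; ring
  obtain ⟨B, hB2, hB⟩ := exists_B s1 hs1p hs1l
  obtain ⟨b, hb⟩ : ∃ b, b = 2 * B + 3 := ⟨_, rfl⟩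
  rw [← hb] at hB
  obtain ⟨κ, c1, W, ν0, hκ, hκb, hc1, hcκ, hc11, hW, hst⟩ := steer B b (by omega) hb
  have hch : ∀ m i, Gd b κ c1 1 m i → _ := fun m i hG => child_exists B b hb hκ hκb hc1 hcκ m i hG
  have hbR : (0:ℝ) < b := by rw [hb]; positivity
  have hch1 : ∀ m i, Gd b κ c1 1 m i → ∃ i', Gd b κ c1 1 (m+1) i' ∧ IV b (m+1) i' ⊆ IV b m i := by
    intro m i hG
    obtain ⟨ch, hc, -⟩ := hch m i hG
    refine ⟨ch 0, (hc 0 (by omega)).1, ?_⟩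
    intro x hx
    obtain ⟨u, v⟩ := (hc 0 (by omega)).2 x hx
    have : 0 < 1 / (b:ℝ)^(m+1) := by positivity
    exact ⟨by linarith, by linarith⟩
  have hwin : ∀ w X : ℕ, _ := fun w X => window (b := b) (by omega) (Gd b κ c1 1) c1 W hc1 hc11 hW ν0 hch1
    hst (α (Nat.unpair w).1) (γ (Nat.unpair w).1) ε hε (hα _) X η hη
  choose Fm Fh hF1 hF2 hF3 hF4 using hwin
  obtain ⟨F, hFd⟩ : ∃ F : ℕ → ℕ → ℕ × ℕ, F = fun w X => (Fm w X, Fh w X) := ⟨_, rfl⟩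
  obtain ⟨Xs, hXs⟩ : ∃ Xs : ℕ → ℕ, ∀ w, w + 1 ≤ Xs w ∧ sched F w = F w (Xs w) ∧
      2 * ((sched F w).1 + (sched F w).2) + 1 ≤ Xs (w+1) := by
    refine ⟨fun w => match w with
      | 0 => 1
      | w+1 => 2 * ((sched F w).1 + (sched F w).2) + w + 2, ?_⟩
    intro w
    cases w with
    | zero => refine ⟨le_rfl, rfl, ?_⟩; simp only; omega
    | succ w => refine ⟨?_, rfl, ?_⟩ <;> simp only <;> omega
  obtain ⟨mm, hmm⟩ : ∃ mm : ℕ → ℕ, ∀ w, mm w = Fm w (Xs w) := ⟨_, fun w => rfl⟩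
  obtain ⟨hh, hhh⟩ : ∃ hh : ℕ → ℕ, ∀ w, hh w = Fh w (Xs w) := ⟨_, fun w => rfl⟩
  have hgap0 : ∀ w, 2 * (mm w + hh w) + 1 ≤ mm (w+1) := by
    intro w
    have h1 := (hXs w).2.2
    rw [(hXs w).2.1, hFd] at h1
    have h2 := hF1 (w+1) (Xs (w+1))
    rw [hmm, hhh, hmm]
    simp only at h1
    omega
  have hmono : StrictMono mm := strictMono_nat_of_lt_succ (fun w => by have := hgap0 w; omega)
  have hm1 : ∀ w, 1 ≤ mm w := by
    intro w
    have h2 := hF1 w (Xs w)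
    have h3 := (hXs w).1
    rw [hmm]; omega
  have hgap : ∀ w w', w < w' → mm w + hh w < mm w' := by
    intro w w' hw
    have h1 := hgap0 w
    have h2 : mm (w+1) ≤ mm w' := hmono.monotone hw
    omega
  obtain ⟨h, hhd⟩ : ∃ h : ℕ → ℕ, h = Function.extend mm hh 0 := ⟨_, rfl⟩
  have hh1 : ∀ w, h (mm w) = hh w := fun w => by rw [hhd]; exact hmono.injective.extend_apply _ _ _
  have hh0 : ∀ p, (∀ w, mm w ≠ p) → h p = 0 := by
    intro p hp
    rw [hhd, Function.extend_apply' _ _ _ (by rintro ⟨w, hw⟩; exact hp w hw)]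
    rfl
  have hjump : ∀ m i, Gd b κ c1 1 m i → ∃ i', Gd b κ c1 1 (m + h m) i' ∧ IV b (m + h m) i' ⊆ IV b m i ∧
      ∀ x ∈ IV b (m + h m) i', ∀ w, mm w = m → ∀ δ : ℝ, ∃ n : ℕ, w ≤ n ∧
        (n : ℝ) * dni (n * α (Nat.unpair w).1 - γ (Nat.unpair w).1) * dni (n * x - δ) <
            (Real.log (Real.log (Real.log n))) ^ (ε + 1/2) / (Real.log n) ^ ((1:ℝ)/2) := by
    intro m i hG
    by_cases hp : ∀ w, mm w ≠ m
    · rw [hh0 m hp]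
      exact ⟨i, hG, subset_rfl, fun x _ w hw => absurd hw (hp w)⟩
    · push Not at hp
      obtain ⟨w, rfl⟩ := hp
      rw [hh1]
      rw [hmm] at hG ⊢
      rw [hhh]
      obtain ⟨i', g1, g2, g3⟩ := hF4 w (Xs w) i hG
      refine ⟨i', g1, g2, ?_⟩
      intro x hx w' hw' δ
      have : w' = w := hmono.injective (by rw [hw', hmm])
      subst this
      obtain ⟨n, hn, hn2⟩ := g3 x hx δ
      exact ⟨n, by have := (hXs w').1; omega, hn2⟩
  have hstart : Gd b κ c1 1 0 0 := by
    apply Gd_start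
    have : κ ≤ 1 := by
      refine hκb.trans ?_
      have : (1:ℝ) ≤ 2 * b := by
        exact_mod_cast (by omega : 1 ≤ 2 * b)
      exact div_le_one_of_le₀ this (by positivity)
    simpa using this
  obtain ⟨x, hx1, hx2⟩ := tree B b (by omega) (Gd b κ c1 1) 0 0 hstart h
    (fun m x => ∀ w, mm w = m → ∀ δ : ℝ, ∃ n : ℕ, w ≤ n ∧
        (n : ℝ) * dni (n * α (Nat.unpair w).1 - γ (Nat.unpair w).1) * dni (n * x - δ) <
            (Real.log (Real.log (Real.log n))) ^ (ε + 1/2) / (Real.log n) ^ ((1:ℝ)/2))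
    hch hjump (lev h) rfl (fun r => rfl)
  refine ⟨Set.range x, ?_, ?_, ?_⟩
  · rintro _ ⟨d, rfl⟩
    apply BadC.mem_Bad hc1
    intro q p hq
    apply Gd_limit (b := b) (κ := κ) (K0 := 1) (by omega) hκ (lev h) (lev_ge h) (hx1 d).1 q p hq
    have : (1:ℝ) ≤ q := by exact_mod_cast hq
    exact one_le_pow₀ this
  · refine dim_lower B b hB2 (by omega) x (lev h) (fun d d' r hk hr => (hx2 d d' r hk).2 hr) s s1 hs hB ?_
    intro r
    have := lev_le h mm hh hmono (fun w => by have := hgap0 w; omega) hh1 hh0 η hη.le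
      (fun w => by rw [hhh, hmm]; exact hF3 w (Xs w)) r
    rw [← hηs]
    have : (1 - 2 * η) * lev h r ≤ r := by linarith
    calc s1 * (1 - 2 * η) * lev h r = s1 * ((1 - 2 * η) * lev h r) := by ring
      _ ≤ _ := by gcongr
  · rintro _ ⟨d, rfl⟩ i δ
    rw [Filter.frequently_atTop]
    intro N0
    obtain ⟨r, hr⟩ := visited h mm hh hmono hm1 hgap hh1 hh0 (Nat.pair i N0)
    obtain ⟨n, hn, hn2⟩ := (hx1 d).2.2 r (Nat.pair i N0) hr.symm δ
    rw [Nat.unpair_pair] at hn2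
    exact ⟨n, (Nat.right_le_pair i N0).trans hn, hn2⟩

theorem stmt_1 (ε : ℝ) (hε : 0 < ε) (α γ : ℕ → ℝ) (hα : ∀ i, α i ∈ KSet) :
    ∃ G : Set ℝ, G ⊆ Bad ∧ dimH G = 1 ∧
      ∀ β ∈ G, ∀ i : ℕ, ∀ δ : ℝ,
        ∃ᶠ n : ℕ in Filter.atTop,
          (n : ℝ) * dni (n * α i - γ i) * dni (n * β - δ) <
            (Real.log (Real.log (Real.log n))) ^ (ε + 1/2) / (Real.log n) ^ ((1:ℝ)/2) := by
  have H : ∀ k : {s : NNReal // 0 < s ∧ s < 1}, _ := fun k => main_s ε hε α γ hα k.1 k.2.1 k.2.2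
  choose G hG1 hG2 hG3 using H
  refine ⟨⋃ k, G k, Set.iUnion_subset hG1, le_antisymm ?_ ?_, ?_⟩
  · calc dimH (⋃ k, G k) ≤ dimH (Set.univ : Set ℝ) := dimH_mono (Set.subset_univ _)
      _ = 1 := Real.dimH_univ
  · refine le_of_forall_lt fun c hc => ?_
    lift c to NNReal using (hc.trans ENNReal.one_lt_top).ne
    have hc1 : c < 1 := by exact_mod_cast hc
    obtain ⟨s, hs, hs1⟩ := exists_between hc1
    have hs0 : 0 < s := lt_of_le_of_lt zero_le hs
    calc (c : ENNReal) < s := by exact_mod_cast hs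
      _ ≤ dimH (G ⟨s, hs0, hs1⟩) := hG2 _
      _ ≤ dimH (⋃ k, G k) := dimH_mono (Set.subset_iUnion _ _)
  · intro β hβ i δ
    obtain ⟨k, hk⟩ := Set.mem_iUnion.1 hβ
    exact hG3 k β hk i δ
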